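/- For all positive constants μ, κ, R, c_v and all M, m > 0 and K ≥ 1 there exists a constant C > 0, depending only on μ, κ, R, c_v, M, m, K, such that: whenever (v,u,θ) is a classical solution of the one-dimensional compressible Navier–Stokes system on ℝ whose initial data are (M,m)-bounded and which is K-volume-bounded, then for every T > 0: sup_{0 ≤ t ≤ T} ∫_ℝ v_x(x,t)² dx + ∫₀^T ∫_ℝ θ(x,t) v_x(x,t)² dx dt ≤ C. -/

import Mathlib

open MeasureTheory Filter Set

/-!
The pressure gradient enters the equation for the effective velocity `w = μ v_x / v - u` as
`w_t = R (θ / v)_x`, because `μ (u_x / v)_x = μ (log v)_{xt}`. Testing with `w`, and subtracting the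
balance of `u² / 2`, produces the good term `-μ R θ v_x² / v³` and the cross term
`μ R θ_x v_x / v²` (`NSFlow.vx_balance`). Everything rests on controlling the cross term uniformly in
time, and no lower bound for `θ` is available. Four estimates do it.

* Energy and entropy (`energy_estimate`). The relative entropy of `θ` is regularised by a parameter
  `ε`, with derivative `(s - 1) / (s + ε)`, so that it is admissible for every positive temperature.
  The regularisation error is `ε ∫∫ (θ - 1)²`, which is at most `1` once `ε` is chosen small in
  terms of the solution and of `T`; all constants are independent of `ε`. This yields bounds for
  `∫ u²`, for the relative entropy and for `∫∫ θ_x² / (θ + ε)² + u_x² / (θ + ε)`.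

* Large temperatures (`sup_temperature`, `ux_estimate`). Where `θ ≥ 2`, the supremum of `θ` at
  time `t` is bounded by a multiple of `∫ θ_x² / (θ + ε)²` at time `t`. Testing the temperature
  equation with `y² / (1 + y²)`, where `y = (θ - 2)₊`, then gives `∫∫ u_x² ≤ E`.

* Weighted temperature gradient (`wgt_estimate`). With `z = (c_v θ + u² / 2 - 3 c_v)₊`, testing the
  total energy equation with `log (1 + z²) / 2` bounds `∫∫ z / (1 + z²) θ_x²`. For `θ > 4` the
  reciprocal of the weight is at most a multiple of `2 θ + u⁴` (`one_le_wgt_mul`).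

* Conclusion (`vx_bound`). By Cauchy's inequality with these weights the cross term is at most
  `δ (2 θ + ε + u⁴) v_x²` plus terms already bounded. The `θ` part is absorbed by the good term, the
  `ε` part is bounded by the choice of `ε`, and the `u⁴` part is absorbed by the integrating
  factor `exp (-A ∫₀ᵗ ∫ u_x²)`, since `u⁴ ≤ 4 ∫ u² ∫ u_x²`. That factor lies between a fixed positive
  constant and `1` because `∫∫ u_x² ≤ E`.

The equations are only assumed pointwise, and mixed derivatives need not exist. Balance laws are
obtained by integrating the pointwise time evolution and then by parts in space
(`NSFlow.balance`), and the equation for `w` holds in integrated form for almost every `x`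
(`deriv_x_evolution`).
-/

noncomputable section

/-- Partial derivative in the spatial variable. -/
def pdx (f : ℝ → ℝ → ℝ) (x t : ℝ) : ℝ := deriv (fun y => f y t) x

/-- Partial derivative in the time variable. -/
def pdt (f : ℝ → ℝ → ℝ) (x t : ℝ) : ℝ := deriv (fun s => f x s) t

/-- The `L²(ℝ)` norm, valued in `ℝ≥0∞`. -/
def L2 (f : ℝ → ℝ) : ENNReal := eLpNorm f 2 volume

/-- The `H¹(ℝ)` norm, valued in `ℝ≥0∞`. -/
def H1 (f : ℝ → ℝ) : ENNReal := L2 f + L2 (deriv f)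

/-- The `H²(ℝ)` norm, valued in `ℝ≥0∞`. -/
def H2 (f : ℝ → ℝ) : ENNReal := L2 f + L2 (deriv f) + L2 (deriv (deriv f))

/-- A classical solution of the 1-D compressible Navier–Stokes system in Lagrangian
coordinates on `ℝ`, together with the regularity and far-field conditions. -/
structure IsClassicalSolution (μ κ R cv : ℝ) (v u θ : ℝ → ℝ → ℝ) : Prop where
  v_pos : ∀ x t : ℝ, 0 ≤ t → 0 < v x t
  θ_pos : ∀ x t : ℝ, 0 ≤ t → 0 < θ x t
  smooth_x_v : ∀ t : ℝ, 0 ≤ t → ContDiff ℝ 2 (fun x => v x t)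
  smooth_x_u : ∀ t : ℝ, 0 ≤ t → ContDiff ℝ 2 (fun x => u x t)
  smooth_x_θ : ∀ t : ℝ, 0 ≤ t → ContDiff ℝ 2 (fun x => θ x t)
  smooth_t_v : ∀ x t : ℝ, 0 ≤ t → DifferentiableAt ℝ (fun s => v x s) t
  smooth_t_u : ∀ x t : ℝ, 0 ≤ t → DifferentiableAt ℝ (fun s => u x s) t
  smooth_t_θ : ∀ x t : ℝ, 0 ≤ t → DifferentiableAt ℝ (fun s => θ x s) t
  eq_mass : ∀ x t : ℝ, 0 ≤ t → pdt v x t = pdx u x t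
  eq_momentum : ∀ x t : ℝ, 0 ≤ t →
    pdt u x t + pdx (fun y s => R * θ y s / v y s) x t
      = μ * pdx (fun y s => pdx u y s / v y s) x t
  eq_energy : ∀ x t : ℝ, 0 ≤ t →
    cv * pdt θ x t + (R * θ x t / v x t) * pdx u x t
      = κ * pdx (fun y s => pdx θ y s / v y s) x t + μ * (pdx u x t) ^ 2 / v x t
  reg_H1 : ∀ T : ℝ, 0 ≤ T → ∃ B : ℝ, ∀ t ∈ Icc (0 : ℝ) T,
    H1 (fun x => v x t - 1) + H1 (fun x => u x t) + H1 (fun x => θ x t - 1)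
      ≤ ENNReal.ofReal B
  reg_H2 : ∀ T : ℝ, 0 < T →
    (∫⁻ t in Icc (0 : ℝ) T,
      (H2 (fun x => u x t) ^ 2 + H2 (fun x => θ x t - 1) ^ 2)) < ⊤
  farfield_v : ∀ t : ℝ, 0 ≤ t → Tendsto (fun x => v x t) (cocompact ℝ) (nhds 1)
  farfield_u : ∀ t : ℝ, 0 ≤ t → Tendsto (fun x => u x t) (cocompact ℝ) (nhds 0)
  farfield_θ : ∀ t : ℝ, 0 ≤ t → Tendsto (fun x => θ x t) (cocompact ℝ) (nhds 1)

/-- The initial data of `(v, u, θ)` are `(M, m)`-bounded. -/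
def InitBounded (M m : ℝ) (v u θ : ℝ → ℝ → ℝ) : Prop :=
  H1 (fun x => v x 0 - 1) + H1 (fun x => u x 0) + H1 (fun x => θ x 0 - 1)
      ≤ ENNReal.ofReal M
    ∧ (∀ x : ℝ, m ≤ v x 0) ∧ (∀ x : ℝ, m ≤ θ x 0)

/-- The solution is `K`-volume-bounded. -/
def VolBounded (K : ℝ) (v : ℝ → ℝ → ℝ) : Prop :=
  ∀ x t : ℝ, 0 ≤ t → K⁻¹ ≤ v x t ∧ v x t ≤ K

end

/-! ### Inequalities and integration on slabs -/

/-- Lebesgue measure on the space-time slab `ℝ × [0, T]`. -/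
noncomputable abbrev slab (T : ℝ) : Measure (ℝ × ℝ) :=
  (volume : Measure ℝ).prod (volume.restrict (Icc (0 : ℝ) T))

lemma abs_le_integral_abs_deriv {q q' : ℝ → ℝ} (h : ∀ x, HasDerivAt q (q' x) x)
    (hq : Integrable q) (hq' : Integrable q') (x : ℝ) : |q x| ≤ ∫ y, |q' y| := by
  have h0 := tendsto_zero_of_hasDerivAt_of_integrableOn_Iic (a := x) (fun y _ => h y)
    hq'.integrableOn hq.integrableOn
  have h1 := integral_Iic_of_hasDerivAt_of_tendsto' (a := x) (fun y _ => h y)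
    hq'.integrableOn h0
  rw [sub_zero] at h1
  rw [← h1]
  calc |∫ y in Iic x, q' y| ≤ ∫ y in Iic x, |q' y| := abs_integral_le_integral_abs
    _ ≤ ∫ y, |q' y| := setIntegral_le_integral hq'.abs (ae_of_all _ fun _ => abs_nonneg _)

lemma memLp_two_sq {α : Type*} [MeasurableSpace α] {ν : Measure α} {f : α → ℝ}
    (hf : MemLp f 2 ν) : Integrable (fun x => f x ^ 2) ν := hf.integrable_sq

lemma memLp_two_mul {α : Type*} [MeasurableSpace α] {ν : Measure α} {f g : α → ℝ}
    (hf : MemLp f 2 ν) (hg : MemLp g 2 ν) : Integrable (fun x => f x * g x) ν :=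
  hf.integrable_mul hg

/-- Agmon-type inequality with a free parameter. -/
lemma sq_le_of_memLp {f f' : ℝ → ℝ} (h : ∀ x, HasDerivAt f (f' x) x)
    (hf : MemLp f 2) (hf' : MemLp f' 2) {l : ℝ} (hl : 0 < l) (x : ℝ) :
    f x ^ 2 ≤ l * (∫ y, f y ^ 2) + l⁻¹ * ∫ y, f' y ^ 2 := by
  have hd : ∀ x, HasDerivAt (fun y => f y ^ 2) (2 * (f x * f' x)) x := fun x => by
    simpa [mul_assoc] using (h x).fun_pow 2
  have h1 := abs_le_integral_abs_deriv hd hf.integrable_sq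
    ((memLp_two_mul hf hf').const_mul 2) x
  rw [abs_of_nonneg (sq_nonneg _)] at h1
  refine h1.trans ?_
  rw [← integral_const_mul, ← integral_const_mul, ← integral_add
    (hf.integrable_sq.const_mul _) (hf'.integrable_sq.const_mul _)]
  refine integral_mono ((memLp_two_mul hf hf').const_mul 2).abs
    ((hf.integrable_sq.const_mul _).add (hf'.integrable_sq.const_mul _)) fun y => ?_
  simp only
  have e : l * f y ^ 2 + l⁻¹ * f' y ^ 2 - 2 * |f y * f' y|
      = l * (|f y| - l⁻¹ * |f' y|) ^ 2 := by
    rw [abs_mul, ← sq_abs (f y), ← sq_abs (f' y)]; field_simp; ring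
  have : 0 ≤ l * (|f y| - l⁻¹ * |f' y|) ^ 2 := by positivity
  rw [abs_mul, abs_two]; linarith

lemma pow_four_le_of_memLp {f f' : ℝ → ℝ} (h : ∀ x, HasDerivAt f (f' x) x)
    (hf : MemLp f 2) (hf' : MemLp f' 2) (x : ℝ) :
    f x ^ 4 ≤ 4 * (∫ y, f y ^ 2) * ∫ y, f' y ^ 2 := by
  set A := ∫ y, f y ^ 2 with hA
  set B := ∫ y, f' y ^ 2 with hB
  have hA0 : 0 ≤ A := integral_nonneg fun _ => sq_nonneg _
  have hB0 : 0 ≤ B := integral_nonneg fun _ => sq_nonneg _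
  have key : ∀ l > 0, f x ^ 2 ≤ l * A + l⁻¹ * B := fun l hl => sq_le_of_memLp h hf hf' hl x
  rcases (sq_nonneg (f x)).eq_or_lt with h0 | h0
  · have : f x ^ 4 = (f x ^ 2) ^ 2 := by ring
    rw [this, ← h0]
    have := mul_nonneg hA0 hB0
    nlinarith
  rcases hA0.eq_or_lt with hA1 | hA1
  · -- the integral of `f²` vanishes, so large parameters force `f x = 0`
    have := key (2 * (B + 1) / f x ^ 2) (by positivity)
    rw [← hA1] at this
    have h2 : (2 * (B + 1) / f x ^ 2)⁻¹ * B ≤ f x ^ 2 / 2 := by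
      rw [inv_div, div_mul_eq_mul_div, div_le_div_iff₀ (by positivity) (by positivity)]
      nlinarith
    nlinarith
  · have := key (f x ^ 2 / (2 * A)) (by positivity)
    have e : (f x ^ 2 / (2 * A)) * A = f x ^ 2 / 2 := by field_simp
    have e2 : (f x ^ 2 / (2 * A))⁻¹ * B = 2 * A * B / f x ^ 2 := by
      rw [inv_div]; ring
    rw [e, e2] at this
    have h3 : f x ^ 2 / 2 ≤ 2 * A * B / f x ^ 2 := by linarith
    rw [div_le_div_iff₀ (by positivity) (by positivity)] at h3
    nlinarith

lemma ibp_memLp {f f' g g' : ℝ → ℝ} (hf : ∀ x, HasDerivAt f (f' x) x)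
    (hg : ∀ x, HasDerivAt g (g' x) x) (h1 : MemLp f 2) (h2 : MemLp f' 2)
    (h3 : MemLp g 2) (h4 : MemLp g' 2) :
    ∫ x, f x * g' x = - ∫ x, f' x * g x :=
  integral_mul_deriv_eq_deriv_mul_of_integrable (fun x _ => hf x) (fun x _ => hg x)
    (memLp_two_mul h1 h4) (memLp_two_mul h2 h3) (memLp_two_mul h1 h3)

lemma memLp_slice {T : ℝ} {f : ℝ → ℝ → ℝ} (hm : Measurable fun z : ℝ × ℝ => f z.1 z.2)
    (h : MemLp (fun z : ℝ × ℝ => f z.1 z.2) 2 (slab T)) :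
    ∀ᵐ t ∂(volume.restrict (Icc (0 : ℝ) T)), MemLp (fun x => f x t) 2 := by
  filter_upwards [h.integrable_sq.prod_left_ae] with t ht
  refine (memLp_two_iff_integrable_sq ?_).2 ht
  exact (hm.comp (measurable_id.prodMk measurable_const)).aestronglyMeasurable

lemma ibp_slab {T : ℝ} {f fx g gx : ℝ → ℝ → ℝ}
    (hf : ∀ x t, HasDerivAt (fun y => f y t) (fx x t) x)
    (hg : ∀ x t, HasDerivAt (fun y => g y t) (gx x t) x)
    (m1 : Measurable fun z : ℝ × ℝ => f z.1 z.2)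
    (m2 : Measurable fun z : ℝ × ℝ => fx z.1 z.2)
    (m3 : Measurable fun z : ℝ × ℝ => g z.1 z.2)
    (m4 : Measurable fun z : ℝ × ℝ => gx z.1 z.2)
    (h1 : MemLp (fun z : ℝ × ℝ => f z.1 z.2) 2 (slab T))
    (h2 : MemLp (fun z : ℝ × ℝ => fx z.1 z.2) 2 (slab T))
    (h3 : MemLp (fun z : ℝ × ℝ => g z.1 z.2) 2 (slab T))
    (h4 : MemLp (fun z : ℝ × ℝ => gx z.1 z.2) 2 (slab T)) :
    ∫ z, f z.1 z.2 * gx z.1 z.2 ∂(slab T) = - ∫ z, fx z.1 z.2 * g z.1 z.2 ∂(slab T) := by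
  rw [integral_prod_symm _ (memLp_two_mul h1 h4), integral_prod_symm _ (memLp_two_mul h2 h3),
    ← integral_neg]
  refine integral_congr_ae ?_
  filter_upwards [memLp_slice m1 h1, memLp_slice m2 h2, memLp_slice m3 h3, memLp_slice m4 h4]
    with t a1 a2 a3 a4
  exact ibp_memLp (fun x => hf x t) (fun x => hg x t) a1 a2 a3 a4

/-- Fundamental theorem of calculus in time, integrated over space. -/
lemma ftc_slab {T : ℝ} (hT : 0 < T) {f ft : ℝ → ℝ → ℝ}
    (hc : ∀ x, ContinuousOn (fun t => f x t) (Icc 0 T))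
    (hd : ∀ x, ∀ t ∈ Ioo (0 : ℝ) T, HasDerivAt (fun s => f x s) (ft x t) t)
    (hi : Integrable (fun z : ℝ × ℝ => ft z.1 z.2) (slab T))
    (h0 : Integrable fun x => f x 0) (h1 : Integrable fun x => f x T) :
    (∫ x, f x T) - ∫ x, f x 0 = ∫ z, ft z.1 z.2 ∂(slab T) := by
  rw [integral_prod _ hi, ← integral_sub h1 h0]
  refine integral_congr_ae ?_
  filter_upwards [hi.prod_right_ae] with x hx
  have := intervalIntegral.integral_eq_sub_of_hasDerivAt_of_le hT.le (hc x) (hd x)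
    ((intervalIntegrable_iff_integrableOn_Icc_of_le hT.le).2 hx)
  rw [← this, intervalIntegral.integral_of_le hT.le, integral_Icc_eq_integral_Ioc]

/-- A function dominated by `b(t) k(x,t)`, with `∫ k(·,t) ≤ E` for all `t` and `b(t) = ∫ β(·,t)`, is
bounded in `L¹` of the slab by `E` times the norm of `β`. -/
lemma slice_bound {T E : ℝ} {h k β : ℝ → ℝ → ℝ}
    (hm : Measurable fun z : ℝ × ℝ => h z.1 z.2)
    (h0 : ∀ x t, 0 ≤ h x t)
    (hk : ∀ t ∈ Icc (0 : ℝ) T, Integrable (fun x => k x t))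
    (hkE : ∀ t ∈ Icc (0 : ℝ) T, ∫ x, k x t ≤ E)
    (hβ0 : ∀ x t, 0 ≤ β x t)
    (hβ : Integrable (fun z : ℝ × ℝ => β z.1 z.2) (slab T))
    (hle : ∀ t ∈ Icc (0 : ℝ) T, Integrable (fun y => β y t) →
      ∀ x, h x t ≤ (∫ y, β y t) * k x t) :
    Integrable (fun z : ℝ × ℝ => h z.1 z.2) (slab T) ∧
      ∫ z, h z.1 z.2 ∂(slab T) ≤ E * ∫ z, β z.1 z.2 ∂(slab T) := by
  have hmt : ∀ᵐ t ∂(volume.restrict (Icc (0 : ℝ) T)), t ∈ Icc (0 : ℝ) T :=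
    ae_restrict_mem measurableSet_Icc
  have hms : ∀ t, Measurable fun x => h x t := fun t =>
    hm.comp (measurable_id.prodMk measurable_const)
  have hsl : ∀ᵐ t ∂(volume.restrict (Icc (0 : ℝ) T)), Integrable (fun x => h x t) ∧
      ∫ x, h x t ≤ E * ∫ x, β x t := by
    filter_upwards [hmt, hβ.prod_left_ae] with t ht hb
    have hi := (hk t ht).const_mul (∫ y, β y t)
    have hi' : Integrable (fun x => h x t) := by
      refine hi.mono' (hms t).aestronglyMeasurable (ae_of_all _ fun x => ?_)
      rw [Real.norm_of_nonneg (h0 x t)]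
      exact hle t ht hb x
    refine ⟨hi', (integral_mono hi' hi (hle t ht hb)).trans ?_⟩
    rw [integral_const_mul, mul_comm]
    exact mul_le_mul_of_nonneg_right (hkE t ht) (integral_nonneg fun x => hβ0 x t)
  have hInt : Integrable (fun z : ℝ × ℝ => h z.1 z.2) (slab T) := by
    rw [integrable_prod_iff' hm.aestronglyMeasurable]
    refine ⟨hsl.mono fun t ht => ht.1, ?_⟩
    refine (hβ.integral_prod_right.const_mul E).mono' ?_ ?_
    · exact (hm.norm.stronglyMeasurable.integral_prod_left').aestronglyMeasurable
    · filter_upwards [hsl] with t ht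
      rw [Real.norm_of_nonneg (integral_nonneg fun x => norm_nonneg _)]
      simpa only [Real.norm_of_nonneg (h0 _ _)] using ht.2
  refine ⟨hInt, ?_⟩
  rw [integral_prod_symm _ hInt, integral_prod_symm _ hβ, ← integral_const_mul]
  exact integral_mono_ae hInt.integral_prod_right (hβ.integral_prod_right.const_mul E)
    (hsl.mono fun t ht => ht.2)

/-! ### Absolutely continuous evolutions -/

/-- Absolute continuity survives composition with a function that is Lipschitz on the range. -/
lemma lipschitz_comp_ac {f F : ℝ → ℝ} {a b : ℝ} {s : Set ℝ} {C : NNReal}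
    (hf : AbsolutelyContinuousOnInterval f a b) (hF : LipschitzOnWith C F s)
    (hs : ∀ x ∈ uIcc a b, f x ∈ s) :
    AbsolutelyContinuousOnInterval (fun x => F (f x)) a b := by
  rw [absolutelyContinuousOnInterval_iff] at hf ⊢
  intro ε hε
  obtain ⟨δ, hδ, h⟩ := hf (ε / (C + 1)) (by positivity)
  refine ⟨δ, hδ, fun E hE hlt => ?_⟩
  have h1 := h E hE hlt
  have h2 : ∑ i ∈ Finset.range E.1, dist (F (f (E.2 i).1)) (F (f (E.2 i).2))
      ≤ C * ∑ i ∈ Finset.range E.1, dist (f (E.2 i).1) (f (E.2 i).2) := by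
    rw [Finset.mul_sum]
    refine Finset.sum_le_sum fun i hi => ?_
    have := hE.1 i hi
    exact hF.dist_le_mul _ (hs _ this.1) _ (hs _ this.2)
  rw [lt_div_iff₀ (by positivity)] at h1
  have h3 : (0 : ℝ) ≤ ∑ i ∈ Finset.range E.1, dist (f (E.2 i).1) (f (E.2 i).2) :=
    Finset.sum_nonneg fun _ _ => dist_nonneg
  nlinarith

/-- Evolution of `ρ W²` for the absolutely continuous functions `W = W₀ + ∫ f`
and `ρ = exp (- ∫ a)`. -/
lemma weighted_sq_ftc {T W0 : ℝ} {f a : ℝ → ℝ}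
    (hf : IntervalIntegrable f volume 0 T) (ha : IntervalIntegrable a volume 0 T) :
    Real.exp (-∫ s in (0 : ℝ)..T, a s) * (W0 + ∫ s in (0 : ℝ)..T, f s) ^ 2 - W0 ^ 2 =
      ∫ t in (0 : ℝ)..T, Real.exp (-∫ s in (0 : ℝ)..t, a s) *
        (2 * (W0 + ∫ s in (0 : ℝ)..t, f s) * f t
          - a t * (W0 + ∫ s in (0 : ℝ)..t, f s) ^ 2) := by
  have h0 : (0 : ℝ) ∈ uIcc 0 T := left_mem_uIcc
  have acf := hf.absolutelyContinuousOnInterval_intervalIntegral h0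
  have aca := ha.absolutelyContinuousOnInterval_intervalIntegral h0
  have acc : AbsolutelyContinuousOnInterval (fun _ : ℝ => W0) 0 T := by
    have : LipschitzOnWith 0 (fun _ : ℝ => W0) (uIcc 0 T) :=
      (LipschitzWith.const W0).lipschitzOnWith
    exact this.absolutelyContinuousOnInterval
  have acW := acc.add acf
  obtain ⟨B, hB⟩ := aca.exists_bound
  have acρ : AbsolutelyContinuousOnInterval
      (fun t => Real.exp (-∫ s in (0 : ℝ)..t, a s)) 0 T := by
    have hC : ContDiffOn ℝ 1 (fun y : ℝ => Real.exp (-y)) (Icc (-B) B) := by fun_prop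
    obtain ⟨C, hC⟩ := hC.exists_lipschitzOnWith (by simp) (convex_Icc _ _) isCompact_Icc
    refine lipschitz_comp_ac (F := fun y => Real.exp (-y)) aca hC fun x hx => ?_
    exact abs_le.1 (hB x hx)
  have ac := acρ.fun_mul (acW.fun_mul acW)
  have key := ac.integral_deriv_eq_sub
  simp only [Pi.add_apply] at key
  have e : (fun t => Real.exp (-∫ s in (0 : ℝ)..t, a s) * ((W0 + ∫ s in (0 : ℝ)..t, f s) *
    (W0 + ∫ s in (0 : ℝ)..t, f s))) T - (fun t => Real.exp (-∫ s in (0 : ℝ)..t, a s) *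
    ((W0 + ∫ s in (0 : ℝ)..t, f s) * (W0 + ∫ s in (0 : ℝ)..t, f s))) 0 =
    Real.exp (-∫ s in (0 : ℝ)..T, a s) * (W0 + ∫ s in (0 : ℝ)..T, f s) ^ 2 - W0 ^ 2 := by
    simp; ring
  rw [← e]
  refine key.symm.trans ?_
  refine intervalIntegral.integral_congr_ae ?_
  filter_upwards [hf.ae_hasDerivAt_integral, ha.ae_hasDerivAt_integral] with t h1 h2 ht
  have ht' : t ∈ uIcc 0 T := uIoc_subset_uIcc ht
  have d1 := (h1 ht' 0 h0).const_add W0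
  have d2 := (h2 ht' 0 h0).neg.exp
  have := (d2.mul (d1.mul d1)).deriv
  refine Eq.trans ?_ (this.trans ?_)
  · rfl
  · simp only [Pi.mul_apply, Pi.neg_apply]; ring

open scoped ContDiff in
/-- Interchange of `∂ₓ` and the time integral: if `∂ₜ f = g`, then for almost every `x`
`∂ₓ f(x,T) = ∂ₓ f(x,0) + ∫₀ᵀ ∂ₓ g(x,s) ds`. -/
lemma deriv_x_evolution {T : ℝ} (hT : 0 < T) {f fx g gx : ℝ → ℝ → ℝ}
    (hf : ∀ x t, HasDerivAt (fun y => f y t) (fx x t) x)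
    (hg : ∀ x t, HasDerivAt (fun y => g y t) (gx x t) x)
    (hc : ∀ x, ContinuousOn (fun t => f x t) (Icc 0 T))
    (hd : ∀ x, ∀ t ∈ Ioo (0 : ℝ) T, HasDerivAt (fun s => f x s) (g x t) t)
    (m3 : Measurable fun z : ℝ × ℝ => g z.1 z.2)
    (m4 : Measurable fun z : ℝ × ℝ => gx z.1 z.2)
    (h3 : MemLp (fun z : ℝ × ℝ => g z.1 z.2) 2 (slab T))
    (h4 : MemLp (fun z : ℝ × ℝ => gx z.1 z.2) 2 (slab T))
    (i0 : MemLp (fun x => fx x 0) 2) (iT : MemLp (fun x => fx x T) 2) :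
    ∀ᵐ x, fx x T = fx x 0 + ∫ s in (0 : ℝ)..T, gx x s := by
  have hloc : LocallyIntegrable (fun x => ∫ s in (0 : ℝ)..T, gx x s) := by
    rw [locallyIntegrable_iff]
    intro k hk
    have hfin : IsFiniteMeasure (volume.restrict k) := ⟨by simpa using hk.measure_lt_top⟩
    have hle : (volume.restrict k).prod (volume.restrict (Icc (0 : ℝ) T)) ≤ slab T :=
      Measure.prod_mono Measure.restrict_le_self le_rfl
    have h5 : Integrable (fun z : ℝ × ℝ => gx z.1 z.2)
        ((volume.restrict k).prod (volume.restrict (Icc (0 : ℝ) T))) :=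
      (h4.mono_measure hle).integrable (by norm_num)
    have := h5.integral_prod_left
    refine Integrable.congr this (ae_of_all _ fun x => ?_)
    simp only
    rw [intervalIntegral.integral_of_le hT.le, integral_Icc_eq_integral_Ioc]
  have hl1 : LocallyIntegrable (fun x => fx x T - fx x 0) :=
    (iT.locallyIntegrable (by norm_num)).sub (i0.locallyIntegrable (by norm_num))
  have := ae_eq_of_integral_contDiff_smul_eq hl1 hloc ?_
  · filter_upwards [this] with x hx
    linarith
  intro η hη hηc
  have hη1 : ∀ x, HasDerivAt η (deriv η x) x := fun x =>
    (hη.differentiable (by simp)).differentiableAt.hasDerivAt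
  have cη : Continuous η := hη.continuous
  have cη' : Continuous (deriv η) := hη.continuous_deriv (by simp)
  have sη' : HasCompactSupport (deriv η) := hηc.deriv
  have Lη : MemLp η 2 := cη.memLp_of_hasCompactSupport hηc
  have Lη' : MemLp (deriv η) 2 := cη'.memLp_of_hasCompactSupport sη'
  have Sη : MemLp (fun z : ℝ × ℝ => η z.1) 2 (slab T) := Lη.comp_fst _
  have Sη' : MemLp (fun z : ℝ × ℝ => deriv η z.1) 2 (slab T) := Lη'.comp_fst _
  have cf : ∀ t, Continuous fun x => f x t := fun t =>
    continuous_iff_continuousAt.2 fun x => (hf x t).continuousAt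
  have I1 : ∀ t, MemLp (fun x => fx x t) 2 →
      ∫ x, η x * fx x t = - ∫ x, deriv η x * f x t := fun t ht =>
    integral_mul_deriv_eq_deriv_mul_of_integrable (fun x _ => hη1 x) (fun x _ => hf x t)
      (memLp_two_mul Lη ht)
      ((cη'.mul (cf t)).integrable_of_hasCompactSupport sη'.mul_right)
      ((cη.mul (cf t)).integrable_of_hasCompactSupport hηc.mul_right)
  have I2 := ibp_slab (T := T) (f := fun x _ => η x) (fx := fun x _ => deriv η x)
    (fun x t => hη1 x) hg (cη.measurable.comp measurable_fst)
    (cη'.measurable.comp measurable_fst) m3 m4 Sη Sη' h3 h4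
  have I3 := ftc_slab hT (f := fun x t => deriv η x * f x t)
    (ft := fun x t => deriv η x * g x t) (fun x => continuousOn_const.mul (hc x))
    (fun x t ht => (hd x t ht).const_mul _) (memLp_two_mul Sη' h3)
    ((cη'.mul (cf 0)).integrable_of_hasCompactSupport sη'.mul_right)
    ((cη'.mul (cf T)).integrable_of_hasCompactSupport sη'.mul_right)
  have I4 : ∫ x, η x • ∫ s in (0 : ℝ)..T, gx x s = ∫ z, η z.1 * gx z.1 z.2 ∂(slab T) := by
    rw [integral_prod _ (memLp_two_mul Sη h4)]
    refine integral_congr_ae (ae_of_all _ fun x => ?_)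
    simp only [smul_eq_mul]
    rw [integral_const_mul, intervalIntegral.integral_of_le hT.le, integral_Icc_eq_integral_Ioc]
  rw [I4, I2, ← I3]
  simp only [smul_eq_mul, mul_sub]
  rw [integral_sub (memLp_two_mul Lη iT) (memLp_two_mul Lη i0), I1 T iT, I1 0 i0]
  ring

/-! ### Flows with named derivatives -/

/-- The expression for `∂ₓ (f / v)` in terms of `f`, `fx = ∂ₓ f`, `v` and `vx = ∂ₓ v`. -/
noncomputable def dquot (v vx f fx : ℝ → ℝ → ℝ) (x t : ℝ) : ℝ :=
  fx x t / v x t - f x t * vx x t / v x t ^ 2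

/-- A solution of the system with named spatial derivatives, defined for all real times (frozen
for `t ≤ 0`), so that all functions are jointly measurable on the plane. The
evolution equations are those of the system with the spatial derivatives expanded. -/
structure NSFlow (μ κ R cv K : ℝ) (v u θ vx ux θx uxx θxx : ℝ → ℝ → ℝ) : Prop where
  vK : ∀ x t, K⁻¹ ≤ v x t ∧ v x t ≤ K
  vpos : ∀ x t, 0 < v x t
  θpos : ∀ x t, 0 < θ x t
  dv : ∀ x t, HasDerivAt (fun y => v y t) (vx x t) x
  du : ∀ x t, HasDerivAt (fun y => u y t) (ux x t) x
  dθ : ∀ x t, HasDerivAt (fun y => θ y t) (θx x t) x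
  dux : ∀ x t, HasDerivAt (fun y => ux y t) (uxx x t) x
  dθx : ∀ x t, HasDerivAt (fun y => θx y t) (θxx x t) x
  mv : Measurable fun z : ℝ × ℝ => v z.1 z.2
  mu : Measurable fun z : ℝ × ℝ => u z.1 z.2
  mθ : Measurable fun z : ℝ × ℝ => θ z.1 z.2
  mvx : Measurable fun z : ℝ × ℝ => vx z.1 z.2
  mux : Measurable fun z : ℝ × ℝ => ux z.1 z.2
  mθx : Measurable fun z : ℝ × ℝ => θx z.1 z.2
  muxx : Measurable fun z : ℝ × ℝ => uxx z.1 z.2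
  mθxx : Measurable fun z : ℝ × ℝ => θxx z.1 z.2
  cv_t : ∀ x, Continuous fun t => v x t
  cu_t : ∀ x, Continuous fun t => u x t
  cθ_t : ∀ x, Continuous fun t => θ x t
  tv : ∀ x t, 0 < t → HasDerivAt (fun s => v x s) (ux x t) t
  tu : ∀ x t, 0 < t → HasDerivAt (fun s => u x s)
    (μ * dquot v vx ux uxx x t - R * dquot v vx θ θx x t) t
  tθ : ∀ x t, 0 < t → HasDerivAt (fun s => θ x s)
    ((κ * dquot v vx θx θxx x t + μ * ux x t ^ 2 / v x t - R * θ x t / v x t * ux x t) / cv) t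
  Lv : ∀ t, 0 ≤ t → MemLp (fun x => v x t - 1) 2
  Lu : ∀ t, 0 ≤ t → MemLp (fun x => u x t) 2
  Lθ : ∀ t, 0 ≤ t → MemLp (fun x => θ x t - 1) 2
  Lvx : ∀ t, 0 ≤ t → MemLp (fun x => vx x t) 2
  Lux : ∀ t, 0 ≤ t → MemLp (fun x => ux x t) 2
  Lθx : ∀ t, 0 ≤ t → MemLp (fun x => θx x t) 2
  bdd : ∀ T, 0 ≤ T → ∃ B : ℝ, ∀ t ∈ Icc (0 : ℝ) T,
    (∫ x, (v x t - 1) ^ 2) ≤ B ∧ (∫ x, u x t ^ 2) ≤ B ∧ (∫ x, (θ x t - 1) ^ 2) ≤ B ∧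
    (∫ x, vx x t ^ 2) ≤ B ∧ (∫ x, ux x t ^ 2) ≤ B ∧ (∫ x, θx x t ^ 2) ≤ B
  Suxx : ∀ T, 0 < T → MemLp (fun z : ℝ × ℝ => uxx z.1 z.2) 2 (slab T)
  Sθxx : ∀ T, 0 < T → MemLp (fun z : ℝ × ℝ => θxx z.1 z.2) 2 (slab T)

lemma measurable_slice {f : ℝ → ℝ → ℝ} (hm : Measurable fun z : ℝ × ℝ => f z.1 z.2) (t : ℝ) :
    Measurable fun x => f x t := hm.comp (measurable_id.prodMk measurable_const)

lemma memLp_slab_of_slices {T B : ℝ} {f : ℝ → ℝ → ℝ}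
    (hm : Measurable fun z : ℝ × ℝ => f z.1 z.2)
    (hs : ∀ t ∈ Icc (0 : ℝ) T, MemLp (fun x => f x t) 2)
    (hB : ∀ t ∈ Icc (0 : ℝ) T, ∫ x, f x t ^ 2 ≤ B) :
    MemLp (fun z : ℝ × ℝ => f z.1 z.2) 2 (slab T) := by
  have hmt : ∀ᵐ t ∂(volume.restrict (Icc (0 : ℝ) T)), t ∈ Icc (0 : ℝ) T :=
    ae_restrict_mem measurableSet_Icc
  refine (memLp_two_iff_integrable_sq hm.aestronglyMeasurable).2 ?_
  rw [integrable_prod_iff' (hm.pow_const 2).aestronglyMeasurable]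
  refine ⟨hmt.mono fun t ht => (hs t ht).integrable_sq, ?_⟩
  refine (integrable_const B).mono' ?_ ?_
  · exact ((hm.pow_const 2).norm.stronglyMeasurable.integral_prod_left').aestronglyMeasurable
  · filter_upwards [hmt] with t ht
    rw [Real.norm_of_nonneg (integral_nonneg fun x => norm_nonneg _)]
    simpa using hB t ht

/-- If `f, fx ∈ L²` of the slab and `g` is bounded in `L²(ℝ)` uniformly in time, then
`f g` is in `L²` of the slab. -/
lemma memLp_slab_mul {T B : ℝ} {f fx g : ℝ → ℝ → ℝ}
    (hd : ∀ x t, HasDerivAt (fun y => f y t) (fx x t) x)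
    (mf : Measurable fun z : ℝ × ℝ => f z.1 z.2)
    (mfx : Measurable fun z : ℝ × ℝ => fx z.1 z.2)
    (mg : Measurable fun z : ℝ × ℝ => g z.1 z.2)
    (hf : MemLp (fun z : ℝ × ℝ => f z.1 z.2) 2 (slab T))
    (hfx : MemLp (fun z : ℝ × ℝ => fx z.1 z.2) 2 (slab T))
    (hs : ∀ t ∈ Icc (0 : ℝ) T, MemLp (fun x => g x t) 2)
    (hB : ∀ t ∈ Icc (0 : ℝ) T, ∫ x, g x t ^ 2 ≤ B) :
    MemLp (fun z : ℝ × ℝ => f z.1 z.2 * g z.1 z.2) 2 (slab T) := by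
  refine (memLp_two_iff_integrable_sq (mf.mul mg).aestronglyMeasurable).2 ?_
  refine (slice_bound (T := T) (E := B) (h := fun x t => (f x t * g x t) ^ 2)
    (k := fun x t => g x t ^ 2) (β := fun x t => f x t ^ 2 + fx x t ^ 2)
    ((mf.mul mg).pow_const 2) (fun _ _ => sq_nonneg _) (fun t ht => (hs t ht).integrable_sq)
    hB (fun _ _ => by positivity) (hf.integrable_sq.add hfx.integrable_sq) ?_).1
  intro t ht hi x
  have m1 := measurable_slice mf t
  have m2 := measurable_slice mfx t
  have i1 : Integrable fun x => f x t ^ 2 := hi.mono' (m1.pow_const 2).aestronglyMeasurable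
    (ae_of_all _ fun y => by
      rw [Real.norm_of_nonneg (sq_nonneg _)]; linarith [sq_nonneg (fx y t)])
  have i2 : Integrable fun x => fx x t ^ 2 := hi.mono' (m2.pow_const 2).aestronglyMeasurable
    (ae_of_all _ fun y => by
      rw [Real.norm_of_nonneg (sq_nonneg _)]; linarith [sq_nonneg (f y t)])
  have key := sq_le_of_memLp (fun x => hd x t)
    ((memLp_two_iff_integrable_sq m1.aestronglyMeasurable).2 i1)
    ((memLp_two_iff_integrable_sq m2.aestronglyMeasurable).2 i2) one_pos x
  rw [inv_one, one_mul, one_mul, ← integral_add i1 i2] at key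
  simp only [mul_pow]
  exact mul_le_mul_of_nonneg_right key (sq_nonneg _)

lemma hasDerivAt_dquot {v vx f fx : ℝ → ℝ → ℝ} {x t : ℝ} (hv : v x t ≠ 0)
    (h1 : HasDerivAt (fun y => v y t) (vx x t) x) (h2 : HasDerivAt (fun y => f y t) (fx x t) x) :
    HasDerivAt (fun y => f y t / v y t) (dquot v vx f fx x t) x := by
  refine (h2.fun_div h1 hv).congr_deriv ?_
  unfold dquot; field_simp

lemma MemLp.of_bdd {α : Type*} [MeasurableSpace α] {ν : Measure α} {f g : α → ℝ} {C : ℝ}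
    (hf : MemLp f 2 ν) (hg : Measurable g) (h : ∀ᵐ z ∂ν, |g z| ≤ C * |f z|) : MemLp g 2 ν :=
  hf.of_le_mul (c := C) hg.aestronglyMeasurable h

lemma integrable_of_bdd {α : Type*} [MeasurableSpace α] {ν : Measure α} {f g : α → ℝ} {C : ℝ}
    (hf : Integrable f ν) (hg : Measurable g) (h : ∀ᵐ z ∂ν, |g z| ≤ C * |f z|) :
    Integrable g ν :=
  (hf.abs.const_mul C).mono' hg.aestronglyMeasurable h

lemma ae_slab {T : ℝ} {P : ℝ → ℝ → Prop} (h : ∀ t ∈ Icc (0 : ℝ) T, ∀ x, P x t) :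
    ∀ᵐ z ∂(slab T), P z.1 z.2 := by
  have hs : slab T = (volume : Measure (ℝ × ℝ)).restrict (univ ×ˢ Icc (0 : ℝ) T) := by
    rw [slab, Measure.volume_eq_prod, ← Measure.prod_restrict, Measure.restrict_univ]
  rw [hs]
  filter_upwards [ae_restrict_mem (MeasurableSet.univ.prod measurableSet_Icc)] with z hz
  exact h _ hz.2 _

namespace NSFlow

variable {μ κ R cv K : ℝ} {v u θ vx ux θx uxx θxx : ℝ → ℝ → ℝ}

lemma Kpos (F : NSFlow μ κ R cv K v u θ vx ux θx uxx θxx) : 0 < K :=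
  (F.vpos 0 0).trans_le (F.vK 0 0).2

lemma inv_v_le (F : NSFlow μ κ R cv K v u θ vx ux θx uxx θxx) (x t : ℝ) : 1 / v x t ≤ K := by
  have := F.Kpos
  rw [div_le_iff₀ (F.vpos x t)]
  have := mul_le_mul_of_nonneg_left (F.vK x t).1 this.le
  rwa [mul_inv_cancel₀ F.Kpos.ne'] at this

/-- Space-time square integrability of all first order quantities. -/
lemma slab_base (F : NSFlow μ κ R cv K v u θ vx ux θx uxx θxx) {T : ℝ} (hT : 0 < T) :
    MemLp (fun z : ℝ × ℝ => v z.1 z.2 - 1) 2 (slab T) ∧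
    MemLp (fun z : ℝ × ℝ => u z.1 z.2) 2 (slab T) ∧
    MemLp (fun z : ℝ × ℝ => θ z.1 z.2 - 1) 2 (slab T) ∧
    MemLp (fun z : ℝ × ℝ => vx z.1 z.2) 2 (slab T) ∧
    MemLp (fun z : ℝ × ℝ => ux z.1 z.2) 2 (slab T) ∧
    MemLp (fun z : ℝ × ℝ => θx z.1 z.2) 2 (slab T) := by
  obtain ⟨B, hB⟩ := F.bdd T hT.le
  refine ⟨?_, ?_, ?_, ?_, ?_, ?_⟩
  · exact memLp_slab_of_slices (f := fun x t => v x t - 1) (F.mv.sub_const 1)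
      (fun t ht => F.Lv t ht.1) (fun t ht => (hB t ht).1)
  · exact memLp_slab_of_slices F.mu (fun t ht => F.Lu t ht.1) (fun t ht => (hB t ht).2.1)
  · exact memLp_slab_of_slices (f := fun x t => θ x t - 1) (F.mθ.sub_const 1)
      (fun t ht => F.Lθ t ht.1) (fun t ht => (hB t ht).2.2.1)
  · exact memLp_slab_of_slices F.mvx (fun t ht => F.Lvx t ht.1) (fun t ht => (hB t ht).2.2.2.1)
  · exact memLp_slab_of_slices F.mux (fun t ht => F.Lux t ht.1) (fun t ht => (hB t ht).2.2.2.2.1)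
  · exact memLp_slab_of_slices F.mθx (fun t ht => F.Lθx t ht.1) (fun t ht => (hB t ht).2.2.2.2.2)

/-- The quadratic products of first derivatives appearing in the equations. -/
lemma slab_prod (F : NSFlow μ κ R cv K v u θ vx ux θx uxx θxx) {T : ℝ} (hT : 0 < T) :
    MemLp (fun z : ℝ × ℝ => ux z.1 z.2 * vx z.1 z.2) 2 (slab T) ∧
    MemLp (fun z : ℝ × ℝ => θx z.1 z.2 * vx z.1 z.2) 2 (slab T) ∧
    MemLp (fun z : ℝ × ℝ => ux z.1 z.2 * ux z.1 z.2) 2 (slab T) := by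
  obtain ⟨B, hB⟩ := F.bdd T hT.le
  obtain ⟨-, -, -, -, h5, h6⟩ := F.slab_base hT
  refine ⟨?_, ?_, ?_⟩
  · exact memLp_slab_mul F.dux F.mux F.muxx F.mvx h5 (F.Suxx T hT) (fun t ht => F.Lvx t ht.1)
      (fun t ht => (hB t ht).2.2.2.1)
  · exact memLp_slab_mul F.dθx F.mθx F.mθxx F.mvx h6 (F.Sθxx T hT) (fun t ht => F.Lvx t ht.1)
      (fun t ht => (hB t ht).2.2.2.1)
  · exact memLp_slab_mul F.dux F.mux F.muxx F.mux h5 (F.Suxx T hT) (fun t ht => F.Lux t ht.1)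
      (fun t ht => (hB t ht).2.2.2.2.1)

/-- Uniform bounds for velocity and temperature on a bounded time interval. -/
lemma sup_bound (F : NSFlow μ κ R cv K v u θ vx ux θx uxx θxx) {T : ℝ} (hT : 0 < T) :
    ∃ B : ℝ, 1 ≤ B ∧ ∀ t ∈ Icc (0 : ℝ) T, ∀ x, |u x t| ≤ B ∧ θ x t ≤ B := by
  obtain ⟨B, hB⟩ := F.bdd T hT.le
  have hB0 : 0 ≤ B := (integral_nonneg fun _ => sq_nonneg _).trans (hB 0 ⟨le_rfl, hT.le⟩).1
  refine ⟨2 + 2 * B, by linarith, fun t ht x => ?_⟩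
  obtain ⟨-, b2, b3, -, b5, b6⟩ := hB t ht
  have h1 := sq_le_of_memLp (fun x => F.du x t) (F.Lu t ht.1) (F.Lux t ht.1) one_pos x
  have h2 := sq_le_of_memLp (fun x => (F.dθ x t).sub_const 1) (F.Lθ t ht.1) (F.Lθx t ht.1)
    one_pos x
  rw [inv_one, one_mul, one_mul] at h1 h2
  refine ⟨?_, ?_⟩
  · have : |u x t| ^ 2 ≤ 2 * B := by rw [sq_abs]; linarith
    nlinarith [sq_nonneg (|u x t| - 1)]
  · nlinarith [sq_nonneg (θ x t - 2)]

lemma m_dquot (F : NSFlow μ κ R cv K v u θ vx ux θx uxx θxx) {f fx : ℝ → ℝ → ℝ}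
    (mf : Measurable fun z : ℝ × ℝ => f z.1 z.2)
    (mfx : Measurable fun z : ℝ × ℝ => fx z.1 z.2) :
    Measurable fun z : ℝ × ℝ => dquot v vx f fx z.1 z.2 :=
  (mfx.div F.mv).sub ((mf.mul F.mvx).div (F.mv.pow_const 2))

lemma slab_div (F : NSFlow μ κ R cv K v u θ vx ux θx uxx θxx) {T : ℝ} {f : ℝ → ℝ → ℝ}
    (mf : Measurable fun z : ℝ × ℝ => f z.1 z.2)
    (hf : MemLp (fun z : ℝ × ℝ => f z.1 z.2) 2 (slab T)) :
    MemLp (fun z : ℝ × ℝ => f z.1 z.2 / v z.1 z.2) 2 (slab T) := by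
  refine MemLp.of_bdd (C := K) hf (mf.div F.mv) (ae_of_all _ fun z => ?_)
  rw [abs_div, abs_of_pos (F.vpos _ _), div_eq_mul_one_div, mul_comm]
  exact mul_le_mul_of_nonneg_right (F.inv_v_le _ _) (abs_nonneg _)

lemma slab_dquot (F : NSFlow μ κ R cv K v u θ vx ux θx uxx θxx) {T : ℝ}
    {f fx : ℝ → ℝ → ℝ}
    (mf : Measurable fun z : ℝ × ℝ => f z.1 z.2)
    (mfx : Measurable fun z : ℝ × ℝ => fx z.1 z.2)
    (h1 : MemLp (fun z : ℝ × ℝ => fx z.1 z.2) 2 (slab T))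
    (h2 : MemLp (fun z : ℝ × ℝ => f z.1 z.2 * vx z.1 z.2) 2 (slab T)) :
    MemLp (fun z : ℝ × ℝ => dquot v vx f fx z.1 z.2) 2 (slab T) := by
  have a := F.slab_div mfx h1
  have b := F.slab_div (f := fun x t => f x t * vx x t / v x t) ((mf.mul F.mvx).div F.mv)
    (F.slab_div (f := fun x t => f x t * vx x t) (mf.mul F.mvx) h2)
  refine (a.sub b).ae_eq (ae_of_all _ fun z => ?_)
  have := (F.vpos z.1 z.2).ne'
  simp only [Pi.sub_apply, dquot]
  field_simp

/-- `∂ₓ(u_x/v)`, `∂ₓ(θ_x/v)`, `∂ₓ(θ/v)` and `u_x²/v` are square integrable on slabs. -/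
lemma slab_second (F : NSFlow μ κ R cv K v u θ vx ux θx uxx θxx) {T : ℝ} (hT : 0 < T) :
    MemLp (fun z : ℝ × ℝ => dquot v vx ux uxx z.1 z.2) 2 (slab T) ∧
    MemLp (fun z : ℝ × ℝ => dquot v vx θx θxx z.1 z.2) 2 (slab T) ∧
    MemLp (fun z : ℝ × ℝ => dquot v vx θ θx z.1 z.2) 2 (slab T) ∧
    MemLp (fun z : ℝ × ℝ => ux z.1 z.2 ^ 2 / v z.1 z.2) 2 (slab T) ∧
    MemLp (fun z : ℝ × ℝ => θ z.1 z.2 / v z.1 z.2 * ux z.1 z.2) 2 (slab T) := by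
  obtain ⟨p1, p2, p3⟩ := F.slab_prod hT
  obtain ⟨h1, h2, h3, h4, h5, h6⟩ := F.slab_base hT
  obtain ⟨B, hB1, hB⟩ := F.sup_bound hT
  refine ⟨F.slab_dquot F.mux F.muxx (F.Suxx T hT) p1,
    F.slab_dquot F.mθx F.mθxx (F.Sθxx T hT) p2, F.slab_dquot F.mθ F.mθx h6 ?_, ?_, ?_⟩
  · refine MemLp.of_bdd (C := B) h4 (F.mθ.mul F.mvx) ?_
    refine ae_slab (P := fun x t => |θ x t * vx x t| ≤ B * |vx x t|) fun t ht x => ?_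
    rw [abs_mul, abs_of_pos (F.θpos x t)]
    exact mul_le_mul_of_nonneg_right (hB t ht x).2 (abs_nonneg _)
  · refine (F.slab_div (f := fun x t => ux x t * ux x t) (F.mux.mul F.mux) p3).ae_eq
      (ae_of_all _ fun z => ?_)
    simp only [sq]
  · refine (F.slab_div (f := fun x t => θ x t * ux x t) (F.mθ.mul F.mux) ?_).ae_eq
      (ae_of_all _ fun z => ?_)
    · refine MemLp.of_bdd (C := B) h5 (F.mθ.mul F.mux) ?_
      refine ae_slab (P := fun x t => |θ x t * ux x t| ≤ B * |ux x t|) fun t ht x => ?_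
      rw [abs_mul, abs_of_pos (F.θpos x t)]
      exact mul_le_mul_of_nonneg_right (hB t ht x).2 (abs_nonneg _)
    · simp only; ring

end NSFlow

/-! ### Controlled data and balance laws -/

/-- Positivity of the physical constants and of the bounds on the data. -/
structure PosParams (μ κ R cv M m K : ℝ) : Prop where
  μ : 0 < μ
  κ : 0 < κ
  R : 0 < R
  cv : 0 < cv
  M : 0 < M
  m : 0 < m
  K : 1 ≤ K

/-- A flow on `[0, T]` with controlled initial data, together with a parameter `ε ∈ (0, 1]`
that is small relative to norms of the solution on this time interval. All
estimates are uniform in `T` and `ε`. -/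
structure NSData (μ κ R cv M m K T ε : ℝ) (v u θ vx ux θx uxx θxx : ℝ → ℝ → ℝ) : Prop extends
    NSFlow μ κ R cv K v u θ vx ux θx uxx θxx where
  hT : 0 < T
  ε0 : 0 < ε
  ε1 : ε ≤ 1
  i_v : ∫ x, (v x 0 - 1) ^ 2 ≤ M
  i_u : ∫ x, u x 0 ^ 2 ≤ M
  i_θ : ∫ x, (θ x 0 - 1) ^ 2 ≤ M
  i_vx : ∫ x, vx x 0 ^ 2 ≤ M
  i_ux : ∫ x, ux x 0 ^ 2 ≤ M
  θm : ∀ x, m ≤ θ x 0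
  hε : ε * ∫ z, ((θ z.1 z.2 - 1) ^ 2 + vx z.1 z.2 ^ 2) ∂(slab T) ≤ 1

lemma slab_le {t T : ℝ} (h : t ≤ T) : slab t ≤ slab T := by
  have hs : ∀ T : ℝ, slab T = (volume : Measure (ℝ × ℝ)).restrict (univ ×ˢ Icc (0 : ℝ) T) := by
    intro T
    rw [slab, Measure.volume_eq_prod, ← Measure.prod_restrict, Measure.restrict_univ]
  rw [hs, hs]
  exact Measure.restrict_mono (prod_mono le_rfl (Icc_subset_Icc_right h)) le_rfl

namespace NSFlow

variable {μ κ R cv K : ℝ} {v u θ vx ux θx uxx θxx : ℝ → ℝ → ℝ}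

lemma slab_pressure (F : NSFlow μ κ R cv K v u θ vx ux θx uxx θxx) {T : ℝ} (hT : 0 < T) :
    MemLp (fun z : ℝ × ℝ => θ z.1 z.2 / v z.1 z.2 - 1) 2 (slab T) := by
  obtain ⟨h1, -, h3, -⟩ := F.slab_base hT
  refine (F.slab_div (f := fun x t => (θ x t - 1) - (v x t - 1))
    ((F.mθ.sub_const 1).sub (F.mv.sub_const 1)) (h3.sub h1)).ae_eq (ae_of_all _ fun z => ?_)
  have := (F.vpos z.1 z.2).ne'
  simp only
  field_simp
  ring

/-- Balance law: if `∂ₜ f = Q u_t + P c_v θ_t + N`, then the increment of `∫ f` is given by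
testing the momentum equation with `Q` and the temperature equation with `P`. -/
lemma balance (F : NSFlow μ κ R cv K v u θ vx ux θx uxx θxx) (hcv : 0 < cv) {T : ℝ} (hT : 0 < T)
    {f P Px Q Qx N : ℝ → ℝ → ℝ}
    (hP : ∀ x t, HasDerivAt (fun y => P y t) (Px x t) x)
    (hQ : ∀ x t, HasDerivAt (fun y => Q y t) (Qx x t) x)
    (mP : Measurable fun z : ℝ × ℝ => P z.1 z.2)
    (mPx : Measurable fun z : ℝ × ℝ => Px z.1 z.2)
    (mQ : Measurable fun z : ℝ × ℝ => Q z.1 z.2)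
    (mQx : Measurable fun z : ℝ × ℝ => Qx z.1 z.2)
    (lP : MemLp (fun z : ℝ × ℝ => P z.1 z.2) 2 (slab T))
    (lPx : MemLp (fun z : ℝ × ℝ => Px z.1 z.2) 2 (slab T))
    (lQ : MemLp (fun z : ℝ × ℝ => Q z.1 z.2) 2 (slab T))
    (lQx : MemLp (fun z : ℝ × ℝ => Qx z.1 z.2) 2 (slab T))
    (lN : Integrable (fun z : ℝ × ℝ => N z.1 z.2) (slab T))
    (hc : ∀ x, Continuous fun t => f x t)
    (hf : ∀ x t, 0 < t → ∀ ut θt : ℝ, HasDerivAt (fun s => u x s) ut t →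
      HasDerivAt (fun s => θ x s) θt t →
      HasDerivAt (fun s => f x s) (Q x t * ut + P x t * (cv * θt) + N x t) t)
    (h0 : Integrable fun x => f x 0) (h1 : Integrable fun x => f x T) :
    Integrable (fun z : ℝ × ℝ =>
      -(Qx z.1 z.2 * (μ * (ux z.1 z.2 / v z.1 z.2) - R * (θ z.1 z.2 / v z.1 z.2 - 1)))
        - κ * (Px z.1 z.2 * (θx z.1 z.2 / v z.1 z.2))
        + P z.1 z.2 * (μ * (ux z.1 z.2 ^ 2 / v z.1 z.2)
            - R * (θ z.1 z.2 / v z.1 z.2 * ux z.1 z.2)) + N z.1 z.2) (slab T) ∧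
    (∫ x, f x T) - ∫ x, f x 0 = ∫ z,
      (-(Qx z.1 z.2 * (μ * (ux z.1 z.2 / v z.1 z.2) - R * (θ z.1 z.2 / v z.1 z.2 - 1)))
        - κ * (Px z.1 z.2 * (θx z.1 z.2 / v z.1 z.2))
        + P z.1 z.2 * (μ * (ux z.1 z.2 ^ 2 / v z.1 z.2)
            - R * (θ z.1 z.2 / v z.1 z.2 * ux z.1 z.2)) + N z.1 z.2) ∂(slab T) := by
  obtain ⟨s1, s2, s3, s4, s5⟩ := F.slab_second hT
  obtain ⟨b1, b2, b3, b4, b5, b6⟩ := F.slab_base hT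
  have sp := F.slab_pressure hT
  have dux := F.slab_div F.mux b5
  have dθx := F.slab_div F.mθx b6
  have flux : MemLp (fun z : ℝ × ℝ =>
      μ * (ux z.1 z.2 / v z.1 z.2) - R * (θ z.1 z.2 / v z.1 z.2 - 1)) 2 (slab T) :=
    (dux.const_mul μ).sub (sp.const_mul R)
  have fluxx : MemLp (fun z : ℝ × ℝ =>
      μ * dquot v vx ux uxx z.1 z.2 - R * dquot v vx θ θx z.1 z.2) 2 (slab T) :=
    (s1.const_mul μ).sub (s3.const_mul R)
  have src : MemLp (fun z : ℝ × ℝ => μ * (ux z.1 z.2 ^ 2 / v z.1 z.2)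
            - R * (θ z.1 z.2 / v z.1 z.2 * ux z.1 z.2)) 2 (slab T) :=
    (s4.const_mul μ).sub (s5.const_mul R)
  have e1 := ibp_slab (T := T) (f := Q) (fx := Qx)
    (g := fun x t => μ * (ux x t / v x t) - R * (θ x t / v x t - 1))
    (gx := fun x t => μ * dquot v vx ux uxx x t - R * dquot v vx θ θx x t)
    hQ (fun x t => ((hasDerivAt_dquot (F.vpos x t).ne' (F.dv x t) (F.dux x t)).const_mul μ).sub
      (((hasDerivAt_dquot (F.vpos x t).ne' (F.dv x t) (F.dθ x t)).sub_const 1).const_mul R))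
    mQ mQx (((F.mux.div F.mv).const_mul μ).sub (((F.mθ.div F.mv).sub_const 1).const_mul R))
    (((F.m_dquot F.mux F.muxx).const_mul μ).sub ((F.m_dquot F.mθ F.mθx).const_mul R))
    lQ lQx flux fluxx
  have e2 := ibp_slab (T := T) (f := P) (fx := Px)
    (g := fun x t => θx x t / v x t) (gx := fun x t => dquot v vx θx θxx x t)
    hP (fun x t => hasDerivAt_dquot (F.vpos x t).ne' (F.dv x t) (F.dθx x t))
    mP mPx (F.mθx.div F.mv) (F.m_dquot F.mθx F.mθxx) lP lPx dθx s2
  have j1 := memLp_two_mul lQ fluxx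
  have j2 := (memLp_two_mul lP s2).const_mul κ
  have j3 := memLp_two_mul lP src
  have k1 := (memLp_two_mul lQx flux).neg
  have k2 := (memLp_two_mul lPx dθx).const_mul κ
  have e3 := ftc_slab hT (f := f) (ft := fun x t =>
      Q x t * (μ * dquot v vx ux uxx x t - R * dquot v vx θ θx x t)
        + κ * (P x t * dquot v vx θx θxx x t)
        + P x t * (μ * (ux x t ^ 2 / v x t) - R * (θ x t / v x t * ux x t)) + N x t)
    (fun x => (hc x).continuousOn)
    (fun x t ht => (hf x t ht.1 _ _ (F.tu x t ht.1) (F.tθ x t ht.1)).congr_deriv (by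
      rw [mul_div_cancel₀ _ hcv.ne']; ring))
    (((j1.add j2).add j3).add lN) h0 h1
  refine ⟨((k1.sub k2).add j3).add lN, ?_⟩
  rw [e3]
  have a1 := integral_add ((j1.add j2).add j3) lN
  have a2 := integral_add (j1.add j2) j3
  have a3 := integral_add j1 j2
  have c1 := integral_add ((k1.sub k2).add j3) lN
  have c2 := integral_add (k1.sub k2) j3
  have c3 := integral_sub k1 k2
  rw [integral_const_mul] at a3 c3
  simp only [Pi.neg_apply, integral_neg, Pi.add_apply, Pi.sub_apply] at a1 a2 a3 c1 c2 c3
  rw [a1, a2, a3, c1, c2, c3, e1, e2]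
  ring

end NSFlow

/-! ### Energy and entropy -/

/-- The regularised thermal relative entropy, with `H' = (s - 1) / (s + ε)`. -/
noncomputable def relEnt (ε s : ℝ) : ℝ := s - 1 - (1 + ε) * Real.log ((s + ε) / (1 + ε))

lemma relEnt_eq {ε s : ℝ} (hε : 0 < ε) :
    relEnt ε s = (1 + ε) * ((s + ε) / (1 + ε) - 1 - Real.log ((s + ε) / (1 + ε))) := by
  have : (1 + ε) ≠ 0 := by positivity
  unfold relEnt; field_simp; ring

lemma relEnt_nonneg {ε s : ℝ} (hε : 0 < ε) (hs : 0 < s) : 0 ≤ relEnt ε s := by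
  rw [relEnt_eq hε]
  have h : 0 < (s + ε) / (1 + ε) := by positivity
  have := Real.log_le_sub_one_of_pos h
  exact mul_nonneg (by positivity) (by linarith)

lemma relEnt_le {ε s : ℝ} (hε : 0 < ε) (hs : 0 < s) : relEnt ε s ≤ (s - 1) ^ 2 / (s + ε) := by
  have h : 0 < (s + ε) / (1 + ε) := by positivity
  have := Real.one_sub_inv_le_log_of_pos h
  rw [inv_div] at this
  have e : (s - 1) ^ 2 / (s + ε) = s - 1 - (1 + ε) * (1 - (1 + ε) / (s + ε)) := by
    have : s + ε ≠ 0 := by positivity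
    field_simp; ring
  rw [e, relEnt]
  have := mul_le_mul_of_nonneg_left this (by positivity : (0:ℝ) ≤ 1 + ε)
  linarith

lemma le_relEnt {ε s : ℝ} (hε : 0 < ε) (hε1 : ε ≤ 1) (hs : 3 / 2 ≤ s) :
    s ≤ 100 * relEnt ε s := by
  set a := (s + ε) / (1 + ε) with ha
  have ha0 : 5 / 4 ≤ a := by
    rw [ha, le_div_iff₀ (by positivity)]; linarith
  have e : s + ε = (1 + ε) * a := by rw [ha]; field_simp
  obtain ⟨r, hr0, hr⟩ : ∃ r : ℝ, 0 < r ∧ a = r ^ 2 :=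
    ⟨√a, Real.sqrt_pos.2 (by linarith), (Real.sq_sqrt (by linarith)).symm⟩
  have hl : Real.log a ≤ 2 * (r - 1) := by
    rw [hr, Real.log_pow]; push_cast
    linarith [Real.log_le_sub_one_of_pos hr0]
  have hr1 : 10 / 9 ≤ r := by nlinarith
  have h2 : a ≤ 100 * (a - 1 - Real.log a) := by
    have : (r / 10) ^ 2 ≤ (r - 1) ^ 2 := pow_le_pow_left₀ (by positivity) (by linarith) 2
    nlinarith
  rw [relEnt_eq hε, ← ha]
  have := mul_le_mul_of_nonneg_left h2 (by positivity : (0:ℝ) ≤ 1 + ε)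
  nlinarith

lemma hasDerivAt_relEnt {ε s : ℝ} (hε : 0 < ε) (hs : 0 < s) :
    HasDerivAt (relEnt ε) ((s - 1) / (s + ε)) s := by
  have h1 : (0:ℝ) < 1 + ε := by positivity
  have h2 : 0 < s + ε := by positivity
  have := ((((hasDerivAt_id s).add_const ε).div_const (1 + ε)).log
    (div_pos h2 h1).ne').const_mul (1 + ε)
  refine (((hasDerivAt_id s).sub_const 1).sub this).congr_deriv ?_
  simp only [id]
  field_simp
  ring

/-- The dissipation rate of the regularised entropy, up to constants. -/
noncomputable def disRate (ε : ℝ) (θ θx ux : ℝ → ℝ → ℝ) (x t : ℝ) : ℝ :=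
  θx x t ^ 2 / (θ x t + ε) ^ 2 + ux x t ^ 2 / (θ x t + ε)

namespace NSFlow

variable {μ κ R cv M m K : ℝ} {v u θ vx ux θx uxx θxx : ℝ → ℝ → ℝ}

lemma m_dis (F : NSFlow μ κ R cv K v u θ vx ux θx uxx θxx) (ε : ℝ) :
    Measurable fun z : ℝ × ℝ => disRate ε θ θx ux z.1 z.2 :=
  ((F.mθx.pow_const 2).div ((F.mθ.add_const ε).pow_const 2)).add
    ((F.mux.pow_const 2).div (F.mθ.add_const ε))

lemma dis_nonneg (F : NSFlow μ κ R cv K v u θ vx ux θx uxx θxx) {ε : ℝ} (hε : 0 < ε) (x t : ℝ) :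
    0 ≤ disRate ε θ θx ux x t := by
  have := F.θpos x t
  unfold disRate; positivity

lemma integrable_dis (F : NSFlow μ κ R cv K v u θ vx ux θx uxx θxx) {ε : ℝ} (hε : 0 < ε)
    {T : ℝ} (hT : 0 < T) :
    Integrable (fun z : ℝ × ℝ => disRate ε θ θx ux z.1 z.2) (slab T) := by
  obtain ⟨-, -, -, -, b5, b6⟩ := F.slab_base hT
  refine ((b6.integrable_sq.const_mul (1 / ε ^ 2)).add (b5.integrable_sq.const_mul (1 / ε))).mono'
    (F.m_dis ε).aestronglyMeasurable (ae_of_all _ fun z => ?_)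
  rw [Real.norm_of_nonneg (F.dis_nonneg hε _ _)]
  have := F.θpos z.1 z.2
  simp only [Pi.add_apply, disRate]
  gcongr
  · rw [div_mul_eq_mul_div, one_mul]; gcongr; linarith
  · rw [div_mul_eq_mul_div, one_mul]; gcongr; linarith

lemma integrable_relEnt (F : NSFlow μ κ R cv K v u θ vx ux θx uxx θxx) {ε : ℝ} (hε : 0 < ε)
    {t : ℝ} (ht : 0 ≤ t) : Integrable fun x => relEnt ε (θ x t) := by
  have hm := measurable_slice F.mθ t
  refine ((F.Lθ t ht).integrable_sq.const_mul (1 / ε)).mono' ?_ (ae_of_all _ fun x => ?_)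
  · unfold relEnt
    exact ((hm.sub_const 1).sub ((Real.measurable_log.comp
      ((hm.add_const ε).div_const _)).const_mul _)).aestronglyMeasurable
  · rw [Real.norm_of_nonneg (relEnt_nonneg hε (F.θpos x t))]
    refine (relEnt_le hε (F.θpos x t)).trans ?_
    rw [div_mul_eq_mul_div, one_mul]
    have := F.θpos x t
    gcongr; linarith

lemma integrable_vEnt (F : NSFlow μ κ R cv K v u θ vx ux θx uxx θxx) {t : ℝ} (ht : 0 ≤ t) :
    Integrable (fun x => v x t - 1 - Real.log (v x t)) ∧
    (∀ x, 0 ≤ v x t - 1 - Real.log (v x t)) ∧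
    (∀ x, v x t - 1 - Real.log (v x t) ≤ K * (v x t - 1) ^ 2) := by
  have hm := measurable_slice F.mv t
  have h0 : ∀ x, 0 ≤ v x t - 1 - Real.log (v x t) := fun x => by
    linarith [Real.log_le_sub_one_of_pos (F.vpos x t)]
  have h1 : ∀ x, v x t - 1 - Real.log (v x t) ≤ K * (v x t - 1) ^ 2 := fun x => by
    have hv := F.vpos x t
    have := Real.one_sub_inv_le_log_of_pos hv
    calc v x t - 1 - Real.log (v x t) ≤ v x t - 1 - (1 - (v x t)⁻¹) := by linarith
      _ = 1 / v x t * (v x t - 1) ^ 2 := by field_simp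
      _ ≤ _ := mul_le_mul_of_nonneg_right (F.inv_v_le x t) (sq_nonneg _)
  refine ⟨((F.Lv t ht).integrable_sq.const_mul K).mono'
    ((hm.sub_const 1).sub (Real.measurable_log.comp hm)).aestronglyMeasurable
    (ae_of_all _ fun x => ?_), h0, h1⟩
  rw [Real.norm_of_nonneg (h0 x)]
  exact h1 x

/-- The production terms of the energy balance are dissipative up to an error of order `ε`. -/
lemma energy_pointwise {μ κ R K ε v θ θx ux : ℝ} (hμ : 0 < μ) (hκ : 0 < κ) (hK : 0 < K)
    (hε : 0 < ε) (hθ : 0 < θ) (hv : 0 < v) (hvK : v ≤ K) (hvK' : 1 / v ≤ K) :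
    -(ux * (μ * (ux / v) - R * (θ / v - 1))) - κ * ((1 + ε) * θx / (θ + ε) ^ 2 * (θx / v))
      + (θ - 1) / (θ + ε) * (μ * (ux ^ 2 / v) - R * (θ / v * ux)) + R * (1 - 1 / v) * ux
    ≤ R ^ 2 * K / (2 * μ) * ε * (θ - 1) ^ 2
      - min κ (μ / 2) / K * (θx ^ 2 / (θ + ε) ^ 2 + ux ^ 2 / (θ + ε)) := by
  have hs : 0 < θ + ε := by positivity
  have e : -(ux * (μ * (ux / v) - R * (θ / v - 1))) - κ * ((1 + ε) * θx / (θ + ε) ^ 2 * (θx / v))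
      + (θ - 1) / (θ + ε) * (μ * (ux ^ 2 / v) - R * (θ / v * ux)) + R * (1 - 1 / v) * ux
      = -((1 + ε) * κ * (1 / v)) * (θx ^ 2 / (θ + ε) ^ 2)
        - (1 + 2 * ε) * (μ / 2) * (1 / v) * (ux ^ 2 / (θ + ε))
        + (1 / v) * ((R * ux * ε * (θ - 1) - μ / 2 * ux ^ 2) / (θ + ε)) := by
    field_simp
    ring
  rw [e]
  have hiv : 1 / K ≤ 1 / v := one_div_le_one_div_of_le hv hvK
  have hK0 : 0 < 1 / K := by positivity
  have q1 : min κ (μ / 2) / K ≤ (1 + ε) * κ * (1 / v) := by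
    rw [div_eq_mul_one_div]
    apply mul_le_mul _ hiv hK0.le (by positivity)
    exact (min_le_left _ _).trans (by nlinarith)
  have q2 : min κ (μ / 2) / K ≤ (1 + 2 * ε) * (μ / 2) * (1 / v) := by
    rw [div_eq_mul_one_div]
    apply mul_le_mul _ hiv hK0.le (by positivity)
    exact (min_le_right _ _).trans (by nlinarith)
  have q3 : (R * ux * ε * (θ - 1) - μ / 2 * ux ^ 2) / (θ + ε)
      ≤ R ^ 2 / (2 * μ) * ε * (θ - 1) ^ 2 := by
    rw [div_le_iff₀ hs]
    have h1 : R * ux * ε * (θ - 1) - μ / 2 * ux ^ 2 ≤ R ^ 2 / (2 * μ) * (ε * (θ - 1)) ^ 2 := by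
      have : R ^ 2 / (2 * μ) * (ε * (θ - 1)) ^ 2 - (R * ux * ε * (θ - 1) - μ / 2 * ux ^ 2)
        = (R * (ε * (θ - 1)) - μ * ux) ^ 2 / (2 * μ) := by field_simp; ring
      have h2 : 0 ≤ (R * (ε * (θ - 1)) - μ * ux) ^ 2 / (2 * μ) := by positivity
      linarith
    refine h1.trans ?_
    have h3 : 0 ≤ R ^ 2 / (2 * μ) * ε * (θ - 1) ^ 2 * θ := by positivity
    nlinarith
  have q4 : (1 / v) * ((R * ux * ε * (θ - 1) - μ / 2 * ux ^ 2) / (θ + ε))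
      ≤ R ^ 2 * K / (2 * μ) * ε * (θ - 1) ^ 2 := by
    calc _ ≤ (1 / v) * (R ^ 2 / (2 * μ) * ε * (θ - 1) ^ 2) :=
          mul_le_mul_of_nonneg_left q3 (by positivity)
      _ ≤ K * (R ^ 2 / (2 * μ) * ε * (θ - 1) ^ 2) :=
          mul_le_mul_of_nonneg_right hvK' (by positivity)
      _ = _ := by ring
  have q5 := mul_le_mul_of_nonneg_right q1 (by positivity : 0 ≤ θx ^ 2 / (θ + ε) ^ 2)
  have q6 := mul_le_mul_of_nonneg_right q2 (by positivity : 0 ≤ ux ^ 2 / (θ + ε))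
  linarith

/-- Kinetic energy plus the relative entropies of specific volume and (regularised) temperature. -/
noncomputable def energyDensity (R cv ε : ℝ) (v u θ : ℝ → ℝ → ℝ) (x t : ℝ) : ℝ :=
  u x t ^ 2 / 2 + R * (v x t - 1 - Real.log (v x t)) + cv * relEnt ε (θ x t)

lemma energy_ineq (F : NSFlow μ κ R cv K v u θ vx ux θx uxx θxx)
    (hp : PosParams μ κ R cv M m K) {ε : ℝ} (hε : 0 < ε) {T : ℝ} (hT : 0 < T) :
    (∫ x, energyDensity R cv ε v u θ x T)
      + min κ (μ / 2) / K * (∫ z, disRate ε θ θx ux z.1 z.2 ∂(slab T))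
    ≤ (∫ x, energyDensity R cv ε v u θ x 0)
      + R ^ 2 * K / (2 * μ) * (ε * ∫ z, (θ z.1 z.2 - 1) ^ 2 ∂(slab T)) := by
  obtain ⟨b1, b2, b3, b4, b5, b6⟩ := F.slab_base hT
  have hi : ∀ t, 0 ≤ t → Integrable fun x => energyDensity R cv ε v u θ x t := fun t ht =>
    (((F.Lu t ht).integrable_sq.div_const 2).add
      ((F.integrable_vEnt ht).1.const_mul R)).add ((F.integrable_relEnt hε ht).const_mul cv)
  have hcθ : ∀ x, Continuous fun t => relEnt ε (θ x t) := fun x => by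
    rw [continuous_iff_continuousAt]
    intro t
    exact (hasDerivAt_relEnt hε (F.θpos x t)).continuousAt.comp (F.cθ_t x).continuousAt
  obtain ⟨g1, g2⟩ := F.balance hp.cv hT (f := energyDensity R cv ε v u θ) (Q := u) (Qx := ux)
    (P := fun x t => (θ x t - 1) / (θ x t + ε))
    (Px := fun x t => (1 + ε) * θx x t / (θ x t + ε) ^ 2)
    (N := fun x t => R * (1 - 1 / v x t) * ux x t)
    (fun x t => by
      have : θ x t + ε ≠ 0 := by linarith [F.θpos x t] |> ne_of_gt
      refine (((F.dθ x t).sub_const 1).fun_div ((F.dθ x t).add_const ε) this).congr_deriv ?_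
      congr 1; ring)
    F.du
    ((F.mθ.sub_const 1).div (F.mθ.add_const ε))
    ((F.mθx.const_mul (1 + ε)).div ((F.mθ.add_const ε).pow_const 2))
    F.mu F.mux
    (MemLp.of_bdd (C := 1 / ε) b3 ((F.mθ.sub_const 1).div (F.mθ.add_const ε))
      (ae_of_all _ fun z => by
        have := F.θpos z.1 z.2
        rw [abs_div, abs_of_pos (by positivity : 0 < θ z.1 z.2 + ε), div_mul_eq_mul_div, one_mul]
        gcongr; linarith))
    (MemLp.of_bdd (C := (1 + ε) / ε ^ 2) b6
      ((F.mθx.const_mul (1 + ε)).div ((F.mθ.add_const ε).pow_const 2))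
      (ae_of_all _ fun z => by
        have := F.θpos z.1 z.2
        rw [abs_div, abs_mul, abs_of_pos (by positivity : 0 < (θ z.1 z.2 + ε) ^ 2),
          abs_of_pos (by positivity : 0 < 1 + ε), div_mul_eq_mul_div]
        gcongr; linarith))
    b2 b5
    ((memLp_two_mul (F.slab_div (f := fun x t => v x t - 1) (F.mv.sub_const 1) b1)
      b5).const_mul R |>.congr (ae_of_all _ fun z => by
        have := (F.vpos z.1 z.2).ne'
        simp only; field_simp))
    (fun x => by
      unfold energyDensity
      exact ((((F.cu_t x).pow 2).div_const 2).add (continuous_const.mul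
        (((F.cv_t x).sub continuous_const).sub ((F.cv_t x).log fun t => (F.vpos x t).ne')))).add
        (continuous_const.mul (hcθ x)))
    (fun x t ht ut θt hu hθ => by
      have hvt := F.tv x t ht
      have hv0 := (F.vpos x t).ne'
      have a1 := (hu.fun_pow 2).div_const 2
      have a2 := ((hvt.sub_const 1).sub (hvt.log hv0)).const_mul R
      have a3 := ((hasDerivAt_relEnt hε (F.θpos x t)).comp t hθ).const_mul cv
      refine ((a1.add a2).add a3).congr_deriv ?_
      field_simp
      ring)
    (hi 0 le_rfl) (hi T hT.le)
  have hK : 0 < K := F.Kpos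
  have key := integral_mono g1 (((b3.integrable_sq.const_mul (R ^ 2 * K / (2 * μ) * ε))).sub
      ((F.integrable_dis hε hT).const_mul (min κ (μ / 2) / K))) (fun z =>
    energy_pointwise (R := R) (θx := θx z.1 z.2) (ux := ux z.1 z.2) hp.μ hp.κ hK hε
      (F.θpos z.1 z.2) (F.vpos z.1 z.2) (F.vK z.1 z.2).2 (F.inv_v_le z.1 z.2))
  rw [← g2] at key
  have a := integral_sub ((b3.integrable_sq.const_mul (R ^ 2 * K / (2 * μ) * ε)))
      ((F.integrable_dis hε hT).const_mul (min κ (μ / 2) / K))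
  rw [integral_const_mul, integral_const_mul] at a
  simp only [Pi.sub_apply] at key
  rw [a] at key
  linarith

end NSFlow

/-- The basic energy estimate, uniform in the regularisation parameter. -/
lemma energy_estimate {μ κ R cv M m K : ℝ} (hp : PosParams μ κ R cv M m K) :
    ∃ E : ℝ, 1 ≤ E ∧ ∀ {T ε : ℝ} {v u θ vx ux θx uxx θxx : ℝ → ℝ → ℝ},
      NSData μ κ R cv M m K T ε v u θ vx ux θx uxx θxx →
      (∀ t ∈ Icc (0 : ℝ) T, ∫ x, u x t ^ 2 ≤ E) ∧
      (∀ t ∈ Icc (0 : ℝ) T, ∫ x, relEnt ε (θ x t) ≤ E) ∧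
      ∫ z, disRate ε θ θx ux z.1 z.2 ∂(slab T) ≤ E := by
  set B := M / 2 + R * K * M + cv * (M / m) + R ^ 2 * K / (2 * μ) with hB
  have h1 := hp.μ
  have h2 := hp.κ
  have h3 := hp.R
  have h4 := hp.cv
  have h5 := hp.M
  have h6 := hp.m
  have h7 : 0 < K := one_pos.trans_le hp.K
  have hB0 : 0 < B := by positivity
  have hc : 0 < min κ (μ / 2) / K := div_pos (lt_min h2 (by positivity)) h7
  refine ⟨1 + 2 * B + B / cv + B / (min κ (μ / 2) / K), ?_, ?_⟩
  · have := div_pos hB0 h4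
    have := div_pos hB0 hc
    linarith
  intro T ε v u θ vx ux θx uxx θxx D
  have F := D.toNSFlow
  have p1 := div_pos hB0 h4
  have p2 := div_pos hB0 hc
  obtain ⟨b1, b2, b3, b4, b5, b6⟩ := F.slab_base D.hT
  have hn : ∀ t, 0 ≤ t → 0 ≤ ∫ x, relEnt ε (θ x t) := fun t _ =>
    integral_nonneg fun x => relEnt_nonneg D.ε0 (F.θpos x t)
  have hsplit : ∀ t, 0 ≤ t → ∫ x, NSFlow.energyDensity R cv ε v u θ x t =
      (∫ x, u x t ^ 2) / 2 + R * (∫ x, (v x t - 1 - Real.log (v x t)))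
        + cv * ∫ x, relEnt ε (θ x t) := fun t ht => by
    have i1 := (F.Lu t ht).integrable_sq.div_const 2
    have i2 := (F.integrable_vEnt ht).1.const_mul R
    have i3 := (F.integrable_relEnt D.ε0 ht).const_mul cv
    have a1 := integral_add (i1.add i2) i3
    have a2 := integral_add i1 i2
    rw [integral_const_mul] at a1 a2
    rw [integral_div] at a2
    simp only [Pi.add_apply] at a1
    rw [a2] at a1
    exact a1
  have hvn : ∀ t, 0 ≤ t → 0 ≤ ∫ x, (v x t - 1 - Real.log (v x t)) := fun t ht =>
    integral_nonneg (F.integrable_vEnt ht).2.1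
  have hun : ∀ t, 0 ≤ ∫ x, u x t ^ 2 := fun t => integral_nonneg fun x => sq_nonneg _
  have h0 : ∫ x, NSFlow.energyDensity R cv ε v u θ x 0 ≤ M / 2 + R * K * M + cv * (M / m) := by
    rw [hsplit 0 le_rfl]
    have q1 : ∫ x, (v x 0 - 1 - Real.log (v x 0)) ≤ K * M := by
      calc _ ≤ ∫ x, K * (v x 0 - 1) ^ 2 := integral_mono (F.integrable_vEnt le_rfl).1
            ((F.Lv 0 le_rfl).integrable_sq.const_mul K) (F.integrable_vEnt le_rfl).2.2
        _ = K * ∫ x, (v x 0 - 1) ^ 2 := integral_const_mul _ _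
        _ ≤ K * M := by gcongr; exact D.i_v
    have q2 : ∫ x, relEnt ε (θ x 0) ≤ M / m := by
      calc _ ≤ ∫ x, 1 / m * (θ x 0 - 1) ^ 2 := by
            refine integral_mono (F.integrable_relEnt D.ε0 le_rfl)
              ((F.Lθ 0 le_rfl).integrable_sq.const_mul _) fun x => ?_
            refine (relEnt_le D.ε0 (F.θpos x 0)).trans ?_
            rw [div_mul_eq_mul_div, one_mul]
            gcongr
            linarith [D.θm x, D.ε0]
        _ = 1 / m * ∫ x, (θ x 0 - 1) ^ 2 := integral_const_mul _ _
        _ ≤ 1 / m * M := by gcongr; exact D.i_θ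
        _ = M / m := by ring
    have q3 := mul_le_mul_of_nonneg_left q1 h3.le
    have q4 := mul_le_mul_of_nonneg_left q2 h4.le
    linarith [D.i_u]
  have hθT : ε * ∫ z, (θ z.1 z.2 - 1) ^ 2 ∂(slab T) ≤ 1 := by
    refine le_trans ?_ D.hε
    refine mul_le_mul_of_nonneg_left ?_ D.ε0.le
    exact integral_mono b3.integrable_sq (b3.integrable_sq.add b4.integrable_sq)
      fun z => by simp only; linarith [sq_nonneg (vx z.1 z.2)]
  have hen : ∀ t ∈ Icc (0 : ℝ) T, ∫ x, NSFlow.energyDensity R cv ε v u θ x t ≤ B ∧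
      (t = T → min κ (μ / 2) / K * (∫ z, disRate ε θ θx ux z.1 z.2 ∂(slab T)) ≤ B) := by
    intro t ht
    rcases ht.1.eq_or_lt with h | h
    · subst h
      refine ⟨h0.trans (by rw [hB]; have : 0 < R ^ 2 * K / (2 * μ) := by positivity
                           linarith), fun h => absurd h D.hT.ne⟩
    have q := F.energy_ineq hp D.ε0 h
    have q1 : ε * ∫ z, (θ z.1 z.2 - 1) ^ 2 ∂(slab t) ≤ 1 := by
      refine le_trans ?_ hθT
      exact mul_le_mul_of_nonneg_left (integral_mono_measure (slab_le ht.2)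
        (ae_of_all _ fun z => sq_nonneg _) b3.integrable_sq) D.ε0.le
    have q2 : 0 ≤ ∫ z, disRate ε θ θx ux z.1 z.2 ∂(slab t) :=
      integral_nonneg fun z => F.dis_nonneg D.ε0 _ _
    have q3 := mul_le_mul_of_nonneg_left q1 (by positivity : 0 ≤ R ^ 2 * K / (2 * μ))
    have q4 := mul_nonneg hc.le q2
    refine ⟨by linarith, fun e => ?_⟩
    subst e
    have : 0 ≤ ∫ x, NSFlow.energyDensity R cv ε v u θ x t := by
      rw [hsplit t h.le]
      have := hvn t h.le
      have := hn t h.le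
      have := hun t
      positivity
    linarith
  refine ⟨fun t ht => ?_, fun t ht => ?_, ?_⟩
  · have := (hen t ht).1
    rw [hsplit t ht.1] at this
    have := mul_nonneg h3.le (hvn t ht.1)
    have := mul_nonneg h4.le (hn t ht.1)
    linarith
  · have := (hen t ht).1
    rw [hsplit t ht.1] at this
    have := mul_nonneg h3.le (hvn t ht.1)
    have := hun t
    have : ∫ x, relEnt ε (θ x t) ≤ B / cv := by
      rw [le_div_iff₀ h4]; linarith
    linarith
  · have := (hen T ⟨D.hT.le, le_rfl⟩).2 rfl
    have : ∫ z, disRate ε θ θx ux z.1 z.2 ∂(slab T) ≤ B / (min κ (μ / 2) / K) := by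
      rw [le_div_iff₀ hc]; linarith
    linarith

/-! ### Large temperatures and the dissipation of kinetic energy -/

/-- Composition with the positive part preserves `C¹` when value and slope vanish at `0`. -/
lemma hasDerivAt_comp_pos {f f' : ℝ → ℝ} (h : ∀ s, HasDerivAt f (f' s) s) (h0 : f 0 = 0)
    (h1 : f' 0 = 0) (s : ℝ) : HasDerivAt (fun r => f (max r 0)) (f' (max s 0)) s := by
  rcases lt_trichotomy s 0 with hs | hs | hs
  · rw [max_eq_right hs.le, h1]
    refine (hasDerivAt_const s (0 : ℝ)).congr_of_eventuallyEq ?_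
    filter_upwards [Iio_mem_nhds hs] with r hr
    rw [max_eq_right (le_of_lt hr), h0]
  · subst hs
    rw [max_self, h1]
    have h2 := h 0
    rw [h1] at h2
    rw [hasDerivAt_iff_isLittleO] at h2 ⊢
    simp only [sub_zero, smul_zero, max_self, h0] at h2 ⊢
    refine (Asymptotics.IsBigO.of_bound 1 (Eventually.of_forall fun r => ?_)).trans_isLittleO h2
    rw [one_mul]
    rcases le_total r 0 with hr | hr
    · rw [max_eq_right hr, h0, norm_zero]; exact norm_nonneg _
    · rw [max_eq_left hr]
  · rw [max_eq_left hs.le]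
    refine (h s).congr_of_eventuallyEq ?_
    filter_upwards [Ioi_mem_nhds hs] with r hr
    rw [max_eq_left (le_of_lt hr)]

/-- Large temperatures are controlled by the entropy dissipation: `(θ - 3/2)₊²` is estimated by the
integral of its derivative, and the resulting power of `S = sup θ` is absorbed on the left, which
is why the parameter `l` is proportional to `S`. -/
lemma sup_temperature {θ θ' : ℝ → ℝ} {ε E : ℝ} (hε : 0 < ε) (hε1 : ε ≤ 1) (hE : 1 ≤ E)
    (hd : ∀ x, HasDerivAt θ (θ' x) x) (hpos : ∀ x, 0 < θ x)
    (h1 : MemLp (fun x => θ x - 1) 2) (h2 : MemLp θ' 2)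
    (hi : Integrable fun x => relEnt ε (θ x)) (hb : ∫ x, relEnt ε (θ x) ≤ E)
    (hV : Integrable fun x => θ' x ^ 2 / (θ x + ε) ^ 2) {x₀ : ℝ} (hx₀ : 2 ≤ θ x₀) :
    θ x₀ ≤ 409600 * E * ∫ x, θ' x ^ 2 / (θ x + ε) ^ 2 := by
  set V := ∫ x, θ' x ^ 2 / (θ x + ε) ^ 2 with hVdef
  have hV0 : 0 ≤ V := integral_nonneg fun x => by positivity
  have hbdd : BddAbove (range θ) := by
    refine ⟨2 + ((1:ℝ) * (∫ y, (θ y - 1) ^ 2) + (1:ℝ)⁻¹ * ∫ y, θ' y ^ 2), ?_⟩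
    rintro _ ⟨x, rfl⟩
    have := sq_le_of_memLp (fun x => (hd x).sub_const 1) h1 h2 one_pos x
    nlinarith [sq_nonneg (θ x - 1 - 1)]
  set S := ⨆ x, θ x with hS
  have hle : ∀ x, θ x ≤ S := fun x => le_ciSup hbdd x
  have hS2 : 2 ≤ S := hx₀.trans (hle x₀)
  set y : ℝ → ℝ := fun x => max (θ x - 3 / 2) 0 with hy
  have hym : ∀ x, |y x| ≤ 1 * |θ x - 1| := fun x => by
    rw [one_mul, abs_of_nonneg (le_max_right _ _)]
    exact max_le (by linarith [le_abs_self (θ x - 1)]) (abs_nonneg _)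
  have hcont : Continuous θ := continuous_iff_continuousAt.2 fun x => (hd x).continuousAt
  have hyc : Continuous y := (hcont.sub continuous_const).max continuous_const
  have hyL : MemLp y 2 := MemLp.of_bdd h1 hyc.measurable (ae_of_all _ hym)
  have hqd : ∀ x, HasDerivAt (fun x => y x ^ 2) (2 * (y x * θ' x)) x := fun x => by
    have := (hasDerivAt_comp_pos (f := fun r => r ^ 2) (f' := fun r => 2 * r)
      (fun s => by simpa using hasDerivAt_pow 2 s) (by simp) (by simp) (θ x - 3 / 2)).comp x
      ((hd x).sub_const (3 / 2))
    exact this.congr_deriv (by simp only [hy]; ring)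
  have hpt : ∀ x, y x ^ 2 * (θ x + ε) ^ 2 ≤ 400 * S ^ 3 * relEnt ε (θ x) := fun x => by
    have hn := relEnt_nonneg hε (hpos x)
    rcases le_total (θ x) (3 / 2) with h | h
    · have : y x = 0 := max_eq_right (by linarith)
      rw [this]
      have : 0 ≤ 400 * S ^ 3 * relEnt ε (θ x) := by positivity
      simpa using this
    · have e : y x = θ x - 3 / 2 := max_eq_left (by linarith)
      have hr := le_relEnt hε hε1 h
      have a1 : y x ^ 2 ≤ θ x ^ 2 := pow_le_pow_left₀ (by rw [e]; linarith) (by rw [e]; linarith) 2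
      have a2 : (θ x + ε) ^ 2 ≤ (2 * θ x) ^ 2 := pow_le_pow_left₀ (by linarith) (by linarith) 2
      have a3 : θ x ^ 3 ≤ S ^ 3 := pow_le_pow_left₀ (hpos x).le (hle x) 3
      have hp := hpos x
      calc y x ^ 2 * (θ x + ε) ^ 2 ≤ θ x ^ 2 * (2 * θ x) ^ 2 :=
            mul_le_mul a1 a2 (sq_nonneg _) (sq_nonneg _)
        _ = 4 * (θ x ^ 3 * θ x) := by ring
        _ ≤ 4 * (S ^ 3 * (100 * relEnt ε (θ x))) := by gcongr
        _ = _ := by ring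
  set l := 12800 * E * S with hl
  have hl0 : 0 < l := by positivity
  have hb2 : ∀ x, y x ^ 2 ≤ l * V + l⁻¹ * (400 * S ^ 3 * E) := fun x => by
    have key := abs_le_integral_abs_deriv hqd hyL.integrable_sq
      ((memLp_two_mul hyL h2).const_mul 2) x
    rw [abs_of_nonneg (sq_nonneg _)] at key
    refine key.trans ?_
    calc ∫ x, |2 * (y x * θ' x)| ≤ ∫ x, (l * (θ' x ^ 2 / (θ x + ε) ^ 2)
          + l⁻¹ * (400 * S ^ 3) * relEnt ε (θ x)) := by
          refine integral_mono ((memLp_two_mul hyL h2).const_mul 2).abs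
            ((hV.const_mul l).add (hi.const_mul _)) fun x => ?_
          have hs : 0 < θ x + ε := by linarith [hpos x]
          have a := mul_le_mul_of_nonneg_left (hpt x) (inv_nonneg.2 hl0.le)
          set b := θ' x / (θ x + ε) with hbdef
          set c := y x * (θ x + ε) with hc
          have e1 : θ' x ^ 2 / (θ x + ε) ^ 2 = b ^ 2 := by rw [hbdef, div_pow]
          have e2 : y x * θ' x = b * c := by rw [hbdef, hc]; field_simp
          have e3 : y x ^ 2 * (θ x + ε) ^ 2 = c ^ 2 := by rw [hc]; ring
          simp only
          rw [e1, e2]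
          rw [e3] at a
          have e4 : l * b ^ 2 + l⁻¹ * c ^ 2 - 2 * |b * c| = l⁻¹ * (l * |b| - |c|) ^ 2 := by
            rw [abs_mul, ← sq_abs b, ← sq_abs c]; field_simp; ring
          have e5 : 0 ≤ l⁻¹ * (l * |b| - |c|) ^ 2 := by positivity
          rw [abs_mul, abs_two]
          linarith
      _ = l * V + l⁻¹ * (400 * S ^ 3) * ∫ x, relEnt ε (θ x) := by
          rw [integral_add (hV.const_mul l) (hi.const_mul _), integral_const_mul,
            integral_const_mul]
      _ ≤ l * V + l⁻¹ * (400 * S ^ 3) * E := by gcongr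
      _ = _ := by ring
  set A := 16 * (l * V + l⁻¹ * (400 * S ^ 3 * E)) with hA
  have hbig : ∀ x, 2 ≤ θ x → θ x ^ 2 ≤ A := fun x hx => by
    have e : y x = θ x - 3 / 2 := max_eq_left (by linarith)
    have := hb2 x
    have h3 : (θ x / 4) ^ 2 ≤ y x ^ 2 := pow_le_pow_left₀ (by linarith) (by rw [e]; linarith) 2
    rw [hA]; nlinarith
  have hall : ∀ x, θ x ^ 2 ≤ A := fun x => by
    rcases le_total 2 (θ x) with h | h
    · exact hbig x h
    · exact (pow_le_pow_left₀ (hpos x).le (h.trans hx₀) 2).trans (hbig x₀ hx₀)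
  have hSA : S ^ 2 ≤ A := by
    have hA0 : 0 ≤ A := (sq_nonneg _).trans (hall x₀)
    have : S ≤ √A := ciSup_le fun x => Real.le_sqrt_of_sq_le (hall x)
    calc S ^ 2 ≤ √A ^ 2 := pow_le_pow_left₀ (by linarith) this 2
      _ = A := Real.sq_sqrt hA0
  have hS0 : 0 < S := by linarith
  have hE0 : 0 < E := by linarith
  have e : A = 16 * 12800 * E * S * V + S ^ 2 / 2 := by
    rw [hA, hl]; field_simp; ring
  rw [e] at hSA
  refine (hle x₀).trans ?_
  have : S * S ≤ S * (409600 * E * V) := by nlinarith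
  exact le_of_mul_le_mul_left this hS0

namespace NSFlow

variable {μ κ R cv M m K : ℝ} {v u θ vx ux θx uxx θxx : ℝ → ℝ → ℝ}

/-- `sup_temperature` along the flow. -/
lemma large_temp (F : NSFlow μ κ R cv K v u θ vx ux θx uxx θxx) {ε E t : ℝ} (hε : 0 < ε)
    (hε1 : ε ≤ 1) (hE : 1 ≤ E) (ht : 0 ≤ t) (hb : ∫ x, relEnt ε (θ x t) ≤ E) {x : ℝ}
    (hx : 2 ≤ θ x t) (hi : Integrable fun y => disRate ε θ θx ux y t) :
    θ x t ≤ 409600 * E * ∫ y, disRate ε θ θx ux y t := by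
  have hd : ∀ y, θx y t ^ 2 / (θ y t + ε) ^ 2 ≤ disRate ε θ θx ux y t := fun y => by
    unfold disRate
    have := F.θpos y t
    have : 0 ≤ ux y t ^ 2 / (θ y t + ε) := by positivity
    linarith
  have hV : Integrable fun y => θx y t ^ 2 / (θ y t + ε) ^ 2 := by
    refine hi.mono' (((measurable_slice F.mθx t).pow_const 2).div
      (((measurable_slice F.mθ t).add_const ε).pow_const 2)).aestronglyMeasurable
      (ae_of_all _ fun y => ?_)
    rw [Real.norm_of_nonneg (by positivity)]
    exact hd y
  refine (sup_temperature hε hε1 hE (fun y => F.dθ y t) (fun y => F.θpos y t) (F.Lθ t ht)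
    (F.Lθx t ht) (F.integrable_relEnt hε ht) hb hV hx).trans ?_
  exact mul_le_mul_of_nonneg_left (integral_mono hV hi hd) (by positivity)

/-- Space-time bound for `θ k` on the set `θ ≥ 2`, where `k` is bounded in `L¹(ℝ)`. -/
lemma large_temp_slab (F : NSFlow μ κ R cv K v u θ vx ux θx uxx θxx) {ε E E' T : ℝ} (hε : 0 < ε)
    (hε1 : ε ≤ 1) (hE : 1 ≤ E) (hE' : 0 ≤ E') (hT : 0 < T)
    (hb : ∀ t ∈ Icc (0 : ℝ) T, ∫ x, relEnt ε (θ x t) ≤ E)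
    (hD : ∫ z, disRate ε θ θx ux z.1 z.2 ∂(slab T) ≤ E)
    {h k : ℝ → ℝ → ℝ} (mh : Measurable fun z : ℝ × ℝ => h z.1 z.2) (h0 : ∀ x t, 0 ≤ h x t)
    (hk0 : ∀ x t, 0 ≤ k x t)
    (hk : ∀ t ∈ Icc (0 : ℝ) T, Integrable (fun x => k x t))
    (hkE : ∀ t ∈ Icc (0 : ℝ) T, ∫ x, k x t ≤ E')
    (hle : ∀ x t, 2 ≤ θ x t → h x t ≤ θ x t * k x t) (hz : ∀ x t, θ x t < 2 → h x t = 0) :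
    Integrable (fun z : ℝ × ℝ => h z.1 z.2) (slab T) ∧
      ∫ z, h z.1 z.2 ∂(slab T) ≤ 409600 * E * E' * E := by
  have s := slice_bound (T := T) (E := 409600 * E * E') (h := h)
    (k := fun x t => 409600 * E * k x t) (β := disRate ε θ θx ux) mh h0
    (fun t ht => (hk t ht).const_mul _)
    (fun t ht => by
      rw [integral_const_mul]
      exact mul_le_mul_of_nonneg_left (hkE t ht) (by positivity))
    (fun x t => F.dis_nonneg hε x t) (F.integrable_dis hε hT) (fun t ht hi x => by
      have n : 0 ≤ ∫ y, disRate ε θ θx ux y t := integral_nonneg fun y => F.dis_nonneg hε y t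
      rcases le_or_gt 2 (θ x t) with hx | hx
      · have a := F.large_temp hε hε1 hE ht.1 (hb t ht) hx hi
        calc h x t ≤ θ x t * k x t := hle x t hx
          _ ≤ _ := mul_le_mul_of_nonneg_right a (hk0 x t)
          _ = _ := by ring
      · rw [hz x t hx]
        have := hk0 x t
        positivity)
  exact ⟨s.1, s.2.trans (mul_le_mul_of_nonneg_left hD (by positivity))⟩

end NSFlow

lemma hasDerivAt_sub_arctan (s : ℝ) :
    HasDerivAt (fun r => r - Real.arctan r) (s ^ 2 / (1 + s ^ 2)) s := by
  refine ((hasDerivAt_id s).sub (Real.hasDerivAt_arctan s)).congr_deriv ?_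
  have : 1 + s ^ 2 ≠ 0 := by positivity
  field_simp; ring

lemma hasDerivAt_sq_div (s : ℝ) :
    HasDerivAt (fun r : ℝ => r ^ 2 / (1 + r ^ 2)) (2 * s / (1 + s ^ 2) ^ 2) s := by
  have h : HasDerivAt (fun r : ℝ => r ^ 2) (2 * s) s := by simpa using hasDerivAt_pow 2 s
  refine (h.fun_div (h.const_add 1) (by positivity)).congr_deriv ?_
  congr 1; ring

lemma arctan_le_self {s : ℝ} (hs : 0 ≤ s) : Real.arctan s ≤ s := by
  have hm : Monotone fun r : ℝ => r - Real.arctan r :=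
    monotone_of_hasDerivAt_nonneg (fun r => hasDerivAt_sub_arctan r) fun r => by
      simp only [Pi.zero_apply]; positivity
  have := hm hs
  simp only [Real.arctan_zero, sub_zero] at this
  linarith

/-- Production terms of the temperature equation tested with `y² / (1 + y²)`, `y = (θ - 2)₊`: they
control `u_x²` up to the entropy dissipation and `θ²` on the set of large temperatures. -/
lemma ux_pointwise {μ κ R K ε v θ θx ux : ℝ} (hμ : 0 < μ) (hκ : 0 < κ) (hK : 0 < K)
    (hε : 0 < ε) (hε1 : ε ≤ 1) (hθ : 0 < θ) (hv : 0 < v) (hvK : v ≤ K) (hvK' : 1 / v ≤ K) :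
    μ / (4 * K) * ux ^ 2 - (18 * κ * K + μ / K) * (θx ^ 2 / (θ + ε) ^ 2 + ux ^ 2 / (θ + ε))
      - R ^ 2 * K / (2 * μ) * (if 2 ≤ θ then θ ^ 2 else 0)
    ≤ -(0 * (μ * (ux / v) - R * (θ / v - 1)))
      - κ * (2 * max (θ - 2) 0 / (1 + max (θ - 2) 0 ^ 2) ^ 2 * θx * (θx / v))
      + max (θ - 2) 0 ^ 2 / (1 + max (θ - 2) 0 ^ 2)
        * (μ * (ux ^ 2 / v) - R * (θ / v * ux)) + 0 := by
  set y := max (θ - 2) 0 with hy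
  have hy0 : 0 ≤ y := le_max_right _ _
  have hs : 0 < θ + ε := by positivity
  have hiv : 1 / K ≤ 1 / v := one_div_le_one_div_of_le hv hvK
  set φ := y ^ 2 / (1 + y ^ 2) with hφ
  have hφ0 : 0 ≤ φ := by positivity
  have hφ1 : φ ≤ 1 := by rw [hφ, div_le_one (by positivity)]; linarith
  have hv0 : 0 < 1 / v := by positivity
  -- the conduction term
  have q1 : 2 * y / (1 + y ^ 2) ^ 2 * (θ + ε) ^ 2 ≤ 18 := by
    rw [div_mul_eq_mul_div, div_le_iff₀ (by positivity)]
    have h1 : θ + ε ≤ y + 3 := by linarith [le_max_left (θ - 2) 0]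
    have h2 : (θ + ε) ^ 2 ≤ (y + 3) ^ 2 := pow_le_pow_left₀ hs.le h1 2
    have h3 : (y + 3) ^ 2 ≤ 18 * (1 + y ^ 2) := by nlinarith [sq_nonneg (y - 3)]
    have h4 : 2 * y ≤ 1 + y ^ 2 := by nlinarith [sq_nonneg (y - 1)]
    calc 2 * y * (θ + ε) ^ 2 ≤ (1 + y ^ 2) * (18 * (1 + y ^ 2)) :=
          mul_le_mul h4 (h2.trans h3) (by positivity) (by positivity)
      _ = _ := by ring
  have q2 : κ * (2 * y / (1 + y ^ 2) ^ 2 * θx * (θx / v)) ≤ 18 * κ * K * (θx ^ 2 / (θ + ε) ^ 2) := by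
    have e : κ * (2 * y / (1 + y ^ 2) ^ 2 * θx * (θx / v)) =
        κ * (2 * y / (1 + y ^ 2) ^ 2 * (θ + ε) ^ 2) * (1 / v) * (θx ^ 2 / (θ + ε) ^ 2) := by
      field_simp
    rw [e]
    calc _ ≤ κ * 18 * K * (θx ^ 2 / (θ + ε) ^ 2) := by gcongr
      _ = _ := by ring
  -- the pressure term
  have q3 : φ * (μ * (ux ^ 2 / v) - R * (θ / v * ux)) ≥
      μ / (2 * K) * (φ * ux ^ 2) - R ^ 2 * K / (2 * μ) * (φ * θ ^ 2) := by
    have e : φ * (μ * (ux ^ 2 / v) - R * (θ / v * ux)) =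
        φ * (1 / v) * (μ / 2 * ux ^ 2) - φ * (1 / v) * (R ^ 2 / (2 * μ) * θ ^ 2)
        + φ * (1 / v) * ((μ * ux - R * θ) ^ 2 / (2 * μ)) := by
      field_simp; ring
    have a1 : φ * (1 / K) * (μ / 2 * ux ^ 2) ≤ φ * (1 / v) * (μ / 2 * ux ^ 2) := by gcongr
    have a2 : φ * (1 / v) * (R ^ 2 / (2 * μ) * θ ^ 2) ≤ φ * K * (R ^ 2 / (2 * μ) * θ ^ 2) := by
      gcongr
    have a3 : 0 ≤ φ * (1 / v) * ((μ * ux - R * θ) ^ 2 / (2 * μ)) := by positivity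
    have e1 : φ * (1 / K) * (μ / 2 * ux ^ 2) = μ / (2 * K) * (φ * ux ^ 2) := by field_simp
    have e2 : φ * K * (R ^ 2 / (2 * μ) * θ ^ 2) = R ^ 2 * K / (2 * μ) * (φ * θ ^ 2) := by
      field_simp
    rw [e]; linarith
  have q4 : φ * θ ^ 2 ≤ if 2 ≤ θ then θ ^ 2 else 0 := by
    split_ifs with h
    · nlinarith [sq_nonneg θ]
    · have : y = 0 := max_eq_right (by linarith)
      rw [hφ, this]; simp
  have q5 : ux ^ 2 ≤ 2 * (φ * ux ^ 2) + 4 * (ux ^ 2 / (θ + ε)) := by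
    have n1 : 0 ≤ ux ^ 2 / (θ + ε) := by positivity
    rcases le_total 3 θ with h | h
    · have : y = θ - 2 := max_eq_left (by linarith)
      have h1 : 1 / 2 ≤ φ := by
        rw [hφ, div_le_div_iff₀ (by norm_num) (by positivity)]
        nlinarith
      nlinarith [sq_nonneg ux]
    · have h1 : ux ^ 2 = (θ + ε) * (ux ^ 2 / (θ + ε)) := by field_simp
      have h2 : (θ + ε) * (ux ^ 2 / (θ + ε)) ≤ 4 * (ux ^ 2 / (θ + ε)) :=
        mul_le_mul_of_nonneg_right (by linarith) n1
      have h3 : 0 ≤ φ * ux ^ 2 := by positivity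
      linarith
  have q6 := mul_le_mul_of_nonneg_left q4 (by positivity : 0 ≤ R ^ 2 * K / (2 * μ))
  have q7 := mul_le_mul_of_nonneg_left q5 (by positivity : 0 ≤ μ / (4 * K))
  have e7 : μ / (4 * K) * (2 * (φ * ux ^ 2) + 4 * (ux ^ 2 / (θ + ε)))
      = μ / (2 * K) * (φ * ux ^ 2) + μ / K * (ux ^ 2 / (θ + ε)) := by field_simp; ring
  have n8 : 0 ≤ μ / K * (θx ^ 2 / (θ + ε) ^ 2) := by positivity
  have n9 : 0 ≤ 18 * κ * K * (ux ^ 2 / (θ + ε)) := by positivity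
  linarith

/-- The dissipation of kinetic energy without temperature weight is integrable in time. -/
lemma ux_estimate {μ κ R cv M m K : ℝ} (hp : PosParams μ κ R cv M m K) :
    ∃ E : ℝ, 1 ≤ E ∧ ∀ {T ε : ℝ} {v u θ vx ux θx uxx θxx : ℝ → ℝ → ℝ},
      NSData μ κ R cv M m K T ε v u θ vx ux θx uxx θxx →
      (∀ t ∈ Icc (0 : ℝ) T, ∫ x, u x t ^ 2 ≤ E) ∧
      (∀ t ∈ Icc (0 : ℝ) T, ∫ x, relEnt ε (θ x t) ≤ E) ∧
      ∫ z, disRate ε θ θx ux z.1 z.2 ∂(slab T) ≤ E ∧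
      ∫ z, ux z.1 z.2 ^ 2 ∂(slab T) ≤ E := by
  obtain ⟨E, hE1, hE⟩ := energy_estimate hp
  have h1 := hp.μ
  have h2 := hp.κ
  have h3 := hp.R
  have h4 := hp.cv
  have h7 : 0 < K := one_pos.trans_le hp.K
  have hE0 : 0 < E := by linarith
  set B := cv * (100 * E) + (18 * κ * K + μ / K) * E
    + R ^ 2 * K / (2 * μ) * (409600 * E * (100 * E) * E) with hB
  have hB0 : 0 < B := by positivity
  have hc : 0 < μ / (4 * K) := by positivity
  have hBc := div_pos hB0 hc
  refine ⟨E + B / (μ / (4 * K)), by linarith, ?_⟩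
  intro T ε v u θ vx ux θx uxx θxx D
  have F := D.toNSFlow
  obtain ⟨e1, e2, e3⟩ := hE D
  refine ⟨fun t ht => (e1 t ht).trans (by linarith), fun t ht => (e2 t ht).trans (by linarith),
    e3.trans (by linarith), ?_⟩
  obtain ⟨b1, b2, b3, b4, b5, b6⟩ := F.slab_base D.hT
  have hε := D.ε0
  have my : Measurable fun z : ℝ × ℝ => max (θ z.1 z.2 - 2) 0 :=
    (F.mθ.sub_const 2).max measurable_const
  have hy1 : ∀ x t, max (θ x t - 2) 0 ≤ |θ x t - 1| := fun x t =>
    max_le (by linarith [le_abs_self (θ x t - 1)]) (abs_nonneg _)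
  have hΦ : ∀ s : ℝ, 0 ≤ max s 0 - Real.arctan (max s 0) ∧
      max s 0 - Real.arctan (max s 0) ≤ max s 0 := fun s =>
    ⟨by linarith [arctan_le_self (le_max_right s 0)],
      by linarith [Real.arctan_nonneg.2 (le_max_right s 0)]⟩
  have hyr : ∀ x t, max (θ x t - 2) 0 ≤ 100 * relEnt ε (θ x t) := fun x t => by
    rcases le_total (θ x t) 2 with h | h
    · rw [max_eq_right (by linarith)]
      exact mul_nonneg (by norm_num) (relEnt_nonneg hε (F.θpos x t))
    · rw [max_eq_left (by linarith)]
      linarith [le_relEnt hε D.ε1 (by linarith : 3 / 2 ≤ θ x t)]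
  have hInt : ∀ t, 0 ≤ t → Integrable fun x =>
      cv * (max (θ x t - 2) 0 - Real.arctan (max (θ x t - 2) 0)) := fun t ht => by
    have mt := measurable_slice (f := fun x t => max (θ x t - 2) 0) my t
    refine Integrable.const_mul (((F.integrable_relEnt hε ht).const_mul 100).mono'
      (mt.sub (Real.measurable_arctan.comp mt)).aestronglyMeasurable
      (ae_of_all _ fun x => ?_)) cv
    simp only [Pi.sub_apply, Function.comp]
    rw [Real.norm_of_nonneg (hΦ _).1]
    exact (hΦ _).2.trans (hyr x t)
  have mP : Measurable fun z : ℝ × ℝ =>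
      max (θ z.1 z.2 - 2) 0 ^ 2 / (1 + max (θ z.1 z.2 - 2) 0 ^ 2) :=
    (my.pow_const 2).div ((my.pow_const 2).const_add 1)
  have mPx : Measurable fun z : ℝ × ℝ =>
      2 * max (θ z.1 z.2 - 2) 0 / (1 + max (θ z.1 z.2 - 2) 0 ^ 2) ^ 2 * θx z.1 z.2 :=
    ((my.const_mul 2).div (((my.pow_const 2).const_add 1).pow_const 2)).mul F.mθx
  obtain ⟨g1, g2⟩ := F.balance hp.cv D.hT
    (f := fun x t => cv * (max (θ x t - 2) 0 - Real.arctan (max (θ x t - 2) 0)))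
    (Q := fun _ _ => 0) (Qx := fun _ _ => 0)
    (P := fun x t => max (θ x t - 2) 0 ^ 2 / (1 + max (θ x t - 2) 0 ^ 2))
    (Px := fun x t => 2 * max (θ x t - 2) 0 / (1 + max (θ x t - 2) 0 ^ 2) ^ 2 * θx x t)
    (N := fun _ _ => 0)
    (fun x t => (hasDerivAt_comp_pos hasDerivAt_sq_div (by simp) (by simp) (θ x t - 2)).comp x
      ((F.dθ x t).sub_const 2))
    (fun x t => hasDerivAt_const _ _) mP mPx measurable_const measurable_const
    (MemLp.of_bdd (C := 1) b3 mP (ae_of_all _ fun z => by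
      set y := max (θ z.1 z.2 - 2) 0 with hy
      have hy0 : 0 ≤ y := le_max_right _ _
      rw [abs_of_nonneg (by positivity), one_mul]
      refine le_trans ?_ (hy1 z.1 z.2)
      rw [← hy, div_le_iff₀ (by positivity)]
      nlinarith [mul_nonneg hy0 (sq_nonneg (y - 1)), mul_nonneg hy0 (sq_nonneg y)]))
    (MemLp.of_bdd (C := 1) b6 mPx (ae_of_all _ fun z => by
      set y := max (θ z.1 z.2 - 2) 0 with hy
      have hy0 : 0 ≤ y := le_max_right _ _
      rw [abs_mul]
      refine mul_le_mul_of_nonneg_right ?_ (abs_nonneg _)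
      rw [abs_of_nonneg (by positivity), div_le_one (by positivity)]
      nlinarith [sq_nonneg (y - 1), sq_nonneg (y ^ 2)]))
    MemLp.zero' MemLp.zero' (integrable_zero _ _ _)
    (fun x => by
      have c1 : Continuous fun t => max (θ x t - 2) 0 :=
        ((F.cθ_t x).sub continuous_const).max continuous_const
      exact continuous_const.mul (c1.sub (Real.continuous_arctan.comp c1)))
    (fun x t ht ut θt hu hθ => by
      refine (((hasDerivAt_comp_pos hasDerivAt_sub_arctan (by simp) (by simp)
        (θ x t - 2)).comp t (hθ.sub_const 2)).const_mul cv).congr_deriv ?_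
      ring)
    (hInt 0 le_rfl) (hInt T D.hT.le)
  -- for `∫∫ θ²` over `{θ ≥ 2}`, one factor is bounded by the dissipation, the other by the entropy
  have mh : Measurable fun z : ℝ × ℝ => if 2 ≤ θ z.1 z.2 then θ z.1 z.2 ^ 2 else 0 :=
    Measurable.ite (measurableSet_le measurable_const F.mθ) (F.mθ.pow_const 2) measurable_const
  obtain ⟨l1, l2⟩ := F.large_temp_slab hε D.ε1 hE1 (E' := 100 * E) (by positivity) D.hT e2 e3
    (h := fun x t => if 2 ≤ θ x t then θ x t ^ 2 else 0)
    (k := fun x t => 100 * relEnt ε (θ x t)) mh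
    (fun x t => by split_ifs <;> positivity)
    (fun x t => mul_nonneg (by norm_num) (relEnt_nonneg hε (F.θpos x t)))
    (fun t ht => (F.integrable_relEnt hε ht.1).const_mul 100)
    (fun t ht => by rw [integral_const_mul]; linarith [e2 t ht])
    (fun x t h => by
      rw [if_pos h, sq]
      exact mul_le_mul_of_nonneg_left (le_relEnt hε D.ε1 (by linarith)) (F.θpos x t).le)
    (fun x t h => if_neg (not_le.2 h))
  have i1 := b5.integrable_sq.const_mul (μ / (4 * K))
  have i2 := (F.integrable_dis hε D.hT).const_mul (18 * κ * K + μ / K)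
  have i3 := l1.const_mul (R ^ 2 * K / (2 * μ))
  have key := integral_mono ((i1.sub i2).sub i3) g1 (fun z =>
    ux_pointwise (R := R) (θx := θx z.1 z.2) (ux := ux z.1 z.2) hp.μ hp.κ h7 hε D.ε1
      (F.θpos z.1 z.2) (F.vpos z.1 z.2) (F.vK z.1 z.2).2 (F.inv_v_le z.1 z.2))
  rw [← g2] at key
  have a1 := integral_sub (i1.sub i2) i3
  have a2 := integral_sub i1 i2
  rw [integral_const_mul] at a1 a2
  rw [integral_const_mul] at a2
  simp only [Pi.sub_apply] at key a1
  rw [a1, a2] at key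
  have t0 : 0 ≤ ∫ x, cv * (max (θ x 0 - 2) 0 - Real.arctan (max (θ x 0 - 2) 0)) :=
    integral_nonneg fun x => mul_nonneg h4.le (hΦ _).1
  have tT : ∫ x, cv * (max (θ x T - 2) 0 - Real.arctan (max (θ x T - 2) 0))
      ≤ cv * (100 * E) := by
    calc _ ≤ ∫ x, cv * (100 * relEnt ε (θ x T)) :=
          integral_mono (hInt T D.hT.le)
            (((F.integrable_relEnt hε D.hT.le).const_mul 100).const_mul cv) fun x =>
            mul_le_mul_of_nonneg_left ((hΦ _).2.trans (hyr x T)) h4.le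
      _ = cv * (100 * ∫ x, relEnt ε (θ x T)) := by
          rw [integral_const_mul, integral_const_mul]
      _ ≤ _ := by gcongr; exact e2 T ⟨D.hT.le, le_rfl⟩
  have l3 := mul_le_mul_of_nonneg_left l2 (by positivity : 0 ≤ R ^ 2 * K / (2 * μ))
  have e4 := mul_le_mul_of_nonneg_left e3 (by positivity : 0 ≤ 18 * κ * K + μ / K)
  have : ∫ z, ux z.1 z.2 ^ 2 ∂(slab T) ≤ B / (μ / (4 * K)) := by
    rw [le_div_iff₀ hc]; linarith
  linarith

/-! ### The weighted temperature gradient -/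

/-- The spatial integral of a spatial derivative vanishes. -/
lemma integral_dx_slab {T : ℝ} {q qx : ℝ → ℝ → ℝ}
    (hd : ∀ x t, HasDerivAt (fun y => q y t) (qx x t) x)
    (h1 : Integrable (fun z : ℝ × ℝ => q z.1 z.2) (slab T))
    (h2 : Integrable (fun z : ℝ × ℝ => qx z.1 z.2) (slab T)) :
    ∫ z, qx z.1 z.2 ∂(slab T) = 0 := by
  rw [integral_prod_symm _ h2]
  refine integral_eq_zero_of_ae ?_
  filter_upwards [h1.prod_left_ae, h2.prod_left_ae] with t a b
  exact integral_eq_zero_of_hasDerivAt_of_integrable (fun x => hd x t) b a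

lemma log_one_add_sq_le {z : ℝ} (hz : 0 ≤ z) : Real.log (1 + z ^ 2) ≤ 2 * z := by
  calc Real.log (1 + z ^ 2) ≤ Real.log ((1 + z) ^ 2) :=
        Real.log_le_log (by positivity) (by nlinarith)
    _ = 2 * Real.log (1 + z) := by rw [Real.log_pow]; norm_num
    _ ≤ 2 * z := by linarith [Real.log_le_sub_one_of_pos (by positivity : 0 < 1 + z)]

lemma hasDerivAt_half_log (s : ℝ) :
    HasDerivAt (fun r : ℝ => 1 / 2 * Real.log (1 + r ^ 2)) (s / (1 + s ^ 2)) s := by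
  have h : HasDerivAt (fun r : ℝ => r ^ 2) (2 * s) s := by simpa using hasDerivAt_pow 2 s
  refine (((h.const_add 1).log (by positivity)).const_mul (1 / 2)).congr_deriv ?_
  field_simp

lemma hasDerivAt_logPot (s : ℝ) :
    HasDerivAt (fun r : ℝ => r * (1 / 2 * Real.log (1 + r ^ 2)) - (r - Real.arctan r))
      (1 / 2 * Real.log (1 + s ^ 2)) s := by
  refine (((hasDerivAt_id s).mul (hasDerivAt_half_log s)).sub
    (hasDerivAt_sub_arctan s)).congr_deriv ?_
  simp only [id]
  have : 1 + s ^ 2 ≠ 0 := by positivity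
  field_simp
  ring

lemma logPot_bounds {z : ℝ} (hz : 0 ≤ z) :
    0 ≤ z * (1 / 2 * Real.log (1 + z ^ 2)) - (z - Real.arctan z) ∧
    z * (1 / 2 * Real.log (1 + z ^ 2)) - (z - Real.arctan z) ≤ z ^ 2 := by
  constructor
  · have hm : Monotone fun r : ℝ => r * (1 / 2 * Real.log (1 + r ^ 2)) - (r - Real.arctan r) :=
      monotone_of_hasDerivAt_nonneg (fun r => hasDerivAt_logPot r) fun r => by
        simp only [Pi.zero_apply]
        have := Real.log_nonneg (by nlinarith [sq_nonneg r] : (1:ℝ) ≤ 1 + r ^ 2)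
        positivity
    simpa using hm hz
  · have := mul_le_mul_of_nonneg_left (log_one_add_sq_le hz) hz
    linarith [arctan_le_self hz]

/-- The positive part of `c_v θ + u²/2 - 3 c_v`: the excess of total energy. -/
noncomputable def exc (cv : ℝ) (u θ : ℝ → ℝ → ℝ) (x t : ℝ) : ℝ :=
  max (cv * θ x t + u x t ^ 2 / 2 - 3 * cv) 0

/-- The weight `z / (1 + z²)` at the energy excess `z`. -/
noncomputable def wgt (cv : ℝ) (u θ : ℝ → ℝ → ℝ) (x t : ℝ) : ℝ :=
  exc cv u θ x t / (1 + exc cv u θ x t ^ 2)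

lemma exc_nonneg (cv : ℝ) (u θ : ℝ → ℝ → ℝ) (x t : ℝ) : 0 ≤ exc cv u θ x t := le_max_right _ _

lemma wgt_nonneg (cv : ℝ) (u θ : ℝ → ℝ → ℝ) (x t : ℝ) : 0 ≤ wgt cv u θ x t :=
  div_nonneg (exc_nonneg ..) (by positivity)

lemma wgt_le (cv : ℝ) (u θ : ℝ → ℝ → ℝ) (x t : ℝ) : wgt cv u θ x t ≤ 1 / 2 := by
  unfold wgt
  rw [div_le_div_iff₀ (by positivity) (by norm_num)]
  nlinarith [sq_nonneg (exc cv u θ x t - 1)]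

lemma wgt_mul_le {cv a c : ℝ} (u θ : ℝ → ℝ → ℝ) (x t : ℝ) (ha : 0 ≤ a) (hc : 0 ≤ c)
    {b : ℝ} (h : b ≤ a * exc cv u θ x t + c) : wgt cv u θ x t * b ≤ a + c := by
  have h0 := exc_nonneg cv u θ x t
  have hw := wgt_nonneg cv u θ x t
  have hw1 := wgt_le cv u θ x t
  have hz : wgt cv u θ x t * exc cv u θ x t ≤ 1 := by
    unfold wgt
    rw [div_mul_eq_mul_div, div_le_one (by positivity)]
    nlinarith
  calc wgt cv u θ x t * b ≤ wgt cv u θ x t * (a * exc cv u θ x t + c) :=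
        mul_le_mul_of_nonneg_left h hw
    _ = a * (wgt cv u θ x t * exc cv u θ x t) + wgt cv u θ x t * c := by ring
    _ ≤ a * 1 + 1 * c := by gcongr; linarith
    _ = a + c := by ring

lemma wgt_u_le {cv : ℝ} (hcv : 0 < cv) (u θ : ℝ → ℝ → ℝ) (x t : ℝ) (hθ : 0 < θ x t) :
    wgt cv u θ x t * u x t ^ 2 ≤ 2 + 6 * cv := by
  refine wgt_mul_le u θ x t (by norm_num) (by positivity) ?_
  have := le_max_left (cv * θ x t + u x t ^ 2 / 2 - 3 * cv) 0
  have := mul_pos hcv hθ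
  unfold exc; linarith

lemma wgt_θ_le {cv : ℝ} (hcv : 0 < cv) (u θ : ℝ → ℝ → ℝ) (x t : ℝ) :
    wgt cv u θ x t * θ x t ≤ 1 / cv + 3 := by
  refine wgt_mul_le u θ x t (by positivity) (by norm_num) ?_
  have := le_max_left (cv * θ x t + u x t ^ 2 / 2 - 3 * cv) 0
  unfold exc
  have h : cv * θ x t ≤ max (cv * θ x t + u x t ^ 2 / 2 - 3 * cv) 0 + 3 * cv := by
    nlinarith [sq_nonneg (u x t)]
  calc θ x t = 1 / cv * (cv * θ x t) := by field_simp
    _ ≤ 1 / cv * (max (cv * θ x t + u x t ^ 2 / 2 - 3 * cv) 0 + 3 * cv) :=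
        mul_le_mul_of_nonneg_left h (by positivity)
    _ = _ := by field_simp

lemma exc_le {cv : ℝ} (hcv : 0 < cv) (u θ : ℝ → ℝ → ℝ) (x t : ℝ) :
    exc cv u θ x t ≤ cv * |θ x t - 1| + u x t ^ 2 / 2 := by
  unfold exc
  refine max_le ?_ (by positivity)
  have := mul_le_mul_of_nonneg_left (le_abs_self (θ x t - 1)) hcv.le
  linarith

/-- Production terms of the total energy tested with `lam = log (1 + z²) / 2`, where `g` is the
weight `z / (1 + z²)`. The term split off on the right is a spatial derivative. -/
lemma wgtest_pointwise {μ κ R cv K v u θ θx ux g lam : ℝ} (hκ : 0 < κ)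
    (hcv : 0 < cv) (hK : 0 < K) (hv : 0 < v) (hvK : v ≤ K) (hvK' : 1 / v ≤ K)
    (hg : 0 ≤ g) (hgu : g * u ^ 2 ≤ 2 + 6 * cv) :
    -((ux * lam + u * (g * (cv * θx + u * ux))) * (μ * (ux / v) - R * (θ / v - 1)))
      - κ * (g * (cv * θx + u * ux) * (θx / v))
      + lam * (μ * (ux ^ 2 / v) - R * (θ / v * ux)) + 0
    ≤ -(R * (ux * lam + u * (g * (cv * θx + u * ux))))
      + (-(cv * κ / (2 * K)) * (g * θx ^ 2)
        + K * (((cv * μ + κ) ^ 2 / (cv * κ) + 1 / 2 + |μ|) * (2 + 6 * cv)) * ux ^ 2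
        + K * (R ^ 2 * cv / κ + R ^ 2 / 2) * (g * θ ^ 2 * u ^ 2)) := by
  have hiv : 1 / K ≤ 1 / v := one_div_le_one_div_of_le hv hvK
  have hv0 : 0 < 1 / v := by positivity
  set a := (cv * μ + κ) ^ 2 / (cv * κ) + 1 / 2 + |μ| with ha
  set b := R ^ 2 * cv / κ + R ^ 2 / 2 with hb
  have ha0 : 0 ≤ a := by positivity
  have hb0 : 0 ≤ b := by positivity
  have e : -((ux * lam + u * (g * (cv * θx + u * ux))) * (μ * (ux / v) - R * (θ / v - 1)))
      - κ * (g * (cv * θx + u * ux) * (θx / v))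
      + lam * (μ * (ux ^ 2 / v) - R * (θ / v * ux)) + 0
      = -(R * (ux * lam + u * (g * (cv * θx + u * ux))))
      + (g * (1 / v)) * (-(cv * κ * θx ^ 2) - (cv * μ + κ) * θx * (u * ux) - μ * (u * ux) ^ 2
        + R * cv * (u * θ) * θx + R * (u * θ) * (u * ux)) := by
    field_simp
    ring
  have q : -(cv * κ * θx ^ 2) - (cv * μ + κ) * θx * (u * ux) - μ * (u * ux) ^ 2
        + R * cv * (u * θ) * θx + R * (u * θ) * (u * ux)
      ≤ -(cv * κ / 2 * θx ^ 2) + a * (u * ux) ^ 2 + b * (u * θ) ^ 2 := by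
    have s1 : cv * κ / 4 * θx ^ 2 + (cv * μ + κ) * θx * (u * ux)
        + (cv * μ + κ) ^ 2 / (cv * κ) * (u * ux) ^ 2
        = (cv * κ * θx / 2 + (cv * μ + κ) * (u * ux)) ^ 2 / (cv * κ) := by field_simp; ring
    have s2 : cv * κ / 4 * θx ^ 2 - R * cv * (u * θ) * θx + R ^ 2 * cv / κ * (u * θ) ^ 2
        = cv * (κ * θx / 2 - R * (u * θ)) ^ 2 / κ := by field_simp; ring
    have n1 : 0 ≤ (cv * κ * θx / 2 + (cv * μ + κ) * (u * ux)) ^ 2 / (cv * κ) := by positivity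
    have n2 : 0 ≤ cv * (κ * θx / 2 - R * (u * θ)) ^ 2 / κ := by positivity
    have n3 := sq_nonneg (R * (u * θ) - u * ux)
    have n4 := mul_le_mul_of_nonneg_right (neg_abs_le μ) (sq_nonneg (u * ux))
    rw [ha, hb]
    linarith
  rw [e]
  have q1 := mul_le_mul_of_nonneg_left q (mul_nonneg hg hv0.le)
  have q2 : cv * κ / (2 * K) * (g * θx ^ 2) ≤ g * (1 / v) * (cv * κ / 2 * θx ^ 2) := by
    calc _ = g * (1 / K) * (cv * κ / 2 * θx ^ 2) := by field_simp
      _ ≤ _ := by gcongr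
  have q3 : g * (1 / v) * (a * (u * ux) ^ 2) ≤ K * (a * (2 + 6 * cv)) * ux ^ 2 := by
    calc _ = (1 / v) * (a * (g * u ^ 2)) * ux ^ 2 := by ring
      _ ≤ _ := by gcongr
  have q4 : g * (1 / v) * (b * (u * θ) ^ 2) ≤ K * b * (g * θ ^ 2 * u ^ 2) := by
    calc _ = (1 / v) * b * (g * θ ^ 2 * u ^ 2) := by ring
      _ ≤ _ := by gcongr
  linarith

set_option maxHeartbeats 2000000 in
/-- Weighted bound for the temperature gradient at high energies. The test function is
`log (1 + z²) / 2` with `z` the energy excess, whose derivative in `z` is the weight `wgt`. -/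
lemma wgt_estimate {μ κ R cv M m K : ℝ} (hp : PosParams μ κ R cv M m K) :
    ∃ E : ℝ, 1 ≤ E ∧ ∀ {T ε : ℝ} {v u θ vx ux θx uxx θxx : ℝ → ℝ → ℝ},
      NSData μ κ R cv M m K T ε v u θ vx ux θx uxx θxx →
      (∀ t ∈ Icc (0 : ℝ) T, ∫ x, u x t ^ 2 ≤ E) ∧
      ∫ z, disRate ε θ θx ux z.1 z.2 ∂(slab T) ≤ E ∧
      ∫ z, ux z.1 z.2 ^ 2 ∂(slab T) ≤ E ∧
      Integrable (fun z : ℝ × ℝ => wgt cv u θ z.1 z.2 * θx z.1 z.2 ^ 2) (slab T) ∧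
      ∫ z, wgt cv u θ z.1 z.2 * θx z.1 z.2 ^ 2 ∂(slab T) ≤ E := by
  obtain ⟨E, hE1, hE⟩ := ux_estimate hp
  have h1 := hp.μ
  have h2 := hp.κ
  have h3 := hp.R
  have h4 := hp.cv
  have h5 := hp.M
  have h7 : 0 < K := one_pos.trans_le hp.K
  have hE0 : 0 < E := by linarith
  set A1 := K * (((cv * μ + κ) ^ 2 / (cv * κ) + 1 / 2 + |μ|) * (2 + 6 * cv)) with hA1
  set A2 := K * (R ^ 2 * cv / κ + R ^ 2 / 2) with hA2
  set C2 := 1 / cv + 3 with hC2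
  set H := 409600 * E * (C2 * E) * E + (2 * E / cv ^ 2 * E) * E with hH
  set B := (2 * cv ^ 2 * M + M * M) + A1 * E + A2 * H with hB
  have hA10 : 0 < A1 := by positivity
  have hA20 : 0 < A2 := by positivity
  have hB0 : 0 < B := by positivity
  have hc : 0 < cv * κ / (2 * K) := by positivity
  have hBc := div_pos hB0 hc
  refine ⟨E + B / (cv * κ / (2 * K)), by linarith, ?_⟩
  intro T ε v u θ vx ux θx uxx θxx D
  have F := D.toNSFlow
  obtain ⟨e1, e2, e3, e4⟩ := hE D
  obtain ⟨b1, b2, b3, b4, b5, b6⟩ := F.slab_base D.hT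
  obtain ⟨S, hS1, hS⟩ := F.sup_bound D.hT
  have hε := D.ε0
  have mz : Measurable fun z : ℝ × ℝ => exc cv u θ z.1 z.2 := by
    unfold exc
    exact (((F.mθ.const_mul cv).add ((F.mu.pow_const 2).div_const 2)).sub_const _).max
      measurable_const
  have mg : Measurable fun z : ℝ × ℝ => wgt cv u θ z.1 z.2 :=
    mz.div ((mz.pow_const 2).const_add 1)
  have mlam : Measurable fun z : ℝ × ℝ => 1 / 2 * Real.log (1 + exc cv u θ z.1 z.2 ^ 2) :=
    (Real.measurable_log.comp ((mz.pow_const 2).const_add 1)).const_mul _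
  have hlam0 : ∀ x t, 0 ≤ 1 / 2 * Real.log (1 + exc cv u θ x t ^ 2) := fun x t => by
    have := Real.log_nonneg (by nlinarith [sq_nonneg (exc cv u θ x t)] :
      (1:ℝ) ≤ 1 + exc cv u θ x t ^ 2)
    positivity
  have hlam1 : ∀ x t, 1 / 2 * Real.log (1 + exc cv u θ x t ^ 2) ≤ exc cv u θ x t := fun x t => by
    linarith [log_one_add_sq_le (exc_nonneg cv u θ x t)]
  have mex : Measurable fun z : ℝ × ℝ => cv * θx z.1 z.2 + u z.1 z.2 * ux z.1 z.2 :=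
    (F.mθx.const_mul cv).add (F.mu.mul F.mux)
  have lex : MemLp (fun z : ℝ × ℝ => cv * θx z.1 z.2 + u z.1 z.2 * ux z.1 z.2) 2 (slab T) := by
    refine (b6.const_mul cv).add (MemLp.of_bdd (C := S) b5 (F.mu.mul F.mux) ?_)
    refine ae_slab (P := fun x t => |u x t * ux x t| ≤ S * |ux x t|) fun t ht x => ?_
    rw [abs_mul]
    exact mul_le_mul_of_nonneg_right (hS t ht x).1 (abs_nonneg _)
  have llam : MemLp (fun z : ℝ × ℝ => 1 / 2 * Real.log (1 + exc cv u θ z.1 z.2 ^ 2)) 2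
      (slab T) := by
    refine MemLp.of_bdd (C := 1) ((b3.abs.const_mul cv).add (b2.abs.const_mul (S / 2))) mlam ?_
    refine ae_slab (P := fun x t => |1 / 2 * Real.log (1 + exc cv u θ x t ^ 2)| ≤
      1 * |cv * |θ x t - 1| + S / 2 * (|u x t|)|) fun t ht x => ?_
    rw [abs_of_nonneg (hlam0 x t), one_mul]
    refine ((hlam1 x t).trans (exc_le h4 u θ x t)).trans (le_trans ?_ (le_abs_self _))
    have := mul_le_mul_of_nonneg_right (hS t ht x).1 (abs_nonneg (u x t))
    rw [← sq, sq_abs] at this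
    linarith
  have mPx : Measurable fun z : ℝ × ℝ =>
      wgt cv u θ z.1 z.2 * (cv * θx z.1 z.2 + u z.1 z.2 * ux z.1 z.2) := mg.mul mex
  have lPx : MemLp (fun z : ℝ × ℝ =>
      wgt cv u θ z.1 z.2 * (cv * θx z.1 z.2 + u z.1 z.2 * ux z.1 z.2)) 2 (slab T) := by
    refine MemLp.of_bdd (C := 1) lex mPx (ae_of_all _ fun z => ?_)
    rw [abs_mul, abs_of_nonneg (wgt_nonneg ..)]
    refine mul_le_mul_of_nonneg_right ?_ (abs_nonneg _)
    linarith [wgt_le cv u θ z.1 z.2]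
  have hbu : ∀ {f : ℝ → ℝ → ℝ}, (Measurable fun z : ℝ × ℝ => f z.1 z.2) →
      MemLp (fun z : ℝ × ℝ => f z.1 z.2) 2 (slab T) →
      MemLp (fun z : ℝ × ℝ => u z.1 z.2 * f z.1 z.2) 2 (slab T) := fun {f} mf lf => by
    refine MemLp.of_bdd (C := S) lf (F.mu.mul mf) ?_
    refine ae_slab (P := fun x t => |u x t * f x t| ≤ S * |f x t|) fun t ht x => ?_
    rw [abs_mul]
    exact mul_le_mul_of_nonneg_right (hS t ht x).1 (abs_nonneg _)
  have lQ := hbu (f := fun x t => 1 / 2 * Real.log (1 + exc cv u θ x t ^ 2)) mlam llam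
  have lQ2 := hbu (f := fun x t => wgt cv u θ x t * (cv * θx x t + u x t * ux x t)) mPx lPx
  have lQ1 : MemLp (fun z : ℝ × ℝ =>
      ux z.1 z.2 * (1 / 2 * Real.log (1 + exc cv u θ z.1 z.2 ^ 2))) 2 (slab T) := by
    refine MemLp.of_bdd (C := cv * (S + 1) + S ^ 2 / 2) b5 (F.mux.mul mlam) ?_
    refine ae_slab (P := fun x t => |ux x t * (1 / 2 * Real.log (1 + exc cv u θ x t ^ 2))| ≤
      (cv * (S + 1) + S ^ 2 / 2) * |ux x t|) fun t ht x => ?_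
    rw [abs_mul, mul_comm]
    refine mul_le_mul_of_nonneg_right ?_ (abs_nonneg _)
    rw [abs_of_nonneg (hlam0 x t)]
    refine ((hlam1 x t).trans (exc_le h4 u θ x t)).trans ?_
    have t1 : |θ x t - 1| ≤ S + 1 :=
      abs_le.2 ⟨by linarith [F.θpos x t], by linarith [(hS t ht x).2]⟩
    have t2 : u x t ^ 2 ≤ S ^ 2 := by
      rw [← sq_abs]; exact pow_le_pow_left₀ (abs_nonneg _) (hS t ht x).1 2
    gcongr
  have dlam : ∀ x t, HasDerivAt (fun y => 1 / 2 * Real.log (1 + exc cv u θ y t ^ 2))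
      (wgt cv u θ x t * (cv * θx x t + u x t * ux x t)) x := fun x t => by
    have a := ((((F.dθ x t).const_mul cv).add (((F.du x t).fun_pow 2).div_const 2)).sub_const
      (3 * cv))
    refine ((hasDerivAt_comp_pos hasDerivAt_half_log (by simp) (by simp) _).comp x a).congr_deriv ?_
    unfold wgt exc
    simp only [Pi.add_apply]
    ring
  have dQ : ∀ x t, HasDerivAt (fun y => u y t * (1 / 2 * Real.log (1 + exc cv u θ y t ^ 2)))
      (ux x t * (1 / 2 * Real.log (1 + exc cv u θ x t ^ 2))
        + u x t * (wgt cv u θ x t * (cv * θx x t + u x t * ux x t))) x := fun x t =>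
    (F.du x t).mul (dlam x t)
  have mQ : Measurable fun z : ℝ × ℝ =>
      u z.1 z.2 * (1 / 2 * Real.log (1 + exc cv u θ z.1 z.2 ^ 2)) := F.mu.mul mlam
  have mQx : Measurable fun z : ℝ × ℝ =>
      ux z.1 z.2 * (1 / 2 * Real.log (1 + exc cv u θ z.1 z.2 ^ 2))
      + u z.1 z.2 * (wgt cv u θ z.1 z.2 * (cv * θx z.1 z.2 + u z.1 z.2 * ux z.1 z.2)) :=
    (F.mux.mul mlam).add (F.mu.mul mPx)
  -- the potential is dominated by the squared excess
  have hG : ∀ t, 0 ≤ t → ∀ x, exc cv u θ x t * (1 / 2 * Real.log (1 + exc cv u θ x t ^ 2))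
      - (exc cv u θ x t - Real.arctan (exc cv u θ x t)) ≤
      2 * cv ^ 2 * (θ x t - 1) ^ 2
        + ((∫ x, u x t ^ 2) + ∫ x, ux x t ^ 2) / 2 * u x t ^ 2 := fun t ht x => by
    refine (logPot_bounds (exc_nonneg cv u θ x t)).2.trans ?_
    have a := pow_le_pow_left₀ (exc_nonneg cv u θ x t) (exc_le h4 u θ x t) 2
    have b := sq_le_of_memLp (fun x => F.du x t) (F.Lu t ht) (F.Lux t ht) one_pos x
    rw [inv_one, one_mul, one_mul] at b
    have c := mul_le_mul_of_nonneg_right b (sq_nonneg (u x t))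
    have d := sq_nonneg (cv * |θ x t - 1| - u x t ^ 2 / 2)
    have e := sq_abs (θ x t - 1)
    nlinarith
  have hInt : ∀ t, 0 ≤ t → Integrable fun x =>
      exc cv u θ x t * (1 / 2 * Real.log (1 + exc cv u θ x t ^ 2))
      - (exc cv u θ x t - Real.arctan (exc cv u θ x t)) := fun t ht => by
    have m1 := measurable_slice mz t
    have m2 := measurable_slice (f := fun x t => 1 / 2 * Real.log (1 + exc cv u θ x t ^ 2)) mlam t
    refine (((F.Lθ t ht).integrable_sq.const_mul (2 * cv ^ 2)).add
      ((F.Lu t ht).integrable_sq.const_mul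
        (((∫ x, u x t ^ 2) + ∫ x, ux x t ^ 2) / 2))).mono'
      ((m1.mul m2).sub (m1.sub (Real.measurable_arctan.comp m1))).aestronglyMeasurable
      (ae_of_all _ fun x => ?_)
    refine (le_of_eq (Real.norm_of_nonneg ?_)).trans (hG t ht x)
    exact (logPot_bounds (exc_nonneg cv u θ x t)).1
  obtain ⟨g1, g2⟩ := F.balance hp.cv D.hT
    (f := fun x t => exc cv u θ x t * (1 / 2 * Real.log (1 + exc cv u θ x t ^ 2))
      - (exc cv u θ x t - Real.arctan (exc cv u θ x t)))
    (N := fun _ _ => 0) dlam dQ mlam mPx mQ mQx llam lPx lQ (lQ1.add lQ2)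
    (integrable_zero _ _ _)
    (fun x => by
      have c1 : Continuous fun t => exc cv u θ x t := by
        unfold exc
        exact ((((F.cθ_t x).const_mul cv).add (((F.cu_t x).pow 2).div_const 2)).sub
          continuous_const).max continuous_const
      have c2 : Continuous fun t => 1 / 2 * Real.log (1 + exc cv u θ x t ^ 2) :=
        ((continuous_const.add (c1.pow 2)).log fun t =>
          (by positivity : (1 : ℝ) + exc cv u θ x t ^ 2 ≠ 0)).const_mul _
      exact (c1.mul c2).sub (c1.sub (Real.continuous_arctan.comp c1)))
    (fun x t ht ut θt hu hθ => by
      have a := ((hθ.const_mul cv).add ((hu.fun_pow 2).div_const 2)).sub_const (3 * cv)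
      refine ((hasDerivAt_comp_pos hasDerivAt_logPot (by simp) (by simp) _).comp t a).congr_deriv ?_
      unfold exc
      simp only [Pi.add_apply]
      ring)
    (hInt 0 le_rfl) (hInt T D.hT.le)
  -- the forcing on the set of large temperatures
  have mf : Measurable fun z : ℝ × ℝ => wgt cv u θ z.1 z.2 * θ z.1 z.2 ^ 2 * u z.1 z.2 ^ 2 :=
    (mg.mul (F.mθ.pow_const 2)).mul (F.mu.pow_const 2)
  have ms : MeasurableSet {z : ℝ × ℝ | 2 ≤ θ z.1 z.2} := measurableSet_le measurable_const F.mθ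
  have hf0 : ∀ x t, 0 ≤ wgt cv u θ x t * θ x t ^ 2 * u x t ^ 2 := fun x t => by
    have := wgt_nonneg cv u θ x t
    positivity
  obtain ⟨l1, l2⟩ := F.large_temp_slab hε D.ε1 hE1 (E' := C2 * E) (by positivity) D.hT e2 e3
    (h := fun x t => if 2 ≤ θ x t then wgt cv u θ x t * θ x t ^ 2 * u x t ^ 2 else 0)
    (k := fun x t => C2 * u x t ^ 2) (Measurable.ite ms mf measurable_const)
    (fun x t => by split_ifs; exacts [hf0 x t, le_rfl])
    (fun x t => by positivity)
    (fun t ht => (F.Lu t ht.1).integrable_sq.const_mul C2)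
    (fun t ht => by
      rw [integral_const_mul]
      exact mul_le_mul_of_nonneg_left (e1 t ht) (by positivity))
    (fun x t h => by
      rw [if_pos h]
      have := F.θpos x t
      calc wgt cv u θ x t * θ x t ^ 2 * u x t ^ 2
          = (wgt cv u θ x t * θ x t) * (θ x t * u x t ^ 2) := by ring
        _ ≤ C2 * (θ x t * u x t ^ 2) :=
            mul_le_mul_of_nonneg_right (wgt_θ_le h4 u θ x t) (by positivity)
        _ = _ := by ring)
    (fun x t h => if_neg (not_le.2 h))
  -- the forcing at moderate temperatures, where the velocity must be large
  obtain ⟨n1, n2⟩ := slice_bound (T := T) (E := 2 * E / cv ^ 2 * E)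
    (h := fun x t => if 2 ≤ θ x t then 0 else wgt cv u θ x t * θ x t ^ 2 * u x t ^ 2)
    (k := fun x t => 2 * E / cv ^ 2 * u x t ^ 2) (β := fun x t => ux x t ^ 2)
    (Measurable.ite ms measurable_const mf)
    (fun x t => by split_ifs; exacts [le_rfl, hf0 x t])
    (fun t ht => (F.Lu t ht.1).integrable_sq.const_mul _)
    (fun t ht => by
      rw [integral_const_mul]
      exact mul_le_mul_of_nonneg_left (e1 t ht) (by positivity))
    (fun x t => sq_nonneg _) b5.integrable_sq (fun t ht hi x => by
      have nb : 0 ≤ ∫ y, ux y t ^ 2 := integral_nonneg fun y => sq_nonneg _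
      split_ifs with hx
      · positivity
      have hθ := F.θpos x t
      rw [not_le] at hx
      rcases (exc_nonneg cv u θ x t).eq_or_lt with hz | hz
      · have : wgt cv u θ x t = 0 := by unfold wgt; rw [← hz]; simp
        rw [this, zero_mul, zero_mul]
        positivity
      have hu2 : 2 * cv ≤ u x t ^ 2 := by
        have : 0 < cv * θ x t + u x t ^ 2 / 2 - 3 * cv := by
          unfold exc at hz
          by_contra hcon
          rw [max_eq_right (not_lt.1 hcon)] at hz
          exact lt_irrefl _ hz
        nlinarith
      have p4 := pow_four_le_of_memLp (fun x => F.du x t) (F.Lu t ht.1) (F.Lux t ht.1) x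
      have p5 : u x t ^ 4 ≤ 4 * E * ∫ y, ux y t ^ 2 := p4.trans (by
        have := e1 t ht
        gcongr)
      have p6 : (2 * cv) ^ 2 ≤ u x t ^ 4 := by
        have := pow_le_pow_left₀ (by positivity) hu2 2
        calc _ ≤ _ := this
          _ = _ := by ring
      have p7 : 1 ≤ 1 / (4 * cv ^ 2) * (4 * E * ∫ y, ux y t ^ 2) := by
        rw [div_mul_eq_mul_div, le_div_iff₀ (by positivity)]
        nlinarith
      have w1 := wgt_le cv u θ x t
      have w0 := wgt_nonneg cv u θ x t
      have p8 : θ x t ^ 2 ≤ 4 := by nlinarith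
      have p9 : wgt cv u θ x t * θ x t ^ 2 * u x t ^ 2 ≤ 1 / 2 * 4 * u x t ^ 2 := by gcongr
      calc _ ≤ 1 / 2 * 4 * u x t ^ 2 := p9
        _ ≤ 1 / 2 * 4 * u x t ^ 2 * (1 / (4 * cv ^ 2) * (4 * E * ∫ y, ux y t ^ 2)) :=
            le_mul_of_one_le_right (by positivity) p7
        _ = _ := by field_simp; ring)
  have iH : Integrable (fun z : ℝ × ℝ => wgt cv u θ z.1 z.2 * θ z.1 z.2 ^ 2 * u z.1 z.2 ^ 2)
      (slab T) := (l1.add n1).congr (ae_of_all _ fun z => by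
        simp only [Pi.add_apply]; split_ifs <;> simp)
  have bH : ∫ z, wgt cv u θ z.1 z.2 * θ z.1 z.2 ^ 2 * u z.1 z.2 ^ 2 ∂(slab T) ≤ H := by
    have a : ∫ z, wgt cv u θ z.1 z.2 * θ z.1 z.2 ^ 2 * u z.1 z.2 ^ 2 ∂(slab T) =
        (∫ z, (if 2 ≤ θ z.1 z.2 then wgt cv u θ z.1 z.2 * θ z.1 z.2 ^ 2 * u z.1 z.2 ^ 2 else 0)
          ∂(slab T)) +
        ∫ z, (if 2 ≤ θ z.1 z.2 then 0 else wgt cv u θ z.1 z.2 * θ z.1 z.2 ^ 2 * u z.1 z.2 ^ 2)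
          ∂(slab T) := by
      rw [← integral_add l1 n1]
      refine integral_congr_ae (ae_of_all _ fun z => ?_)
      simp only; split_ifs <;> simp
    have b := mul_le_mul_of_nonneg_left e4 (by positivity : 0 ≤ 2 * E / cv ^ 2 * E)
    rw [a, hH]
    exact add_le_add l2 (n2.trans b)
  have iw : Integrable (fun z : ℝ × ℝ => wgt cv u θ z.1 z.2 * θx z.1 z.2 ^ 2) (slab T) := by
    refine integrable_of_bdd (C := 1) b6.integrable_sq (mg.mul (F.mθx.pow_const 2))
      (ae_of_all _ fun z => ?_)
    rw [abs_mul, abs_of_nonneg (wgt_nonneg ..)]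
    refine mul_le_mul_of_nonneg_right ?_ (abs_nonneg _)
    linarith [wgt_le cv u θ z.1 z.2]
  have iQx : Integrable (fun z : ℝ × ℝ =>
      ux z.1 z.2 * (1 / 2 * Real.log (1 + exc cv u θ z.1 z.2 ^ 2))
      + u z.1 z.2 * (wgt cv u θ z.1 z.2 * (cv * θx z.1 z.2 + u z.1 z.2 * ux z.1 z.2)))
      (slab T) := (memLp_two_mul b5 llam).add (memLp_two_mul b2 lPx)
  have zQx := integral_dx_slab dQ (memLp_two_mul b2 llam) iQx
  have k0 := (iQx.const_mul R).neg
  have k1 := iw.const_mul (-(cv * κ / (2 * K)))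
  have k2 := b5.integrable_sq.const_mul A1
  have k3 := iH.const_mul A2
  have key := integral_mono g1 (k0.add ((k1.add k2).add k3)) (fun z =>
    wgtest_pointwise (μ := μ) (R := R) (u := u z.1 z.2) (θ := θ z.1 z.2) (θx := θx z.1 z.2)
      (ux := ux z.1 z.2) (lam := 1 / 2 * Real.log (1 + exc cv u θ z.1 z.2 ^ 2))
      hp.κ h4 h7 (F.vpos z.1 z.2) (F.vK z.1 z.2).2
      (F.inv_v_le z.1 z.2) (wgt_nonneg cv u θ z.1 z.2)
      (wgt_u_le h4 u θ z.1 z.2 (F.θpos z.1 z.2)))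
  rw [← g2] at key
  have a0 := integral_add k0 ((k1.add k2).add k3)
  have a1 := integral_add (k1.add k2) k3
  have a2 := integral_add k1 k2
  rw [integral_const_mul] at a1 a2
  rw [integral_const_mul] at a2
  have a3 := integral_neg (μ := slab T) (f := fun z : ℝ × ℝ => R *
      (ux z.1 z.2 * (1 / 2 * Real.log (1 + exc cv u θ z.1 z.2 ^ 2))
      + u z.1 z.2 * (wgt cv u θ z.1 z.2 * (cv * θx z.1 z.2 + u z.1 z.2 * ux z.1 z.2))))
  rw [integral_const_mul, zQx, mul_zero, neg_zero] at a3
  simp only [Pi.add_apply, Pi.neg_apply] at key a0 a1 a2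
  rw [a0, a1, a2, a3] at key
  have tT : 0 ≤ ∫ x, (exc cv u θ x T * (1 / 2 * Real.log (1 + exc cv u θ x T ^ 2))
      - (exc cv u θ x T - Real.arctan (exc cv u θ x T))) :=
    integral_nonneg fun x => (logPot_bounds (exc_nonneg cv u θ x T)).1
  have t0 : ∫ x, (exc cv u θ x 0 * (1 / 2 * Real.log (1 + exc cv u θ x 0 ^ 2))
      - (exc cv u θ x 0 - Real.arctan (exc cv u θ x 0))) ≤ 2 * cv ^ 2 * M + M * M := by
    have j1 := (F.Lθ 0 le_rfl).integrable_sq.const_mul (2 * cv ^ 2)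
    have j2 := (F.Lu 0 le_rfl).integrable_sq.const_mul
        (((∫ x, u x 0 ^ 2) + ∫ x, ux x 0 ^ 2) / 2)
    have a := integral_mono (hInt 0 le_rfl) (j1.add j2) (hG 0 le_rfl)
    have b := integral_add j1 j2
    rw [integral_const_mul, integral_const_mul] at b
    simp only [Pi.add_apply] at a
    rw [b] at a
    refine a.trans ?_
    have n : 0 ≤ ∫ x, u x 0 ^ 2 := integral_nonneg fun _ => sq_nonneg _
    have n' : 0 ≤ ∫ x, ux x 0 ^ 2 := integral_nonneg fun _ => sq_nonneg _
    have p1 := D.i_u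
    have p2 := D.i_ux
    have p3 := D.i_θ
    have p4 : ((∫ x, u x 0 ^ 2) + ∫ x, ux x 0 ^ 2) / 2 ≤ M := by linarith
    gcongr
  have bA1 := mul_le_mul_of_nonneg_left e4 hA10.le
  have bA2 := mul_le_mul_of_nonneg_left bH hA20.le
  have fin : ∫ z, wgt cv u θ z.1 z.2 * θx z.1 z.2 ^ 2 ∂(slab T) ≤ B / (cv * κ / (2 * K)) := by
    rw [le_div_iff₀ hc]; linarith
  exact ⟨fun t ht => (e1 t ht).trans (by linarith), e3.trans (by linarith),
    e4.trans (by linarith), iw, by linarith⟩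

/-! ### The effective velocity -/

/-- Space-time version of `weighted_sq_ftc`: the weighted energy balance for `w_t = f`, where the
evolution is only known for almost every `x` at each time. -/
lemma weighted_energy {T B : ℝ} (hT : 0 < T) {w f : ℝ → ℝ → ℝ} {a : ℝ → ℝ}
    (mw : Measurable fun z : ℝ × ℝ => w z.1 z.2) (mf : Measurable fun z : ℝ × ℝ => f z.1 z.2)
    (ma : Measurable a) (ha0 : ∀ t, 0 ≤ a t) (haB : ∀ t, a t ≤ B)
    (lw : MemLp (fun z : ℝ × ℝ => w z.1 z.2) 2 (slab T))
    (lf : MemLp (fun z : ℝ × ℝ => f z.1 z.2) 2 (slab T))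
    (w0 : MemLp (fun x => w x 0) 2) (wT : MemLp (fun x => w x T) 2)
    (hev : ∀ t ∈ Icc (0 : ℝ) T, ∀ᵐ x, w x t = w x 0 + ∫ s in (0 : ℝ)..t, f x s) :
    Integrable (fun z : ℝ × ℝ => Real.exp (-∫ s in (0 : ℝ)..z.2, a s) *
        (2 * w z.1 z.2 * f z.1 z.2 - a z.2 * w z.1 z.2 ^ 2)) (slab T) ∧
    Real.exp (-∫ s in (0 : ℝ)..T, a s) * (∫ x, w x T ^ 2) - ∫ x, w x 0 ^ 2 =
      ∫ z, Real.exp (-∫ s in (0 : ℝ)..z.2, a s) *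
        (2 * w z.1 z.2 * f z.1 z.2 - a z.2 * w z.1 z.2 ^ 2) ∂(slab T) := by
  have hai : ∀ p q, IntervalIntegrable a volume p q := fun p q =>
    (intervalIntegrable_const (c := B)).mono_fun ma.aestronglyMeasurable (ae_of_all _ fun t => by
      simp only [Real.norm_of_nonneg (ha0 t), Real.norm_of_nonneg ((ha0 t).trans (haB t))]
      exact haB t)
  have cρ : Continuous fun t => Real.exp (-∫ s in (0 : ℝ)..t, a s) :=
    Real.continuous_exp.comp (intervalIntegral.continuous_primitive hai 0).neg
  have hρ1 : ∀ t, 0 ≤ t → Real.exp (-∫ s in (0 : ℝ)..t, a s) ≤ 1 := fun t ht => by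
    rw [Real.exp_le_one_iff, neg_nonpos]
    exact intervalIntegral.integral_nonneg ht fun s _ => ha0 s
  have mρ : Measurable fun z : ℝ × ℝ => Real.exp (-∫ s in (0 : ℝ)..z.2, a s) :=
    cρ.measurable.comp measurable_snd
  have mi : Measurable fun z : ℝ × ℝ =>
      2 * w z.1 z.2 * f z.1 z.2 - a z.2 * w z.1 z.2 ^ 2 :=
    ((mw.const_mul 2).mul mf).sub ((ma.comp measurable_snd).mul (mw.pow_const 2))
  have hi : Integrable (fun z : ℝ × ℝ => Real.exp (-∫ s in (0 : ℝ)..z.2, a s) *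
        (2 * w z.1 z.2 * f z.1 z.2 - a z.2 * w z.1 z.2 ^ 2)) (slab T) := by
    refine (((memLp_two_mul lw lf).abs.const_mul 2).add
      (lw.integrable_sq.const_mul B)).mono' (mρ.mul mi).aestronglyMeasurable ?_
    refine ae_slab (P := fun x t => ‖Real.exp (-∫ s in (0 : ℝ)..t, a s) *
        (2 * w x t * f x t - a t * w x t ^ 2)‖ ≤ 2 * |w x t * f x t| + B * w x t ^ 2)
        fun t ht x => ?_
    rw [norm_mul, Real.norm_of_nonneg (Real.exp_pos _).le]
    refine (mul_le_of_le_one_left (norm_nonneg _) (hρ1 t ht.1)).trans ?_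
    refine (norm_sub_le _ _).trans (add_le_add (le_of_eq ?_) ?_)
    · rw [mul_assoc, Real.norm_eq_abs, abs_mul, abs_of_pos (by norm_num : (0:ℝ) < 2)]
    · rw [Real.norm_of_nonneg (mul_nonneg (ha0 t) (sq_nonneg _))]
      exact mul_le_mul_of_nonneg_right (haB t) (sq_nonneg _)
  refine ⟨hi, ?_⟩
  -- exchange the order of the two exceptional sets
  have mI : Measurable fun z : ℝ × ℝ => ∫ s in Ioc (0 : ℝ) z.2, f z.1 s := by
    have h : Measurable fun p : (ℝ × ℝ) × ℝ =>
        if 0 < p.2 ∧ p.2 ≤ p.1.2 then f p.1.1 p.2 else 0 :=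
      Measurable.ite ((measurableSet_lt measurable_const measurable_snd).inter
        (measurableSet_le measurable_snd (measurable_snd.comp measurable_fst)))
        (mf.comp ((measurable_fst.comp measurable_fst).prodMk measurable_snd)) measurable_const
    have e : (fun z : ℝ × ℝ => ∫ s in Ioc (0 : ℝ) z.2, f z.1 s) =
        fun z => ∫ s, if 0 < s ∧ s ≤ z.2 then f z.1 s else 0 := by
      funext z
      rw [← integral_indicator measurableSet_Ioc]
      refine integral_congr_ae (ae_of_all _ fun s => ?_)
      simp only [indicator, mem_Ioc]
    rw [e]
    exact (h.stronglyMeasurable.integral_prod_right' (ν := volume)).measurable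
  have mset : MeasurableSet {z : ℝ × ℝ | w z.1 z.2 = w z.1 0 + ∫ s in Ioc (0 : ℝ) z.2, f z.1 s} :=
    measurableSet_eq_fun mw ((mw.comp (measurable_fst.prodMk measurable_const)).add mI)
  have hev' : ∀ᵐ t ∂(volume.restrict (Icc (0 : ℝ) T)), ∀ᵐ x,
      w x t = w x 0 + ∫ s in Ioc (0 : ℝ) t, f x s := by
    filter_upwards [ae_restrict_mem measurableSet_Icc] with t ht
    filter_upwards [hev t ht] with x hx
    rw [hx, intervalIntegral.integral_of_le ht.1]
  have hsw := (Measure.ae_ae_comm (μ := volume) (ν := volume.restrict (Icc (0 : ℝ) T))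
    (p := fun x t => w x t = w x 0 + ∫ s in Ioc (0 : ℝ) t, f x s) mset).2 hev'
  rw [integral_prod _ hi, ← integral_const_mul,
    ← integral_sub (wT.integrable_sq.const_mul _) w0.integrable_sq]
  refine integral_congr_ae ?_
  filter_upwards [hsw, hev T ⟨hT.le, le_rfl⟩, lf.integrable_sq.prod_right_ae] with x h1 h2 h3
  have hfx : IntervalIntegrable (f x) volume 0 T := by
    rw [intervalIntegrable_iff_integrableOn_Icc_of_le hT.le]
    exact ((memLp_two_iff_integrable_sq
      (mf.comp (measurable_const.prodMk measurable_id)).aestronglyMeasurable).2 h3).integrable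
      (by norm_num)
  rw [h2, weighted_sq_ftc hfx (hai 0 T), intervalIntegral.integral_of_le hT.le,
    ← integral_Icc_eq_integral_Ioc]
  refine integral_congr_ae ?_
  filter_upwards [h1, ae_restrict_mem measurableSet_Icc] with t ht htI
  rw [ht, ← intervalIntegral.integral_of_le htI.1]

namespace NSFlow

variable {μ κ R cv K : ℝ} {v u θ vx ux θx uxx θxx : ℝ → ℝ → ℝ}

lemma memLp_vx_div (F : NSFlow μ κ R cv K v u θ vx ux θx uxx θxx) {t : ℝ} (ht : 0 ≤ t) :
    MemLp (fun x => vx x t / v x t) 2 := by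
  refine MemLp.of_bdd (C := K) (F.Lvx t ht)
    ((measurable_slice F.mvx t).div (measurable_slice F.mv t)) (ae_of_all _ fun x => ?_)
  rw [abs_div, abs_of_pos (F.vpos _ _), div_eq_mul_one_div, mul_comm]
  exact mul_le_mul_of_nonneg_right (F.inv_v_le _ _) (abs_nonneg _)

/-- The effective velocity `μ v_x / v - u` is transported by the pressure gradient only. -/
lemma effective_evolution (F : NSFlow μ κ R cv K v u θ vx ux θx uxx θxx) {T : ℝ} (hT : 0 < T) :
    ∀ᵐ x, (μ * (vx x T / v x T) - u x T) = (μ * (vx x 0 / v x 0) - u x 0)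
      + ∫ s in (0 : ℝ)..T, R * dquot v vx θ θx x s := by
  obtain ⟨b1, b2, b3, b4, b5, b6⟩ := F.slab_base hT
  obtain ⟨s1, s2, s3, s4, s5⟩ := F.slab_second hT
  have h := deriv_x_evolution hT (f := fun x t => Real.log (v x t)) (fx := fun x t => vx x t / v x t)
    (g := fun x t => ux x t / v x t) (gx := dquot v vx ux uxx)
    (fun x t => (F.dv x t).log (F.vpos x t).ne')
    (fun x t => hasDerivAt_dquot (F.vpos x t).ne' (F.dv x t) (F.dux x t))
    (fun x => ((F.cv_t x).log fun t => (F.vpos x t).ne').continuousOn)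
    (fun x t ht => (F.tv x t ht.1).log (F.vpos x t).ne')
    (F.mux.div F.mv) (F.m_dquot F.mux F.muxx) (F.slab_div F.mux b5) s1
    (F.memLp_vx_div le_rfl) (F.memLp_vx_div hT.le)
  filter_upwards [h, s1.integrable_sq.prod_right_ae, s3.integrable_sq.prod_right_ae] with x h1 h2 h3
  have hc : ∀ {f : ℝ → ℝ → ℝ}, (Measurable fun z : ℝ × ℝ => f z.1 z.2) →
      Integrable (fun t => f x t ^ 2) (volume.restrict (Icc (0 : ℝ) T)) →
      IntervalIntegrable (f x) volume 0 T := fun {f} mf hf => by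
    rw [intervalIntegrable_iff_integrableOn_Icc_of_le hT.le]
    exact ((memLp_two_iff_integrable_sq
      (mf.comp (measurable_const.prodMk measurable_id)).aestronglyMeasurable).2 hf).integrable
      (by norm_num)
  have i1 := hc (F.m_dquot F.mux F.muxx) h2
  have i2 := hc (F.m_dquot F.mθ F.mθx) h3
  have hu := intervalIntegral.integral_eq_sub_of_hasDerivAt_of_le hT.le (F.cu_t x).continuousOn
    (fun t ht => F.tu x t ht.1) ((i1.const_mul μ).sub (i2.const_mul R))
  rw [intervalIntegral.integral_sub (i1.const_mul μ) (i2.const_mul R),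
    intervalIntegral.integral_const_mul, intervalIntegral.integral_const_mul] at hu
  rw [intervalIntegral.integral_const_mul, h1]
  linarith

lemma velocity_evolution (F : NSFlow μ κ R cv K v u θ vx ux θx uxx θxx) {T : ℝ} (hT : 0 < T) :
    ∀ᵐ x, u x T = u x 0
      + ∫ s in (0 : ℝ)..T, (μ * dquot v vx ux uxx x s - R * dquot v vx θ θx x s) := by
  obtain ⟨s1, s2, s3, s4, s5⟩ := F.slab_second hT
  have l := (s1.const_mul μ).sub (s3.const_mul R)
  filter_upwards [l.integrable_sq.prod_right_ae] with x h
  have i : IntervalIntegrable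
      (fun s => μ * dquot v vx ux uxx x s - R * dquot v vx θ θx x s) volume 0 T := by
    rw [intervalIntegrable_iff_integrableOn_Icc_of_le hT.le]
    exact ((memLp_two_iff_integrable_sq ((((F.m_dquot F.mux F.muxx).const_mul μ).sub
      ((F.m_dquot F.mθ F.mθx).const_mul R)).comp
      (measurable_const.prodMk measurable_id)).aestronglyMeasurable).2 h).integrable
      (by norm_num)
  have hu := intervalIntegral.integral_eq_sub_of_hasDerivAt_of_le hT.le (F.cu_t x).continuousOn
    (fun t ht => F.tu x t ht.1) i
  linarith

/-- Weighted balance for `((μ v_x / v - u)² - u²) / 2`. -/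
lemma vx_balance (F : NSFlow μ κ R cv K v u θ vx ux θx uxx θxx) {T B : ℝ} (hT : 0 < T)
    {a : ℝ → ℝ} (ma : Measurable a) (ha0 : ∀ t, 0 ≤ a t) (haB : ∀ t, a t ≤ B) :
    Integrable (fun z : ℝ × ℝ => Real.exp (-∫ s in (0 : ℝ)..z.2, a s) *
        (μ * R * (vx z.1 z.2 / v z.1 z.2) * dquot v vx θ θx z.1 z.2
          + μ * (ux z.1 z.2 * (ux z.1 z.2 / v z.1 z.2))
          - a z.2 * (((μ * (vx z.1 z.2 / v z.1 z.2) - u z.1 z.2) ^ 2 - u z.1 z.2 ^ 2) / 2)))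
      (slab T) ∧
    Real.exp (-∫ s in (0 : ℝ)..T, a s) *
        (∫ x, ((μ * (vx x T / v x T) - u x T) ^ 2 - u x T ^ 2) / 2)
      - ∫ x, ((μ * (vx x 0 / v x 0) - u x 0) ^ 2 - u x 0 ^ 2) / 2 =
      ∫ z, Real.exp (-∫ s in (0 : ℝ)..z.2, a s) *
        (μ * R * (vx z.1 z.2 / v z.1 z.2) * dquot v vx θ θx z.1 z.2
          + μ * (ux z.1 z.2 * (ux z.1 z.2 / v z.1 z.2))
          - a z.2 * (((μ * (vx z.1 z.2 / v z.1 z.2) - u z.1 z.2) ^ 2 - u z.1 z.2 ^ 2) / 2))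
        ∂(slab T) := by
  obtain ⟨b1, b2, b3, b4, b5, b6⟩ := F.slab_base hT
  obtain ⟨s1, s2, s3, s4, s5⟩ := F.slab_second hT
  have mw : Measurable fun z : ℝ × ℝ => μ * (vx z.1 z.2 / v z.1 z.2) - u z.1 z.2 :=
    ((F.mvx.div F.mv).const_mul μ).sub F.mu
  have m1 := F.m_dquot F.mux F.muxx
  have m3 := F.m_dquot F.mθ F.mθx
  have lw0 : ∀ t, 0 ≤ t → MemLp (fun x => μ * (vx x t / v x t) - u x t) 2 := fun t ht =>
    ((F.memLp_vx_div ht).const_mul μ).sub (F.Lu t ht)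
  obtain ⟨i1, e1⟩ := weighted_energy hT (w := fun x t => μ * (vx x t / v x t) - u x t)
    (f := fun x t => R * dquot v vx θ θx x t) mw (m3.const_mul R) ma ha0 haB
    (((F.slab_div F.mvx b4).const_mul μ).sub b2) (s3.const_mul R) (lw0 0 le_rfl) (lw0 T hT.le)
    (fun t ht => by
      rcases ht.1.eq_or_lt with h | h
      · subst h; simp
      · exact F.effective_evolution h)
  obtain ⟨i2, e2⟩ := weighted_energy hT (w := u)
    (f := fun x t => μ * dquot v vx ux uxx x t - R * dquot v vx θ θx x t) F.mu
    ((m1.const_mul μ).sub (m3.const_mul R)) ma ha0 haB b2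
    ((s1.const_mul μ).sub (s3.const_mul R)) (F.Lu 0 le_rfl) (F.Lu T hT.le)
    (fun t ht => by
      rcases ht.1.eq_or_lt with h | h
      · subst h; simp
      · exact F.velocity_evolution h)
  have hai : ∀ p q, IntervalIntegrable a volume p q := fun p q =>
    (intervalIntegrable_const (c := B)).mono_fun ma.aestronglyMeasurable (ae_of_all _ fun t => by
      simp only [Real.norm_of_nonneg (ha0 t), Real.norm_of_nonneg ((ha0 t).trans (haB t))]
      exact haB t)
  have cρ : Continuous fun t => Real.exp (-∫ s in (0 : ℝ)..t, a s) :=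
    Real.continuous_exp.comp (intervalIntegral.continuous_primitive hai 0).neg
  have hρ1 : ∀ t, 0 ≤ t → Real.exp (-∫ s in (0 : ℝ)..t, a s) ≤ 1 := fun t ht => by
    rw [Real.exp_le_one_iff, neg_nonpos]
    exact intervalIntegral.integral_nonneg ht fun s _ => ha0 s
  have mρ : Measurable fun z : ℝ × ℝ => Real.exp (-∫ s in (0 : ℝ)..z.2, a s) :=
    cρ.measurable.comp measurable_snd
  set ρ : ℝ → ℝ := fun t => Real.exp (-∫ s in (0 : ℝ)..t, a s) with hρ
  have lρ : ∀ {f : ℝ → ℝ → ℝ}, (Measurable fun z : ℝ × ℝ => f z.1 z.2) →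
      MemLp (fun z : ℝ × ℝ => f z.1 z.2) 2 (slab T) →
      MemLp (fun z : ℝ × ℝ => ρ z.2 * f z.1 z.2) 2 (slab T) := fun {f} mf lf => by
    refine MemLp.of_bdd (C := 1) lf (mρ.mul mf) ?_
    refine ae_slab (P := fun x t => |ρ t * f x t| ≤ 1 * |f x t|) fun t ht x => ?_
    rw [abs_mul, abs_of_pos (Real.exp_pos _)]
    exact mul_le_mul_of_nonneg_right (hρ1 t ht.1) (abs_nonneg _)
  have ib := ibp_slab (T := T) (f := fun x t => ρ t * u x t) (fx := fun x t => ρ t * ux x t)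
    (g := fun x t => ux x t / v x t) (gx := dquot v vx ux uxx)
    (fun x t => (F.du x t).const_mul _)
    (fun x t => hasDerivAt_dquot (F.vpos x t).ne' (F.dv x t) (F.dux x t))
    (mρ.mul F.mu) (mρ.mul F.mux) (F.mux.div F.mv) m1 (lρ F.mu b2) (lρ F.mux b5)
    (F.slab_div F.mux b5) s1
  have j1 := memLp_two_mul (lρ F.mu b2) s1
  have j2 := memLp_two_mul (lρ F.mux b5) (F.slab_div F.mux b5)
  have i3 := ((i1.sub i2).const_mul (1 / 2)).add ((j1.add j2).const_mul μ)
  have hcon : ∀ z : ℝ × ℝ, 1 / 2 * (ρ z.2 *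
        (2 * (μ * (vx z.1 z.2 / v z.1 z.2) - u z.1 z.2) * (R * dquot v vx θ θx z.1 z.2)
          - a z.2 * (μ * (vx z.1 z.2 / v z.1 z.2) - u z.1 z.2) ^ 2)
        - ρ z.2 * (2 * u z.1 z.2 * (μ * dquot v vx ux uxx z.1 z.2 - R * dquot v vx θ θx z.1 z.2)
          - a z.2 * u z.1 z.2 ^ 2))
        + μ * (ρ z.2 * u z.1 z.2 * dquot v vx ux uxx z.1 z.2
          + ρ z.2 * ux z.1 z.2 * (ux z.1 z.2 / v z.1 z.2))
      = ρ z.2 *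
        (μ * R * (vx z.1 z.2 / v z.1 z.2) * dquot v vx θ θx z.1 z.2
          + μ * (ux z.1 z.2 * (ux z.1 z.2 / v z.1 z.2))
          - a z.2 * (((μ * (vx z.1 z.2 / v z.1 z.2) - u z.1 z.2) ^ 2 - u z.1 z.2 ^ 2) / 2)) :=
    fun z => by ring
  refine ⟨i3.congr (ae_of_all _ hcon), ?_⟩
  have tot := integral_add ((i1.sub i2).const_mul (1 / 2)) ((j1.add j2).const_mul μ)
  rw [integral_const_mul, integral_const_mul] at tot
  have q1 := integral_sub i1 i2
  have q2 := integral_add j1 j2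
  simp only [Pi.sub_apply, Pi.add_apply] at tot q1 q2 ib e1 e2
  rw [q1, q2, ← e1, ← e2, ib] at tot
  refine Eq.trans ?_ (tot.symm.trans (integral_congr_ae (ae_of_all _ hcon)))
  have hS : ∀ t, 0 ≤ t → ∫ x, ((μ * (vx x t / v x t) - u x t) ^ 2 - u x t ^ 2) / 2 =
      ((∫ x, (μ * (vx x t / v x t) - u x t) ^ 2) - ∫ x, u x t ^ 2) / 2 := fun t ht => by
    rw [integral_div, integral_sub (lw0 t ht).integrable_sq (F.Lu t ht).integrable_sq]
  rw [hS 0 le_rfl, hS T hT.le]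
  ring

end NSFlow

/-! ### Pointwise control of the cross term -/

/-- Above temperature `4` the reciprocal of the weight is controlled by `2 θ + u⁴`. -/
lemma one_le_wgt_mul {cv : ℝ} (hcv : 0 < cv) (u θ : ℝ → ℝ → ℝ) (x t : ℝ) (h : 4 < θ x t) :
    1 ≤ wgt cv u θ x t * ((1 + 1 / cv ^ 2) * (cv + 1) * (2 * θ x t + u x t ^ 4)) := by
  have hz : exc cv u θ x t = cv * θ x t + u x t ^ 2 / 2 - 3 * cv :=
    max_eq_left (by nlinarith [sq_nonneg (u x t)])
  have hz1 : cv ≤ exc cv u θ x t := by rw [hz]; nlinarith [sq_nonneg (u x t)]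
  have hz2 : exc cv u θ x t ≤ (cv + 1) * (2 * θ x t + u x t ^ 4) := by
    have e : u x t ^ 4 = (u x t ^ 2) ^ 2 := by ring
    have f : u x t ^ 2 ≤ θ x t + u x t ^ 4 := by rw [e]; nlinarith [sq_nonneg (u x t ^ 2 - 1)]
    have g : 0 ≤ cv * (θ x t + u x t ^ 4) := by positivity
    rw [hz]
    nlinarith [sq_nonneg (u x t)]
  unfold wgt
  set z := exc cv u θ x t
  have hz0 : 0 < z := hcv.trans_le hz1
  rw [div_mul_eq_mul_div, le_div_iff₀ (by positivity), one_mul]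
  have k : 1 ≤ 1 / cv ^ 2 * z ^ 2 := by
    rw [div_mul_eq_mul_div, le_div_iff₀ (by positivity)]
    nlinarith
  calc 1 + z ^ 2 ≤ (1 + 1 / cv ^ 2) * (z * z) := by nlinarith
    _ ≤ (1 + 1 / cv ^ 2) * (z * ((cv + 1) * (2 * θ x t + u x t ^ 4))) := by gcongr
    _ = _ := by ring

/-- Cauchy's inequality for the cross term, using the entropy dissipation for `θ ≤ 4` and the
weighted gradient bound for `θ > 4`. -/
lemma cross_pointwise {θ ε δ Q g u4 θx p : ℝ} (hθ : 0 < θ) (hε : 0 < ε) (hε1 : ε ≤ 1)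
    (hδ : 0 < δ) (hQ : 1 ≤ Q) (hg : 0 ≤ g) (hu : 0 ≤ u4)
    (h : 4 < θ → 1 ≤ g * (Q * (2 * θ + u4))) :
    |θx * p| ≤ δ * Q * (2 * θ + ε + u4) * p ^ 2 + 5 / (4 * δ) * (θx ^ 2 / (θ + ε) ^ 2)
      + 5 / (4 * δ) * (g * θx ^ 2) := by
  have amgm : ∀ s : ℝ, 0 < s → |θx * p| ≤ δ * s * p ^ 2 + θx ^ 2 / (4 * δ * s) := fun s hs => by
    have e1 : δ * s * p ^ 2 + θx ^ 2 / (4 * δ * s) - θx * p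
        = (2 * δ * s * p - θx) ^ 2 / (4 * δ * s) := by field_simp; ring
    have e2 : δ * s * p ^ 2 + θx ^ 2 / (4 * δ * s) + θx * p
        = (2 * δ * s * p + θx) ^ 2 / (4 * δ * s) := by field_simp; ring
    have n1 : 0 ≤ (2 * δ * s * p - θx) ^ 2 / (4 * δ * s) := by positivity
    have n2 : 0 ≤ (2 * δ * s * p + θx) ^ 2 / (4 * δ * s) := by positivity
    exact abs_le.2 ⟨by linarith, by linarith⟩
  have nn1 : 0 ≤ 5 / (4 * δ) * (θx ^ 2 / (θ + ε) ^ 2) := by positivity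
  have nn2 : 0 ≤ 5 / (4 * δ) * (g * θx ^ 2) := by positivity
  rcases le_or_gt θ 4 with h4 | h4
  · have a := amgm (θ + ε) (by positivity)
    have b : θx ^ 2 / (4 * δ * (θ + ε)) ≤ 5 / (4 * δ) * (θx ^ 2 / (θ + ε) ^ 2) := by
      calc θx ^ 2 / (4 * δ * (θ + ε)) = (θ + ε) / (4 * δ) * (θx ^ 2 / (θ + ε) ^ 2) := by
            field_simp
        _ ≤ _ := by gcongr; linarith
    have c : δ * (θ + ε) * p ^ 2 ≤ δ * Q * (2 * θ + ε + u4) * p ^ 2 := by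
      have : δ * 1 * (θ + ε) * p ^ 2 ≤ δ * Q * (2 * θ + ε + u4) * p ^ 2 := by
        have q : θ + ε ≤ 2 * θ + ε + u4 := by linarith
        exact mul_le_mul_of_nonneg_right
          (mul_le_mul (by gcongr) q (by positivity) (by positivity)) (sq_nonneg p)
      linarith
    linarith
  · have hs : 0 < Q * (2 * θ + u4) := by positivity
    have a := amgm _ hs
    have b : θx ^ 2 / (4 * δ * (Q * (2 * θ + u4))) ≤ 5 / (4 * δ) * (g * θx ^ 2) := by
      calc θx ^ 2 / (4 * δ * (Q * (2 * θ + u4))) =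
            1 / (4 * δ) * (1 / (Q * (2 * θ + u4)) * θx ^ 2) := by field_simp
        _ ≤ 5 / (4 * δ) * (g * θx ^ 2) := by
            gcongr
            · norm_num
            · rw [div_le_iff₀ hs]; exact h h4
    have c : δ * (Q * (2 * θ + u4)) * p ^ 2 ≤ δ * Q * (2 * θ + ε + u4) * p ^ 2 := by
      calc _ = δ * Q * (2 * θ + u4) * p ^ 2 := by ring
        _ ≤ _ := by gcongr; linarith
    linarith

/-- The integrand of the weighted balance is bounded by the good term and controlled terms;
the part of the cross term carrying `u⁴` is absorbed by the exponential weight. -/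
lemma vxest_pointwise {μ R K Q E I ε v u θ θx ux p g d ρ ρ0 : ℝ} (hμ : 0 < μ) (hR : 0 < R)
    (hK : 0 < K) (hQ : 1 ≤ Q) (hE : 0 < E) (hI : 0 ≤ I) (hε : 0 < ε) (hε1 : ε ≤ 1) (hv : 0 < v)
    (hvK : v ≤ K) (hvK' : 1 / v ≤ K) (hθ : 0 < θ) (hg : 0 ≤ g)
    (h : 4 < θ → 1 ≤ g * (Q * (2 * θ + u ^ 4))) (hu : u ^ 4 ≤ 4 * E * I)
    (hd : θx ^ 2 / (θ + ε) ^ 2 ≤ d) (hρ0 : 0 ≤ ρ0) (h0ρ : ρ0 ≤ ρ) (hρ1 : ρ ≤ 1) :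
    ρ * (μ * R * (p / v) * (θx / v - θ * p / v ^ 2) + μ * (ux * (ux / v))
        - 4 * R * E / (μ * K) * I * (((μ * (p / v) - u) ^ 2 - u ^ 2) / 2))
    ≤ -(ρ0 * (μ * R / (2 * K ^ 3))) * (θ * p ^ 2) + μ * R / (4 * K ^ 3) * (ε * p ^ 2)
      + 5 * μ * R * Q * K ^ 7 * d + 5 * μ * R * Q * K ^ 7 * (g * θx ^ 2) + μ * K * ux ^ 2
      + 4 * R * E / (μ * K) * I * u ^ 2 := by
  have hiv : 1 / K ≤ 1 / v := one_div_le_one_div_of_le hv hvK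
  have hv0 : 0 < 1 / v := by positivity
  set i := 1 / v with hi
  have hQ0 : 0 < Q := by linarith
  set a := 4 * R * E / (μ * K) * I with ha
  have ha0 : 0 ≤ a := by positivity
  have cr := cross_pointwise (θx := θx) (p := p) (δ := 1 / (4 * Q * K ^ 5)) hθ hε hε1
    (by positivity) hQ hg (by positivity : 0 ≤ u ^ 4) h
  have e : μ * R * (p / v) * (θx / v - θ * p / v ^ 2) + μ * (ux * (ux / v))
        - a * (((μ * (p / v) - u) ^ 2 - u ^ 2) / 2)
      = μ * R * i ^ 2 * (θx * p) - μ * R * i ^ 3 * (θ * p ^ 2) + μ * i * ux ^ 2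
        - a * (((μ * (p * i) - u) ^ 2 - u ^ 2) / 2) := by
    rw [hi]; ring
  have p1 : μ * R * i ^ 2 * (θx * p) ≤ μ * R * K ^ 2 * |θx * p| := by
    calc _ ≤ μ * R * i ^ 2 * |θx * p| := by gcongr; exact le_abs_self _
      _ ≤ _ := by gcongr
  have p1' := mul_le_mul_of_nonneg_left cr (by positivity : 0 ≤ μ * R * K ^ 2)
  have p1b : μ * R * K ^ 2 * (1 / (4 * Q * K ^ 5) * Q * (2 * θ + ε + u ^ 4) * p ^ 2
      + 5 / (4 * (1 / (4 * Q * K ^ 5))) * (θx ^ 2 / (θ + ε) ^ 2)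
      + 5 / (4 * (1 / (4 * Q * K ^ 5))) * (g * θx ^ 2))
      = μ * R / (4 * K ^ 3) * ((2 * θ + ε + u ^ 4) * p ^ 2)
        + 5 * μ * R * Q * K ^ 7 * (θx ^ 2 / (θ + ε) ^ 2)
        + 5 * μ * R * Q * K ^ 7 * (g * θx ^ 2) := by
    field_simp
  have p2 : μ * R / K ^ 3 * (θ * p ^ 2) ≤ μ * R * i ^ 3 * (θ * p ^ 2) := by
    calc _ = μ * R * (1 / K) ^ 3 * (θ * p ^ 2) := by field_simp
      _ ≤ _ := by gcongr
  have p3 : μ * i * ux ^ 2 ≤ μ * K * ux ^ 2 := by gcongr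
  have p4 : -(a * (((μ * (p * i) - u) ^ 2 - u ^ 2) / 2)) ≤
      -(a * (μ * (p * i)) ^ 2 / 4) + a * u ^ 2 := by
    have := mul_nonneg ha0 (sq_nonneg (μ * (p * i) / 2 - u))
    linarith
  have p5 : μ * R / (4 * K ^ 3) * (u ^ 4 * p ^ 2) ≤ a * (μ * (p * i)) ^ 2 / 4 := by
    calc _ ≤ μ * R / (4 * K ^ 3) * (4 * E * I * p ^ 2) := by gcongr
      _ = a * (μ ^ 2 * p ^ 2 * (1 / K) ^ 2) / 4 := by rw [ha]; field_simp
      _ ≤ a * (μ ^ 2 * p ^ 2 * i ^ 2) / 4 := by gcongr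
      _ = _ := by ring
  have p6 : 5 * μ * R * Q * K ^ 7 * (θx ^ 2 / (θ + ε) ^ 2) ≤ 5 * μ * R * Q * K ^ 7 * d := by
    gcongr
  have hd0 : 0 ≤ d := le_trans (by positivity) hd
  set P := μ * R / (4 * K ^ 3) * (ε * p ^ 2)
      + 5 * μ * R * Q * K ^ 7 * d + 5 * μ * R * Q * K ^ 7 * (g * θx ^ 2) + μ * K * ux ^ 2
      + a * u ^ 2 with hP
  have hP0 : 0 ≤ P := by positivity
  have c2 : μ * R / (4 * K ^ 3) = μ * R / (2 * K ^ 3) / 2 := by field_simp; norm_num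
  have c1 : μ * R / K ^ 3 = 2 * (μ * R / (2 * K ^ 3)) := by field_simp
  have main : μ * R * (p / v) * (θx / v - θ * p / v ^ 2) + μ * (ux * (ux / v))
        - a * (((μ * (p / v) - u) ^ 2 - u ^ 2) / 2) ≤
        -(μ * R / (2 * K ^ 3) * (θ * p ^ 2)) + P := by
    rw [e, hP]
    rw [p1b] at p1'
    have s : μ * R / (4 * K ^ 3) * ((2 * θ + ε + u ^ 4) * p ^ 2)
        = μ * R / (2 * K ^ 3) * (θ * p ^ 2) + μ * R / (4 * K ^ 3) * (ε * p ^ 2)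
          + μ * R / (4 * K ^ 3) * (u ^ 4 * p ^ 2) := by field_simp; ring
    rw [s] at p1'
    rw [c1, mul_assoc] at p2
    clear_value a i
    clear e hP hP0 cr c1 c2 s p1b
    generalize θx ^ 2 / (θ + ε) ^ 2 = D at *
    generalize μ * R / (2 * K ^ 3) * (θ * p ^ 2) = G at *
    generalize μ * R / (4 * K ^ 3) * (u ^ 4 * p ^ 2) = U at *
    generalize μ * R / (4 * K ^ 3) * (ε * p ^ 2) = W at *
    linarith
  have hρ : 0 ≤ ρ := hρ0.trans h0ρ
  have n : 0 ≤ μ * R / (2 * K ^ 3) * (θ * p ^ 2) := by positivity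
  calc _ ≤ ρ * (-(μ * R / (2 * K ^ 3) * (θ * p ^ 2)) + P) := mul_le_mul_of_nonneg_left main hρ
    _ = -(ρ * (μ * R / (2 * K ^ 3) * (θ * p ^ 2))) + ρ * P := by ring
    _ ≤ -(ρ0 * (μ * R / (2 * K ^ 3) * (θ * p ^ 2))) + 1 * P := by gcongr
    _ = _ := by rw [hP]; ring

/-! ### The gradient of the specific volume -/

set_option maxHeartbeats 1000000 in
/-- Uniform bound for the gradient of the specific volume. -/
lemma vx_bound {μ κ R cv M m K : ℝ} (hp : PosParams μ κ R cv M m K) :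
    ∃ C : ℝ, 0 < C ∧ ∀ {T ε : ℝ} {v u θ vx ux θx uxx θxx : ℝ → ℝ → ℝ},
      NSData μ κ R cv M m K T ε v u θ vx ux θx uxx θxx →
      Integrable (fun z : ℝ × ℝ => θ z.1 z.2 * vx z.1 z.2 ^ 2) (slab T) ∧
      (∫ x, vx x T ^ 2) ≤ C ∧ ∫ z, θ z.1 z.2 * vx z.1 z.2 ^ 2 ∂(slab T) ≤ C := by
  obtain ⟨E, hE1, hE⟩ := wgt_estimate hp
  have h1 := hp.μ
  have h3 := hp.R
  have h4 := hp.cv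
  have h5 := hp.M
  have h7 : 0 < K := one_pos.trans_le hp.K
  have hE0 : 0 < E := by linarith
  set Q := (1 + 1 / cv ^ 2) * (cv + 1) with hQ
  have hQ1 : 1 ≤ Q := by
    have : 0 < 1 / cv ^ 2 := by positivity
    rw [hQ]; nlinarith
  have hQ0 : 0 < Q := by linarith
  set A := 4 * R * E / (μ * K) with hA
  have hA0 : 0 < A := by positivity
  set ρ0 := Real.exp (-(A * E)) with hρ0
  have hρ00 : 0 < ρ0 := Real.exp_pos _
  set c := μ * R / (2 * K ^ 3) with hc
  have hc0 : 0 < c := by positivity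
  set C1 := 5 * μ * R * Q * K ^ 7 with hC1
  have hC10 : 0 < C1 := by positivity
  set c' := μ ^ 2 / (4 * K ^ 2) with hc'
  have hc'0 : 0 < c' := by positivity
  set X := (μ ^ 2 * K ^ 2 * M + M) + μ * R / (4 * K ^ 3) + C1 * E + C1 * E + μ * K * E
    + E * (A * E) + E with hX
  have hX0 : 0 < X := by positivity
  have r1 : 0 < X / (ρ0 * c) := by positivity
  have r2 : 0 < X / (ρ0 * c') := by positivity
  refine ⟨X / (ρ0 * c) + X / (ρ0 * c'), by positivity, ?_⟩
  intro T ε v u θ vx ux θx uxx θxx D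
  have F := D.toNSFlow
  have hT := D.hT
  obtain ⟨e1, e2, e3, iw, e5⟩ := hE D
  obtain ⟨b1, b2, b3, b4, b5, b6⟩ := F.slab_base D.hT
  obtain ⟨S, hS1, hS⟩ := F.sup_bound D.hT
  obtain ⟨B, hB⟩ := F.bdd T hT.le
  have hB0 : 0 ≤ B := (integral_nonneg fun _ => sq_nonneg _).trans (hB 0 ⟨le_rfl, hT.le⟩).1
  have iθ : Integrable (fun z : ℝ × ℝ => θ z.1 z.2 * vx z.1 z.2 ^ 2) (slab T) := by
    refine integrable_of_bdd (C := S) b4.integrable_sq (F.mθ.mul (F.mvx.pow_const 2)) ?_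
    refine ae_slab (P := fun x t => |θ x t * vx x t ^ 2| ≤ S * |vx x t ^ 2|) fun t ht x => ?_
    rw [abs_mul, abs_of_pos (F.θpos x t)]
    exact mul_le_mul_of_nonneg_right (hS t ht x).2 (abs_nonneg _)
  refine ⟨iθ, ?_⟩
  -- `J` is the exponential rate; the indicator makes it bounded and measurable on all of `ℝ`
  set J : ℝ → ℝ := (Icc (0 : ℝ) T).indicator fun t => ∫ x, ux x t ^ 2 with hJ
  have J_in : ∀ t ∈ Icc (0 : ℝ) T, J t = ∫ x, ux x t ^ 2 := fun t ht => indicator_of_mem ht _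
  have mJ : Measurable J :=
    ((F.mux.pow_const 2).stronglyMeasurable.integral_prod_left' (μ := volume)).measurable.indicator
      measurableSet_Icc
  have J0 : ∀ t, 0 ≤ J t := fun t =>
    indicator_nonneg (fun s _ => integral_nonneg fun x => sq_nonneg _) t
  have JB : ∀ t, J t ≤ B := fun t => by
    by_cases ht : t ∈ Icc (0 : ℝ) T
    · rw [J_in t ht]; exact (hB t ht).2.2.2.2.1
    · rw [hJ, indicator_of_notMem ht]; exact hB0
  have aB : ∀ t, A * J t ≤ A * B := fun t => mul_le_mul_of_nonneg_left (JB t) hA0.le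
  have a0 : ∀ t, 0 ≤ A * J t := fun t => mul_nonneg hA0.le (J0 t)
  have hai : ∀ p q, IntervalIntegrable (fun t => A * J t) volume p q := fun p q =>
    (intervalIntegrable_const (c := A * B)).mono_fun (mJ.const_mul A).aestronglyMeasurable
      (ae_of_all _ fun t => by
        simp only [Real.norm_of_nonneg (a0 t), Real.norm_of_nonneg ((a0 t).trans (aB t))]
        exact aB t)
  have hJE : ∫ s in (0 : ℝ)..T, A * J s ≤ A * E := by
    rw [intervalIntegral.integral_of_le hT.le, ← integral_Icc_eq_integral_Ioc, integral_const_mul]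
    refine mul_le_mul_of_nonneg_left (le_trans (le_of_eq ?_) e3) hA0.le
    rw [integral_prod_symm _ b5.integrable_sq]
    exact setIntegral_congr_fun measurableSet_Icc J_in
  have hρ_low : ∀ t ∈ Icc (0 : ℝ) T, ρ0 ≤ Real.exp (-∫ s in (0 : ℝ)..t, A * J s) := fun t ht => by
    refine Real.exp_le_exp.2 (neg_le_neg (le_trans ?_ hJE))
    exact intervalIntegral.integral_mono_interval le_rfl ht.1 ht.2 (ae_of_all _ a0) (hai 0 T)
  have hρ1 : ∀ t, 0 ≤ t → Real.exp (-∫ s in (0 : ℝ)..t, A * J s) ≤ 1 := fun t ht => by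
    rw [Real.exp_le_one_iff, neg_nonpos]
    exact intervalIntegral.integral_nonneg ht fun s _ => a0 s
  obtain ⟨g1, g2⟩ := F.vx_balance hT (mJ.const_mul A) a0 aB
  obtain ⟨n1, n2⟩ := slice_bound (T := T) (E := E)
    (h := fun x t => A * J t * u x t ^ 2)
    (k := fun x t => u x t ^ 2) (β := fun x t => A * ux x t ^ 2)
    (((mJ.comp measurable_snd).const_mul A).mul (F.mu.pow_const 2))
    (fun x t => mul_nonneg (a0 t) (sq_nonneg _))
    (fun t ht => (F.Lu t ht.1).integrable_sq) e1
    (fun x t => by positivity) (b5.integrable_sq.const_mul A) (fun t ht _ x => by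
      rw [integral_const_mul, J_in t ht])
  rw [integral_const_mul] at n2
  have k1 := iθ.const_mul (-(ρ0 * c))
  have k2 := (b4.integrable_sq.const_mul ε).const_mul (μ * R / (4 * K ^ 3))
  have k3 := (F.integrable_dis D.ε0 hT).const_mul C1
  have k4 := iw.const_mul C1
  have k5 := b5.integrable_sq.const_mul (μ * K)
  have key := integral_mono_ae g1 (((((k1.add k2).add k3).add k4).add k5).add n1) (by
    refine ae_slab (P := fun x t => Real.exp (-∫ s in (0 : ℝ)..t, A * J s) *
        (μ * R * (vx x t / v x t) * dquot v vx θ θx x t + μ * (ux x t * (ux x t / v x t))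
          - A * J t * (((μ * (vx x t / v x t) - u x t) ^ 2 - u x t ^ 2) / 2)) ≤
        -(ρ0 * c) * (θ x t * vx x t ^ 2) + μ * R / (4 * K ^ 3) * (ε * vx x t ^ 2)
        + C1 * disRate ε θ θx ux x t + C1 * (wgt cv u θ x t * θx x t ^ 2) + μ * K * ux x t ^ 2
        + A * J t * u x t ^ 2) fun t ht x => ?_
    refine vxest_pointwise h1 h3 h7 hQ1 hE0 (J0 t) D.ε0 D.ε1 (F.vpos x t) (F.vK x t).2
      (F.inv_v_le x t) (F.θpos x t) (wgt_nonneg cv u θ x t) (one_le_wgt_mul h4 u θ x t) ?_ ?_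
      hρ00.le (hρ_low t ht) (hρ1 t ht.1)
    · rw [J_in t ht]
      have nb : 0 ≤ ∫ y, ux y t ^ 2 := integral_nonneg fun y => sq_nonneg _
      refine (pow_four_le_of_memLp (fun x => F.du x t) (F.Lu t ht.1) (F.Lux t ht.1) x).trans ?_
      have := e1 t ht
      gcongr
    · have := F.θpos x t
      have := D.ε0
      have : 0 ≤ ux x t ^ 2 / (θ x t + ε) := by positivity
      unfold disRate; linarith)
  rw [← g2] at key
  have q5 := integral_add ((((k1.add k2).add k3).add k4).add k5) n1
  have q4 := integral_add (((k1.add k2).add k3).add k4) k5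
  have q3 := integral_add ((k1.add k2).add k3) k4
  have q2 := integral_add (k1.add k2) k3
  have q1 := integral_add k1 k2
  rw [integral_const_mul] at q1 q2 q3 q4
  rw [integral_const_mul, integral_const_mul] at q1
  simp only [Pi.add_apply] at key q1 q2 q3 q4 q5
  rw [q5, q4, q3, q2, q1] at key
  have hεv : ε * ∫ z, vx z.1 z.2 ^ 2 ∂(slab T) ≤ 1 := by
    refine le_trans (mul_le_mul_of_nonneg_left ?_ D.ε0.le) D.hε
    exact integral_mono b4.integrable_sq (b3.integrable_sq.add b4.integrable_sq)
      fun z => le_add_of_nonneg_left (sq_nonneg _)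
  have lw0 : ∀ t, 0 ≤ t → Integrable fun x =>
      ((μ * (vx x t / v x t) - u x t) ^ 2 - u x t ^ 2) / 2 := fun t ht =>
    ((((F.memLp_vx_div ht).const_mul μ).sub (F.Lu t ht)).integrable_sq.sub
      (F.Lu t ht).integrable_sq).div_const 2
  have hS0 : ∫ x, ((μ * (vx x 0 / v x 0) - u x 0) ^ 2 - u x 0 ^ 2) / 2 ≤
      μ ^ 2 * K ^ 2 * M + M := by
    have j1 := (F.Lvx 0 le_rfl).integrable_sq.const_mul (μ ^ 2 * K ^ 2)
    have j2 := (F.Lu 0 le_rfl).integrable_sq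
    have a := integral_mono (lw0 0 le_rfl) (j1.add j2) (fun x => by
      have hi := F.inv_v_le x 0
      have hv := F.vpos x 0
      have : (μ * (vx x 0 / v x 0)) ^ 2 ≤ μ ^ 2 * K ^ 2 * vx x 0 ^ 2 := by
        calc _ = μ ^ 2 * (1 / v x 0) ^ 2 * vx x 0 ^ 2 := by ring
          _ ≤ _ := by gcongr
      simp only [Pi.add_apply]
      nlinarith [sq_nonneg (μ * (vx x 0 / v x 0) + u x 0), sq_nonneg (u x 0)])
    have b := integral_add j1 j2
    rw [integral_const_mul] at b
    simp only [Pi.add_apply] at a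
    rw [b] at a
    refine a.trans (add_le_add (mul_le_mul_of_nonneg_left D.i_vx (by positivity)) D.i_u)
  have hST : c' * (∫ x, vx x T ^ 2) - E ≤
      ∫ x, ((μ * (vx x T / v x T) - u x T) ^ 2 - u x T ^ 2) / 2 := by
    have j1 := (F.Lvx T hT.le).integrable_sq.const_mul c'
    have j2 := (F.Lu T hT.le).integrable_sq
    have a := integral_mono (j1.sub j2) (lw0 T hT.le) (fun x => by
      have hv := F.vpos x T
      have hi : 1 / K ≤ 1 / v x T := one_div_le_one_div_of_le hv (F.vK x T).2
      have : c' * vx x T ^ 2 ≤ (μ * (vx x T / v x T)) ^ 2 / 4 := by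
        calc _ = μ ^ 2 * (1 / K) ^ 2 * vx x T ^ 2 / 4 := by rw [hc']; field_simp
          _ ≤ μ ^ 2 * (1 / v x T) ^ 2 * vx x T ^ 2 / 4 := by gcongr
          _ = _ := by ring
      simp only [Pi.sub_apply]
      nlinarith [sq_nonneg (μ * (vx x T / v x T) / 2 - u x T)])
    have b := integral_sub j1 j2
    rw [integral_const_mul] at b
    simp only [Pi.sub_apply] at a
    rw [b] at a
    linarith [e1 T ⟨hT.le, le_rfl⟩]
  have V0 : 0 ≤ ∫ x, vx x T ^ 2 := integral_nonneg fun _ => sq_nonneg _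
  have W0 : 0 ≤ ∫ z, θ z.1 z.2 * vx z.1 z.2 ^ 2 ∂(slab T) :=
    integral_nonneg fun z => mul_nonneg (F.θpos _ _).le (sq_nonneg _)
  have hST' : ρ0 * (c' * ∫ x, vx x T ^ 2) - E ≤ Real.exp (-∫ s in (0 : ℝ)..T, A * J s) *
      ∫ x, ((μ * (vx x T / v x T) - u x T) ^ 2 - u x T ^ 2) / 2 := by
    have r := hρ_low T ⟨hT.le, le_rfl⟩
    have r' := hρ1 T hT.le
    have p0 := (Real.exp_pos (-∫ s in (0 : ℝ)..T, A * J s)).le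
    have s1 := mul_le_mul_of_nonneg_left hST p0
    have s2 := mul_le_mul_of_nonneg_right r (mul_nonneg hc'0.le V0)
    have s3 := mul_le_mul_of_nonneg_right r' hE0.le
    linarith
  have t1 := mul_le_mul_of_nonneg_left hεv (by positivity : 0 ≤ μ * R / (4 * K ^ 3))
  have t2 := mul_le_mul_of_nonneg_left e2 hC10.le
  have t3 := mul_le_mul_of_nonneg_left e5 hC10.le
  have t4 := mul_le_mul_of_nonneg_left e3 (by positivity : 0 ≤ μ * K)
  have t5 : E * (A * ∫ z, ux z.1 z.2 ^ 2 ∂(slab T)) ≤ E * (A * E) := by gcongr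
  have fin : ρ0 * c' * (∫ x, vx x T ^ 2)
      + ρ0 * c * ∫ z, θ z.1 z.2 * vx z.1 z.2 ^ 2 ∂(slab T) ≤ X := by
    rw [hX]; linarith
  have z1 : 0 ≤ ρ0 * c' * ∫ x, vx x T ^ 2 := by positivity
  have z2 : 0 ≤ ρ0 * c * ∫ z, θ z.1 z.2 * vx z.1 z.2 ^ 2 ∂(slab T) := by positivity
  constructor
  · refine le_trans ?_ (le_add_of_nonneg_left r1.le)
    rw [le_div_iff₀ (by positivity)]; linarith
  · refine le_trans ?_ (le_add_of_nonneg_right r2.le)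
    rw [le_div_iff₀ (by positivity)]; linarith

/-! ### From classical solutions to flows -/

lemma eLpNorm_two_sq (f : ℝ → ℝ) : eLpNorm f 2 volume ^ 2 = ∫⁻ x, ENNReal.ofReal (f x ^ 2) := by
  have h := eLpNorm_nnreal_pow_eq_lintegral (f := f) (μ := volume) (p := 2) (by norm_num)
  have h2 : ((2 : NNReal) : ℝ) = ((2 : ℕ) : ℝ) := by norm_num
  rw [h2, ENNReal.rpow_natCast] at h
  rw [show ((2 : NNReal) : ENNReal) = 2 from rfl] at h
  rw [h]
  refine lintegral_congr fun x => ?_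
  rw [ENNReal.rpow_natCast, ← ofReal_norm, ← ENNReal.ofReal_pow (norm_nonneg _),
    Real.norm_eq_abs, sq_abs]

lemma memLp_and_integral_sq_le {f : ℝ → ℝ} (hf : Measurable f) {B : ℝ}
    (h : eLpNorm f 2 volume ≤ ENNReal.ofReal B) :
    MemLp f 2 ∧ ∫ x, f x ^ 2 ≤ B ^ 2 := by
  have hL : MemLp f 2 := ⟨hf.aestronglyMeasurable, h.trans_lt ENNReal.ofReal_lt_top⟩
  refine ⟨hL, ?_⟩
  rw [integral_eq_lintegral_of_nonneg_ae (Eventually.of_forall fun x => sq_nonneg _)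
    (hf.pow_const 2).aestronglyMeasurable, ← eLpNorm_two_sq]
  refine ENNReal.toReal_le_of_le_ofReal (sq_nonneg B) ?_
  calc eLpNorm f 2 volume ^ 2 ≤ ENNReal.ofReal B ^ 2 := by gcongr
    _ ≤ ENNReal.ofReal |B| ^ 2 := by gcongr; exact le_abs_self B
    _ = ENNReal.ofReal (B ^ 2) := by rw [← ENNReal.ofReal_pow (abs_nonneg B), sq_abs]

/-- A spatial derivative inherits measurability in time, being a pointwise limit of difference
quotients. -/
lemma measurable_time_of_hasDerivAt {f fx : ℝ → ℝ → ℝ}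
    (hd : ∀ x t, HasDerivAt (fun y => f y t) (fx x t) x)
    (hm : ∀ x, Measurable fun t => f x t) (x : ℝ) : Measurable fun t => fx x t := by
  have hs : Tendsto (fun n : ℕ => (1 : ℝ) / ((n : ℝ) + 1)) atTop (nhdsWithin 0 {0}ᶜ) := by
    refine tendsto_nhdsWithin_iff.2 ⟨tendsto_one_div_add_atTop_nhds_zero_nat, ?_⟩
    refine Eventually.of_forall fun n => ?_
    have : (0 : ℝ) < 1 / ((n : ℝ) + 1) := by positivity
    exact this.ne'
  refine measurable_of_tendsto_metrizable (f := fun (n : ℕ) t =>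
    (1 / ((n : ℝ) + 1))⁻¹ • (f (x + 1 / ((n : ℝ) + 1)) t - f x t)) (fun n => ?_) ?_
  · exact ((hm _).sub (hm _)).const_mul (1 / ((n : ℝ) + 1))⁻¹
  · exact tendsto_pi_nhds.2 fun t => (hasDerivAt_iff_tendsto_slope_zero.1 (hd x t)).comp hs

/-- Joint measurability of a function that is continuous in space and measurable in time. -/
lemma measurable_caratheodory {f : ℝ → ℝ → ℝ} (hc : ∀ t, Continuous fun x => f x t)
    (hm : ∀ x, Measurable fun t => f x t) : Measurable fun z : ℝ × ℝ => f z.1 z.2 :=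
  measurable_uncurry_of_continuous_of_measurable hc hm

lemma continuous_max_zero {g : ℝ → ℝ} (h : ∀ t, 0 ≤ t → DifferentiableAt ℝ g t) :
    Continuous fun t => g (max t 0) := by
  refine continuous_iff_continuousAt.2 fun t => ?_
  exact ContinuousAt.comp (g := g) (f := fun t => max t 0)
    (h _ (le_max_right _ _)).continuousAt (by fun_prop)

lemma hasDerivAt_max_zero {g : ℝ → ℝ} {t : ℝ} (ht : 0 < t) (h : DifferentiableAt ℝ g t) :
    HasDerivAt (fun s => g (max s 0)) (deriv g t) t := by
  refine h.hasDerivAt.congr_of_eventuallyEq ?_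
  filter_upwards [lt_mem_nhds ht] with s hs
  rw [max_eq_left hs.le]

lemma contDiff_two_facts {g : ℝ → ℝ} (h : ContDiff ℝ 2 g) :
    (∀ x, HasDerivAt g (deriv g x) x) ∧ (∀ x, HasDerivAt (deriv g) (deriv (deriv g) x) x) ∧
    Continuous g ∧ Continuous (deriv g) ∧ Continuous (deriv (deriv g)) := by
  have h1 : ContDiff ℝ 1 (deriv g) := by
    have : ContDiff ℝ (1 + 1) g := by simpa [one_add_one_eq_two] using h
    exact (contDiff_succ_iff_deriv.1 this).2.2
  refine ⟨fun x => (h.differentiable (by norm_num) x).hasDerivAt,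
    fun x => (h1.differentiable (by norm_num) x).hasDerivAt, h.continuous, h1.continuous,
    h1.continuous_deriv (by norm_num)⟩

/-- Functions in `L²(0, T; L²(ℝ))` are square integrable on the space-time slab. -/
lemma memLp_slab_of_lintegral {f : ℝ → ℝ → ℝ} (hm : Measurable fun z : ℝ × ℝ => f z.1 z.2) {T : ℝ}
    (h : ∫⁻ t in Icc (0 : ℝ) T, eLpNorm (fun x => f x t) 2 volume ^ 2 < ⊤) :
    MemLp (fun z : ℝ × ℝ => f z.1 z.2) 2 (slab T) := by
  rw [memLp_two_iff_integrable_sq hm.aestronglyMeasurable]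
  refine ⟨(hm.pow_const 2).aestronglyMeasurable, ?_⟩
  rw [hasFiniteIntegral_iff_ofReal (Eventually.of_forall fun z => sq_nonneg _), slab,
    lintegral_prod_symm _ (hm.pow_const 2).ennreal_ofReal.aemeasurable]
  simpa only [eLpNorm_two_sq] using h

section
variable {μ κ R cv K : ℝ} {v u θ : ℝ → ℝ → ℝ}

/-- `f` is frozen at its initial value for negative times. -/
def clampT (f : ℝ → ℝ → ℝ) (x t : ℝ) : ℝ := f x (max t 0)

lemma clampT_of_nonneg (f : ℝ → ℝ → ℝ) (x : ℝ) {t : ℝ} (ht : 0 ≤ t) : clampT f x t = f x t := by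
  rw [clampT, max_eq_left ht]

/-- The `H¹` bounds for a solution at one time, in integral form. -/
lemma H1_sum_bounds {t B : ℝ} (hv : ContDiff ℝ 2 fun x => v x t) (hu : ContDiff ℝ 2 fun x => u x t)
    (hθ : ContDiff ℝ 2 fun x => θ x t)
    (h : H1 (fun x => v x t - 1) + H1 (fun x => u x t) + H1 (fun x => θ x t - 1)
      ≤ ENNReal.ofReal B) :
    (MemLp (fun x => v x t - 1) 2 ∧ ∫ x, (v x t - 1) ^ 2 ≤ B ^ 2) ∧
    (MemLp (fun x => u x t) 2 ∧ ∫ x, u x t ^ 2 ≤ B ^ 2) ∧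
    (MemLp (fun x => θ x t - 1) 2 ∧ ∫ x, (θ x t - 1) ^ 2 ≤ B ^ 2) ∧
    (MemLp (fun x => pdx v x t) 2 ∧ ∫ x, pdx v x t ^ 2 ≤ B ^ 2) ∧
    (MemLp (fun x => pdx u x t) 2 ∧ ∫ x, pdx u x t ^ 2 ≤ B ^ 2) ∧
    (MemLp (fun x => pdx θ x t) 2 ∧ ∫ x, pdx θ x t ^ 2 ≤ B ^ 2) := by
  obtain ⟨-, -, v0, v1, -⟩ := contDiff_two_facts hv
  obtain ⟨-, -, u0, u1, -⟩ := contDiff_two_facts hu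
  obtain ⟨-, -, θ0, θ1, -⟩ := contDiff_two_facts hθ
  have e1 : deriv (fun x => v x t - 1) = fun x => pdx v x t := by
    funext x; simp [pdx]
  have e2 : deriv (fun x => θ x t - 1) = fun x => pdx θ x t := by
    funext x; simp [pdx]
  have e3 : deriv (fun x => u x t) = fun x => pdx u x t := rfl
  rw [H1, H1, H1, L2, L2, L2, L2, L2, L2, e1, e2, e3] at h
  refine ⟨?_, ?_, ?_, ?_, ?_, ?_⟩
  · refine memLp_and_integral_sq_le (f := fun x => v x t - 1)
      (v0.sub continuous_const).measurable (le_trans ?_ h)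
    exact le_self_add.trans (le_self_add.trans le_self_add)
  · refine memLp_and_integral_sq_le (f := fun x => u x t) u0.measurable (le_trans ?_ h)
    exact le_self_add.trans (le_add_self.trans le_self_add)
  · refine memLp_and_integral_sq_le (f := fun x => θ x t - 1)
      (θ0.sub continuous_const).measurable (le_trans ?_ h)
    exact le_self_add.trans le_add_self
  · refine memLp_and_integral_sq_le (f := fun x => pdx v x t) v1.measurable (le_trans ?_ h)
    exact le_add_self.trans (le_self_add.trans le_self_add)
  · refine memLp_and_integral_sq_le (f := fun x => pdx u x t) u1.measurable (le_trans ?_ h)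
    exact le_add_self.trans (le_add_self.trans le_self_add)
  · refine memLp_and_integral_sq_le (f := fun x => pdx θ x t) θ1.measurable (le_trans ?_ h)
    exact le_add_self.trans le_add_self

/-- A classical solution, extended by its initial data to negative times, is a flow. -/
lemma IsClassicalSolution.flow (hcv : 0 < cv) (S : IsClassicalSolution μ κ R cv v u θ)
    (hK : VolBounded K v) :
    NSFlow μ κ R cv K (clampT v) (clampT u) (clampT θ) (clampT (pdx v)) (clampT (pdx u))
      (clampT (pdx θ)) (clampT (pdx (pdx u))) (clampT (pdx (pdx θ))) := by
  have n0 : ∀ t : ℝ, 0 ≤ max t 0 := fun t => le_max_right _ _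
  have Fv := fun t => contDiff_two_facts (S.smooth_x_v _ (n0 t))
  have Fu := fun t => contDiff_two_facts (S.smooth_x_u _ (n0 t))
  have Fθ := fun t => contDiff_two_facts (S.smooth_x_θ _ (n0 t))
  have cv_t : ∀ x, Continuous fun t => clampT v x t := fun x =>
    continuous_max_zero (S.smooth_t_v x)
  have cu_t : ∀ x, Continuous fun t => clampT u x t := fun x =>
    continuous_max_zero (S.smooth_t_u x)
  have cθ_t : ∀ x, Continuous fun t => clampT θ x t := fun x =>
    continuous_max_zero (S.smooth_t_θ x)
  have dv : ∀ x t, HasDerivAt (fun y => clampT v y t) (clampT (pdx v) x t) x :=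
    fun x t => (Fv t).1 x
  have du : ∀ x t, HasDerivAt (fun y => clampT u y t) (clampT (pdx u) x t) x :=
    fun x t => (Fu t).1 x
  have dθ : ∀ x t, HasDerivAt (fun y => clampT θ y t) (clampT (pdx θ) x t) x :=
    fun x t => (Fθ t).1 x
  have dux : ∀ x t, HasDerivAt (fun y => clampT (pdx u) y t) (clampT (pdx (pdx u)) x t) x :=
    fun x t => (Fu t).2.1 x
  have dθx : ∀ x t, HasDerivAt (fun y => clampT (pdx θ) y t) (clampT (pdx (pdx θ)) x t) x :=
    fun x t => (Fθ t).2.1 x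
  have tvx := measurable_time_of_hasDerivAt dv fun x => (cv_t x).measurable
  have tux := measurable_time_of_hasDerivAt du fun x => (cu_t x).measurable
  have tθx := measurable_time_of_hasDerivAt dθ fun x => (cθ_t x).measurable
  have tuxx := measurable_time_of_hasDerivAt dux tux
  have tθxx := measurable_time_of_hasDerivAt dθx tθx
  have muxx : Measurable fun z : ℝ × ℝ => clampT (pdx (pdx u)) z.1 z.2 :=
    measurable_caratheodory (fun t => (Fu t).2.2.2.2) tuxx
  have mθxx : Measurable fun z : ℝ × ℝ => clampT (pdx (pdx θ)) z.1 z.2 :=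
    measurable_caratheodory (fun t => (Fθ t).2.2.2.2) tθxx
  have vp : ∀ x t, 0 < clampT v x t := fun x t => S.v_pos x _ (n0 t)
  have bdd : ∀ T, 0 ≤ T → ∃ B, ∀ t ∈ Icc (0 : ℝ) T, _ := fun T hT => by
    obtain ⟨B, hB⟩ := S.reg_H1 T hT
    exact ⟨B, fun t ht => H1_sum_bounds (S.smooth_x_v t ht.1) (S.smooth_x_u t ht.1)
      (S.smooth_x_θ t ht.1) (hB t ht)⟩
  have hq1 : ∀ x t, 0 ≤ t → pdx (fun y s => R * θ y s / v y s) x t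
      = R * dquot (clampT v) (clampT (pdx v)) (clampT θ) (clampT (pdx θ)) x t := by
    intro x t ht
    have h := (hasDerivAt_dquot (vp x t).ne' (dv x t) (dθ x t)).const_mul R
    rw [← h.deriv, pdx]
    congr 1
    funext y
    rw [clampT_of_nonneg _ _ ht, clampT_of_nonneg _ _ ht, mul_div_assoc]
  have hq2 : ∀ x t, 0 ≤ t → pdx (fun y s => pdx u y s / v y s) x t
      = dquot (clampT v) (clampT (pdx v)) (clampT (pdx u)) (clampT (pdx (pdx u))) x t := by
    intro x t ht
    rw [← (hasDerivAt_dquot (vp x t).ne' (dv x t) (dux x t)).deriv, pdx]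
    congr 1
    funext y
    rw [clampT_of_nonneg _ _ ht, clampT_of_nonneg _ _ ht]
  have hq3 : ∀ x t, 0 ≤ t → pdx (fun y s => pdx θ y s / v y s) x t
      = dquot (clampT v) (clampT (pdx v)) (clampT (pdx θ)) (clampT (pdx (pdx θ))) x t := by
    intro x t ht
    rw [← (hasDerivAt_dquot (vp x t).ne' (dv x t) (dθx x t)).deriv, pdx]
    congr 1
    funext y
    rw [clampT_of_nonneg _ _ ht, clampT_of_nonneg _ _ ht]
  have slice : ∀ (f : ℝ → ℝ → ℝ) {t : ℝ}, 0 ≤ t → (fun x => clampT f x t) = fun x => f x t :=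
    fun f t ht => funext fun x => clampT_of_nonneg f x ht
  exact
  { vK := fun x t => hK x _ (n0 t)
    vpos := vp
    θpos := fun x t => S.θ_pos x _ (n0 t)
    dv := dv
    du := du
    dθ := dθ
    dux := dux
    dθx := dθx
    mv := measurable_caratheodory (fun t => (Fv t).2.2.1) fun x => (cv_t x).measurable
    mu := measurable_caratheodory (fun t => (Fu t).2.2.1) fun x => (cu_t x).measurable
    mθ := measurable_caratheodory (fun t => (Fθ t).2.2.1) fun x => (cθ_t x).measurable
    mvx := measurable_caratheodory (fun t => (Fv t).2.2.2.1) tvx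
    mux := measurable_caratheodory (fun t => (Fu t).2.2.2.1) tux
    mθx := measurable_caratheodory (fun t => (Fθ t).2.2.2.1) tθx
    muxx := muxx
    mθxx := mθxx
    cv_t := cv_t
    cu_t := cu_t
    cθ_t := cθ_t
    tv := fun x t ht => by
      have h := hasDerivAt_max_zero ht (S.smooth_t_v x t ht.le)
      have e := S.eq_mass x t ht.le
      rw [pdt] at e
      rw [e] at h
      rw [clampT_of_nonneg _ _ ht.le]
      exact h
    tu := fun x t ht => by
      have h := hasDerivAt_max_zero ht (S.smooth_t_u x t ht.le)
      have e := S.eq_momentum x t ht.le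
      rw [pdt, hq1 x t ht.le, hq2 x t ht.le] at e
      rw [eq_sub_of_add_eq e] at h
      exact h
    tθ := fun x t ht => by
      have h := hasDerivAt_max_zero ht (S.smooth_t_θ x t ht.le)
      have e := S.eq_energy x t ht.le
      rw [pdt, hq3 x t ht.le] at e
      have e' : deriv (fun s => θ x s) t = _ := (eq_div_iff hcv.ne').2
        ((mul_comm _ _).trans (eq_sub_of_add_eq e))
      rw [e'] at h
      simp only [clampT_of_nonneg _ _ ht.le]
      exact h
    Lv := fun t ht => by
      obtain ⟨B, hB⟩ := bdd t ht
      simpa only [clampT_of_nonneg _ _ ht] using (hB t ⟨ht, le_rfl⟩).1.1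
    Lu := fun t ht => by
      obtain ⟨B, hB⟩ := bdd t ht
      simpa only [clampT_of_nonneg _ _ ht] using (hB t ⟨ht, le_rfl⟩).2.1.1
    Lθ := fun t ht => by
      obtain ⟨B, hB⟩ := bdd t ht
      simpa only [clampT_of_nonneg _ _ ht] using (hB t ⟨ht, le_rfl⟩).2.2.1.1
    Lvx := fun t ht => by
      obtain ⟨B, hB⟩ := bdd t ht
      simpa only [clampT_of_nonneg _ _ ht] using (hB t ⟨ht, le_rfl⟩).2.2.2.1.1
    Lux := fun t ht => by
      obtain ⟨B, hB⟩ := bdd t ht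
      simpa only [clampT_of_nonneg _ _ ht] using (hB t ⟨ht, le_rfl⟩).2.2.2.2.1.1
    Lθx := fun t ht => by
      obtain ⟨B, hB⟩ := bdd t ht
      simpa only [clampT_of_nonneg _ _ ht] using (hB t ⟨ht, le_rfl⟩).2.2.2.2.2.1
    bdd := fun T hT => by
      obtain ⟨B, hB⟩ := bdd T hT
      refine ⟨B ^ 2, fun t ht => ?_⟩
      simp only [clampT_of_nonneg _ _ ht.1]
      obtain ⟨h1, h2, h3, h4, h5, h6⟩ := hB t ht
      exact ⟨h1.2, h2.2, h3.2, h4.2, h5.2, h6.2⟩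
    Suxx := fun T hT => by
      refine memLp_slab_of_lintegral muxx (lt_of_le_of_lt ?_ (S.reg_H2 T hT))
      refine setLIntegral_mono' measurableSet_Icc fun t ht => ?_
      refine le_trans ?_ le_self_add
      rw [slice _ ht.1]
      gcongr
      exact le_add_self
    Sθxx := fun T hT => by
      refine memLp_slab_of_lintegral mθxx (lt_of_le_of_lt ?_ (S.reg_H2 T hT))
      refine setLIntegral_mono' measurableSet_Icc fun t ht => ?_
      refine le_trans ?_ le_add_self
      have e2 : deriv (fun x => θ x t - 1) = deriv fun x => θ x t := by
        funext x; simp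
      rw [slice _ ht.1, H2, e2]
      gcongr
      exact le_add_self }

/-- A flow with controlled initial data becomes an instance of `NSData` on every interval `[0, T]`,
for `ε` small enough relative to that interval. -/
lemma exists_nsData {M m T : ℝ} (hcv : 0 < cv) (S : IsClassicalSolution μ κ R cv v u θ)
    (hI : InitBounded M m v u θ) (hK : VolBounded K v) (hT : 0 < T) :
    ∃ ε, NSData μ κ R cv (M ^ 2) m K T ε (clampT v) (clampT u) (clampT θ) (clampT (pdx v))
      (clampT (pdx u)) (clampT (pdx θ)) (clampT (pdx (pdx u))) (clampT (pdx (pdx θ))) := by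
  have F := S.flow hcv hK
  obtain ⟨h1, h2, h3, h4, h5, -⟩ := H1_sum_bounds (S.smooth_x_v 0 le_rfl) (S.smooth_x_u 0 le_rfl)
    (S.smooth_x_θ 0 le_rfl) hI.1
  set I := ∫ z, ((clampT θ z.1 z.2 - 1) ^ 2 + clampT (pdx v) z.1 z.2 ^ 2) ∂(slab T) with hIdef
  have I0 : 0 ≤ I := integral_nonneg fun z => by positivity
  refine ⟨1 / (1 + I), { F with
    hT := hT
    ε0 := by positivity
    ε1 := by rw [div_le_one (by positivity)]; linarith
    i_v := ?_
    i_u := ?_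
    i_θ := ?_
    i_vx := ?_
    i_ux := ?_
    θm := fun x => by rw [clampT_of_nonneg _ _ le_rfl]; exact hI.2.2 x
    hε := ?_ }⟩
  · simpa only [clampT_of_nonneg _ _ le_rfl] using h1.2
  · simpa only [clampT_of_nonneg _ _ le_rfl] using h2.2
  · simpa only [clampT_of_nonneg _ _ le_rfl] using h3.2
  · simpa only [clampT_of_nonneg _ _ le_rfl] using h4.2
  · simpa only [clampT_of_nonneg _ _ le_rfl] using h5.2
  · rw [← hIdef, div_mul_eq_mul_div, div_le_one (by positivity)]; linarith

end

/-- uniform bound on `∫ v_x²` and the dissipation `∫∫ θ v_x²`. -/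
theorem vx_estimate
    (μ κ R cv M m K : ℝ) (hμ : 0 < μ) (hκ : 0 < κ) (hR : 0 < R) (hcv : 0 < cv)
    (hM : 0 < M) (hm : 0 < m) (hK : 1 ≤ K) :
    ∃ C : ℝ, 0 < C ∧
      ∀ v u θ : ℝ → ℝ → ℝ,
        IsClassicalSolution μ κ R cv v u θ →
        InitBounded M m v u θ →
        VolBounded K v →
        ∀ T : ℝ, 0 < T →
          (⨆ t ∈ Icc (0 : ℝ) T, ∫⁻ x : ℝ, ENNReal.ofReal (pdx v x t ^ 2))
            + (∫⁻ t in Icc (0 : ℝ) T, ∫⁻ x : ℝ,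
                ENNReal.ofReal (θ x t * pdx v x t ^ 2))
          ≤ ENNReal.ofReal C := by
  obtain ⟨C, hC, H⟩ := vx_bound (μ := μ) (κ := κ) (R := R) (cv := cv) (M := M ^ 2) (m := m) (K := K)
    ⟨hμ, hκ, hR, hcv, by positivity, hm, hK⟩
  refine ⟨C + M ^ 2 + C, by positivity, fun v u θ S hI hV T hT => ?_⟩
  have F := S.flow hcv hV
  rw [ENNReal.ofReal_add (by positivity) hC.le]
  refine add_le_add ?_ ?_
  · refine iSup₂_le fun t ht => ?_
    have hL := F.Lvx t ht.1
    simp only [clampT_of_nonneg _ _ ht.1] at hL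
    rw [← ofReal_integral_eq_lintegral_ofReal hL.integrable_sq
      (Eventually.of_forall fun x => sq_nonneg _)]
    refine ENNReal.ofReal_le_ofReal ?_
    obtain rfl | h0 := ht.1.eq_or_lt
    · have := (H1_sum_bounds (S.smooth_x_v 0 le_rfl) (S.smooth_x_u 0 le_rfl)
        (S.smooth_x_θ 0 le_rfl) hI.1).2.2.2.1.2
      linarith
    · obtain ⟨ε, D⟩ := exists_nsData hcv S hI hV h0
      have := (H D).2.1
      simp only [clampT_of_nonneg _ _ ht.1] at this
      nlinarith [sq_nonneg M]
  · obtain ⟨ε, D⟩ := exists_nsData hcv S hI hV hT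
    obtain ⟨hInt, -, h⟩ := H D
    have e : ∫⁻ t in Icc (0 : ℝ) T, ∫⁻ x : ℝ, ENNReal.ofReal (θ x t * pdx v x t ^ 2)
        = ∫⁻ z, ENNReal.ofReal (clampT θ z.1 z.2 * clampT (pdx v) z.1 z.2 ^ 2) ∂(slab T) := by
      have hm : Measurable fun z : ℝ × ℝ => clampT θ z.1 z.2 * clampT (pdx v) z.1 z.2 ^ 2 :=
        F.mθ.mul (F.mvx.pow_const 2)
      rw [slab, lintegral_prod_symm _ hm.ennreal_ofReal.aemeasurable]
      refine setLIntegral_congr_fun measurableSet_Icc fun t ht => ?_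
      simp only [clampT_of_nonneg _ _ ht.1]
    rw [e, ← ofReal_integral_eq_lintegral_ofReal hInt
      (Eventually.of_forall fun z => mul_nonneg (F.θpos _ _).le (sq_nonneg _))]
    exact ENNReal.ofReal_le_ofReal h
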